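/- arXiv:1212.0719 — 10 statements merged into one kernel-verified Lean document; each statement's English description precedes it below -/
import Mathlib

section
/- Let R > 0 and let h : [0,R) → ℝ be twice continuously differentiable satisfying (A1) h(0) > 0, h''(0) > 0, h'(0) = −1, (A2) h'' is convex and strictly increasing on [0,R), and (A3) h has a zero in (0,R) with smallest zero t* and h'(t*) < 0. Then h is strictly convex on [0,R), h(t) > 0 for all t ∈ [0,t*), and the equation h(t) = 0 has at most one root on (t*,R). -/
/-- Under (A1)-(A3), `h` is strictly convex on `[0,R)`, positive on
`[0,t*)`, and `h = 0` has at most one root on `(t*,R)`. Here `h1` and `h2` denote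
the first and second derivatives of `h` on `[0,R)`, and `tstar` is the smallest
zero of `h` in `(0,R)`. -/
theorem halley_majorant_h_strictConvex_pos_unique_root
    (R : ℝ) (hR : 0 < R) (h h1 h2 : ℝ → ℝ)
    (hd1 : ∀ t ∈ Set.Ico (0:ℝ) R, HasDerivWithinAt h (h1 t) (Set.Ico 0 R) t)
    (hd2 : ∀ t ∈ Set.Ico (0:ℝ) R, HasDerivWithinAt h1 (h2 t) (Set.Ico 0 R) t)
    (hc2 : ContinuousOn h2 (Set.Ico 0 R))
    (hA1a : 0 < h 0) (hA1b : 0 < h2 0) (hA1c : h1 0 = -1)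
    (hA2a : ConvexOn ℝ (Set.Ico 0 R) h2)
    (hA2b : StrictMonoOn h2 (Set.Ico 0 R))
    (tstar : ℝ) (htsmem : tstar ∈ Set.Ioo 0 R) (htszero : h tstar = 0)
    (htsmin : ∀ t ∈ Set.Ioo (0:ℝ) R, h t = 0 → tstar ≤ t)
    (htsder : h1 tstar < 0) :
    StrictConvexOn ℝ (Set.Ico 0 R) h ∧
    (∀ t ∈ Set.Ico (0:ℝ) tstar, 0 < h t) ∧
    (∀ t₁ ∈ Set.Ioo tstar R, ∀ t₂ ∈ Set.Ioo tstar R, h t₁ = 0 → h t₂ = 0 → t₁ = t₂) := by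
  have hcont : ContinuousOn h (Set.Ico 0 R) := fun t ht => (hd1 t ht).continuousWithinAt
  have hcont1 : ContinuousOn h1 (Set.Ico 0 R) := fun t ht => (hd2 t ht).continuousWithinAt
  have h0 : (0:ℝ) ∈ Set.Ico (0:ℝ) R := ⟨le_refl _, hR⟩
  have hmono : StrictMonoOn h1 (Set.Ico 0 R) := by
    apply strictMonoOn_of_deriv_pos (convex_Ico 0 R) hcont1
    intro x hx
    rw [interior_Ico] at hx
    have hx' : x ∈ Set.Ico (0:ℝ) R := ⟨hx.1.le, hx.2⟩
    rw [((hd2 x hx').hasDerivAt (Ico_mem_nhds hx.1 hx.2)).deriv]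
    exact hA1b.trans (hA2b h0 hx' hx.1)
  have hconv : StrictConvexOn ℝ (Set.Ico 0 R) h := by
    apply StrictMonoOn.strictConvexOn_of_deriv (convex_Ico 0 R) hcont
    rw [interior_Ico]
    intro x hx y hy hxy
    have hx' : x ∈ Set.Ico (0:ℝ) R := ⟨hx.1.le, hx.2⟩
    have hy' : y ∈ Set.Ico (0:ℝ) R := ⟨hy.1.le, hy.2⟩
    rw [((hd1 x hx').hasDerivAt (Ico_mem_nhds hx.1 hx.2)).deriv,
      ((hd1 y hy').hasDerivAt (Ico_mem_nhds hy.1 hy.2)).deriv]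
    exact hmono hx' hy' hxy
  have key : ∀ a ∈ Set.Ioo tstar R, ∀ b ∈ Set.Ioo tstar R, h a = 0 → h b = 0 → ¬ a < b := by
    intro a ha b hb hza hzb hab
    have := hconv.slope_strict_mono_adjacent (x := tstar) (y := a) (z := b)
      ⟨htsmem.1.le, htsmem.2⟩ ⟨(htsmem.1.trans hb.1).le, hb.2⟩ ha.1 hab
    simp [hza, hzb, htszero] at this
  refine ⟨hconv, ?_, ?_⟩
  · intro t ht
    by_contra hneg
    have hneg' : h t ≤ 0 := not_lt.mp hneg
    have htR : t < R := ht.2.trans htsmem.2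
    obtain ⟨s, hs, hs0⟩ := intermediate_value_Icc' ht.1
      (hcont.mono (fun x hx => ⟨hx.1, hx.2.trans_lt htR⟩)) ⟨hneg', hA1a.le⟩
    have hspos : 0 < s := by
      rcases hs.1.lt_or_eq with hh | hh
      · exact hh
      · rw [← hh] at hs0
        exact absurd hs0 hA1a.ne'
    have := htsmin s ⟨hspos, hs.2.trans_lt htR⟩ hs0
    linarith [hs.2, ht.2]
  · intro a ha b hb hza hzb
    exact le_antisymm (not_lt.mp (key b hb a ha hzb hza)) (not_lt.mp (key a ha b hb hza hzb))
end

section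
/- Let R > 0 and let h : [0,R) → ℝ be twice continuously differentiable satisfying assumptions (A1)–(A3), with t* the smallest zero of h in (0,R). Then 0 ≤ L_h(t) ≤ 1/4 for all t ∈ [0,t*], where L_h(t) = h(t)h''(t)/(2h'(t)²). -/
/-- Under (A1)-(A3), `0 ≤ L_h(t) ≤ 1/4` for all `t ∈ [0,t*]`, where
`L_h(t) = h(t)h''(t)/(2h'(t)²)`. Here `h1` and `h2` denote the first and second
derivatives of `h` on `[0,R)`, and `tstar` is the smallest zero of `h` in `(0,R)`. -/
theorem halley_majorant_Lh_bounds
    (R : ℝ) (hR : 0 < R) (h h1 h2 : ℝ → ℝ)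
    (hd1 : ∀ t ∈ Set.Ico (0:ℝ) R, HasDerivWithinAt h (h1 t) (Set.Ico 0 R) t)
    (hd2 : ∀ t ∈ Set.Ico (0:ℝ) R, HasDerivWithinAt h1 (h2 t) (Set.Ico 0 R) t)
    (hc2 : ContinuousOn h2 (Set.Ico 0 R))
    (hA1a : 0 < h 0) (hA1b : 0 < h2 0) (hA1c : h1 0 = -1)
    (hA2a : ConvexOn ℝ (Set.Ico 0 R) h2)
    (hA2b : StrictMonoOn h2 (Set.Ico 0 R))
    (tstar : ℝ) (htsmem : tstar ∈ Set.Ioo 0 R) (htszero : h tstar = 0)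
    (htsmin : ∀ t ∈ Set.Ioo (0:ℝ) R, h t = 0 → tstar ≤ t)
    (htsder : h1 tstar < 0) :
    ∀ t ∈ Set.Icc (0:ℝ) tstar,
      0 ≤ h t * h2 t / (2 * (h1 t) ^ 2) ∧ h t * h2 t / (2 * (h1 t) ^ 2) ≤ 1 / 4 := by
  obtain ⟨hts0, htsR⟩ := htsmem
  have hI : ∀ x, 0 < x → x < R → Set.Ico (0:ℝ) R ∈ nhds x := fun x a b => Ico_mem_nhds a b
  have hsub : Set.Icc (0:ℝ) tstar ⊆ Set.Ico 0 R := fun x hx => ⟨hx.1, lt_of_le_of_lt hx.2 htsR⟩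
  have hc : ContinuousOn h (Set.Icc 0 tstar) := fun x hx =>
    ((hd1 x (hsub hx)).continuousWithinAt).mono hsub
  have hc1 : ContinuousOn h1 (Set.Icc 0 tstar) := fun x hx =>
    ((hd2 x (hsub hx)).continuousWithinAt).mono hsub
  have h2pos : ∀ x ∈ Set.Icc (0:ℝ) tstar, 0 < h2 x := fun x hx =>
    lt_of_lt_of_le hA1b (hA2b.monotoneOn ⟨le_refl _, hR⟩ (hsub hx) hx.1)
  have D1 : ∀ x, 0 < x → x < tstar → HasDerivAt h (h1 x) x := fun x a b =>
    (hd1 x ⟨a.le, b.trans htsR⟩).hasDerivAt (hI x a (b.trans htsR))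
  have D2 : ∀ x, 0 < x → x < tstar → HasDerivAt h1 (h2 x) x := fun x a b =>
    (hd2 x ⟨a.le, b.trans htsR⟩).hasDerivAt (hI x a (b.trans htsR))
  have hm1 : MonotoneOn h1 (Set.Icc 0 tstar) := by
    refine monotoneOn_of_hasDerivWithinAt_nonneg (f' := h2) (convex_Icc _ _) hc1 ?_ ?_
    · intro x hx
      rw [interior_Icc] at hx
      exact (D2 x hx.1 hx.2).hasDerivWithinAt
    · intro x hx
      exact (h2pos x (interior_subset hx)).le
  have hneg : ∀ x ∈ Set.Icc (0:ℝ) tstar, h1 x < 0 := fun x hx =>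
    lt_of_le_of_lt (hm1 hx ⟨hts0.le, le_refl _⟩ hx.2) htsder
  have hm : AntitoneOn h (Set.Icc 0 tstar) := by
    refine antitoneOn_of_hasDerivWithinAt_nonpos (f' := h1) (convex_Icc _ _) hc ?_ ?_
    · intro x hx
      rw [interior_Icc] at hx
      exact (D1 x hx.1 hx.2).hasDerivWithinAt
    · intro x hx
      exact (hneg x (interior_subset hx)).le
  intro t ht
  have hpos : 0 ≤ h t := htszero ▸ hm ht ⟨hts0.le, le_refl _⟩ ht.2
  have hn := hneg t ht
  have hp := h2pos t ht
  have hsub' : Set.Icc t tstar ⊆ Set.Icc 0 tstar := Set.Icc_subset_Icc_left ht.1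
  have hG : AntitoneOn (fun x => h1 x ^ 2 - 2 * h2 t * h x) (Set.Icc t tstar) := by
    refine antitoneOn_of_hasDerivWithinAt_nonpos
      (f' := fun x => 2 * h1 x * h2 x - 2 * h2 t * h1 x) (convex_Icc _ _) ?_ ?_ ?_
    · exact ((hc1.mono hsub').pow 2).sub (continuousOn_const.mul (hc.mono hsub'))
    · intro x hx
      rw [interior_Icc] at hx
      have a : 0 < x := lt_of_le_of_lt ht.1 hx.1
      have := ((D2 x a hx.2).pow 2).sub ((D1 x a hx.2).const_mul (2 * h2 t))
      refine HasDerivAt.hasDerivWithinAt ?_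
      refine HasDerivAt.congr_deriv (f := fun x => h1 x ^ 2 - 2 * h2 t * h x) this ?_
      norm_num
    · intro x hx
      have hx' := interior_subset hx
      have e1 := hneg x (hsub' hx')
      have e2 := hA2b.monotoneOn (hsub ht) (hsub (hsub' hx')) hx'.1
      show 2 * h1 x * h2 x - 2 * h2 t * h1 x ≤ 0
      nlinarith
  have key := hG ⟨le_refl _, ht.2⟩ ⟨ht.2, le_refl _⟩ ht.2
  simp only [htszero] at key
  have hsq : 0 < h1 t ^ 2 := by nlinarith
  refine ⟨by positivity, ?_⟩
  rw [div_le_iff₀ (by positivity)]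
  nlinarith [sq_nonneg (h1 tstar)]
end

section
/- Let R > 0 and let h : [0,R) → ℝ be twice continuously differentiable satisfying assumptions (A1)–(A3), with t* the smallest zero of h in (0,R). Then for all t ∈ [0,t*), t < H_h(t) < t*, where H_h(t) = t − (1/(1 − L_h(t)))·(h(t)/h'(t)) and L_h(t) = h(t)h''(t)/(2h'(t)²). -/
theorem mvt_aux (R : ℝ) (f f1 : ℝ → ℝ)
    (hd : ∀ t ∈ Set.Ico (0:ℝ) R, HasDerivWithinAt f (f1 t) (Set.Ico 0 R) t)
    (a b : ℝ) (ha : 0 ≤ a) (hab : a < b) (hb : b < R) :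
    ∃ c ∈ Set.Ioo a b, f b - f a = f1 c * (b - a) := by
  have hsub : Set.Icc a b ⊆ Set.Ico 0 R := fun x hx => ⟨ha.trans hx.1, hx.2.trans_lt hb⟩
  obtain ⟨c, hc, he⟩ := exists_hasDerivAt_eq_slope f f1 hab
    (fun x hx => ((hd x (hsub hx)).continuousWithinAt).mono hsub)
    (fun x hx => (hd x (hsub ⟨hx.1.le, hx.2.le⟩)).hasDerivAt
      (Ico_mem_nhds (ha.trans_lt hx.1) (hx.2.trans hb)))
  refine ⟨c, hc, ?_⟩
  rw [he, div_mul_cancel₀]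
  exact (sub_pos.2 hab).ne'

/-- Under (A1)-(A3), `t < H_h(t) < t*` for all `t ∈ [0,t*)`, where
`H_h(t) = t - (1/(1 - L_h(t)))·(h(t)/h'(t))` and `L_h(t) = h(t)h''(t)/(2h'(t)²)`.
Here `h1` and `h2` denote the first and second derivatives of `h` on `[0,R)`,
and `tstar` is the smallest zero of `h` in `(0,R)`. -/
theorem halley_majorant_Hh_bounds
    (R : ℝ) (hR : 0 < R) (h h1 h2 : ℝ → ℝ)
    (hd1 : ∀ t ∈ Set.Ico (0:ℝ) R, HasDerivWithinAt h (h1 t) (Set.Ico 0 R) t)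
    (hd2 : ∀ t ∈ Set.Ico (0:ℝ) R, HasDerivWithinAt h1 (h2 t) (Set.Ico 0 R) t)
    (hc2 : ContinuousOn h2 (Set.Ico 0 R))
    (hA1a : 0 < h 0) (hA1b : 0 < h2 0) (hA1c : h1 0 = -1)
    (hA2a : ConvexOn ℝ (Set.Ico 0 R) h2)
    (hA2b : StrictMonoOn h2 (Set.Ico 0 R))
    (tstar : ℝ) (htsmem : tstar ∈ Set.Ioo 0 R) (htszero : h tstar = 0)
    (htsmin : ∀ t ∈ Set.Ioo (0:ℝ) R, h t = 0 → tstar ≤ t)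
    (htsder : h1 tstar < 0) :
    ∀ t ∈ Set.Ico (0:ℝ) tstar,
      t < t - (1 / (1 - h t * h2 t / (2 * (h1 t) ^ 2))) * (h t / h1 t) ∧
      t - (1 / (1 - h t * h2 t / (2 * (h1 t) ^ 2))) * (h t / h1 t) < tstar := by
  intro t ht
  obtain ⟨ht0, htt⟩ := ht
  obtain ⟨hs0, hsR⟩ := htsmem
  have hq : 0 < h2 t := hA1b.trans_le
    (hA2b.monotoneOn ⟨le_rfl, hR⟩ ⟨ht0, htt.trans hsR⟩ ht0)
  have hneg : ∀ s, t ≤ s → s < tstar → h1 s < 0 := by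
    intro s hs hs'
    obtain ⟨c, hc, he⟩ := mvt_aux R h1 h2 hd2 s tstar (ht0.trans hs) hs' hsR
    have hcm : h2 t < h2 c := hA2b ⟨ht0, htt.trans hsR⟩
      ⟨ht0.trans (hs.trans hc.1.le), hc.2.trans hsR⟩ (hs.trans_lt hc.1)
    have := mul_pos (hq.trans hcm) (sub_pos.2 hs')
    linarith
  have hp := hneg t le_rfl htt
  have hd : 0 < tstar - t := sub_pos.2 htt
  have hf : 0 < h t := by
    obtain ⟨c, hc, he⟩ := mvt_aux R h h1 hd1 t tstar ht0 htt hsR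
    have := mul_pos_of_neg_of_neg (hneg c hc.1.le hc.2) (neg_neg_of_pos hd)
    rw [htszero] at he
    linarith
  have hT : h t + h1 t * (tstar - t) + h2 t * (tstar - t) ^ 2 / 2 < 0 := by
    obtain ⟨c, hc, he⟩ := mvt_aux R
      (fun s => h s - h1 t * (s - t) - h2 t * (s - t) ^ 2 / 2)
      (fun s => h1 s - h1 t - h2 t * (s - t)) (by
        intro s hs
        have e : HasDerivWithinAt (fun s : ℝ => s - t) 1 (Set.Ico 0 R) s :=
          (hasDerivWithinAt_id s _).sub_const t
        have := ((hd1 s hs).sub (e.const_mul (h1 t))).sub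
          (((e.pow 2).const_mul (h2 t)).div_const 2)
        refine this.congr_deriv ?_
        push_cast
        ring) t tstar ht0 htt hsR
    obtain ⟨e, hem, hee⟩ := mvt_aux R h1 h2 hd2 t c ht0 hc.1 (hc.2.trans hsR)
    have hcm : h2 t < h2 e := hA2b ⟨ht0, htt.trans hsR⟩
      ⟨ht0.trans hem.1.le, hem.2.trans (hc.2.trans hsR)⟩ hem.1
    have h3 := mul_pos (mul_pos (sub_pos.2 hcm) (sub_pos.2 hc.1)) hd
    have h4 : (h1 c - h1 t - h2 t * (c - t)) = (h2 e - h2 t) * (c - t) := by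
      rw [hee]; ring
    simp only [htszero, h4] at he
    nlinarith
  generalize h t = f at *
  obtain ⟨p, hpe⟩ : ∃ p, h1 t = -p := ⟨-h1 t, by ring⟩
  rw [hpe] at hp hT ⊢
  have hp : 0 < p := by linarith
  generalize h2 t = q at *
  obtain ⟨d, hde⟩ : ∃ d, tstar = t + d := ⟨tstar - t, by ring⟩
  have hdd : tstar - t = d := by rw [hde]; ring
  rw [hdd] at hd hT
  have key : f * (2 * p + q * d) < 2 * p ^ 2 * d := by
    have a1 : 0 < 2 * p + q * d := by positivity
    have a2 := mul_pos (neg_pos.2 hT) a1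
    have a3 : 0 < q ^ 2 * d ^ 3 := by positivity
    nlinarith
  have hD : 0 < 2 * p ^ 2 - f * q := by
    have : 0 < (2 * p ^ 2 - f * q) * d := by
      have : 0 < f * p := by positivity
      nlinarith
    exact pos_of_mul_pos_left this hd.le
  have hform : t - (1 / (1 - f * q / (2 * (-p) ^ 2))) * (f / -p)
      = t + 2 * f * p / (2 * p ^ 2 - f * q) := by
    have e1 : 1 - f * q / (2 * (-p) ^ 2) = (2 * p ^ 2 - f * q) / (2 * p ^ 2) := by
      field_simp
    rw [e1]
    have := hD.ne'
    have := hp.ne'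
    rw [one_div_div, div_neg, mul_neg, sub_neg_eq_add, div_mul_div_comm]
    congr 1
    rw [div_eq_div_iff (by positivity) (by positivity)]
    ring
  rw [hform, hde]
  constructor
  · have : 0 < 2 * f * p / (2 * p ^ 2 - f * q) := by positivity
    linarith
  · have : 2 * f * p / (2 * p ^ 2 - f * q) < d := by
      rw [div_lt_iff₀ hD]
      nlinarith
    linarith
end

section
/- Let R > 0 and let h : [0,R) → ℝ be twice continuously differentiable satisfying (A1) h(0) > 0, h''(0) > 0, h'(0) = −1 and (A2) h'' is convex and strictly increasing on [0,R), and suppose h has a smallest zero t* in (0,R). Then h'(t*) < 0 if and only if there exists t ∈ (t*,R) such that h(t) < 0. -/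
/-- Under (A1) and (A2), if `tstar` is the smallest zero of `h` in
`(0,R)`, then `h'(t*) < 0` iff there exists `t ∈ (t*,R)` with `h(t) < 0`. Here
`h1` and `h2` denote the first and second derivatives of `h` on `[0,R)`. -/
theorem halley_majorant_h'_neg_iff_exists_neg
    (R : ℝ) (hR : 0 < R) (h h1 h2 : ℝ → ℝ)
    (hd1 : ∀ t ∈ Set.Ico (0:ℝ) R, HasDerivWithinAt h (h1 t) (Set.Ico 0 R) t)
    (hd2 : ∀ t ∈ Set.Ico (0:ℝ) R, HasDerivWithinAt h1 (h2 t) (Set.Ico 0 R) t)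
    (hc2 : ContinuousOn h2 (Set.Ico 0 R))
    (hA1a : 0 < h 0) (hA1b : 0 < h2 0) (hA1c : h1 0 = -1)
    (hA2a : ConvexOn ℝ (Set.Ico 0 R) h2)
    (hA2b : StrictMonoOn h2 (Set.Ico 0 R))
    (tstar : ℝ) (htsmem : tstar ∈ Set.Ioo 0 R) (htszero : h tstar = 0)
    (htsmin : ∀ t ∈ Set.Ioo (0:ℝ) R, h t = 0 → tstar ≤ t) :
    h1 tstar < 0 ↔ ∃ t ∈ Set.Ioo tstar R, h t < 0 := by
  have hnhds : ∀ t ∈ Set.Ioo (0:ℝ) R, Set.Ico 0 R ∈ nhds t := fun t ht =>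
    Filter.mem_of_superset (isOpen_Ioo.mem_nhds ht) Set.Ioo_subset_Ico_self
  have hD1 : ∀ t ∈ Set.Ioo (0:ℝ) R, HasDerivAt h (h1 t) t := fun t ht =>
    (hd1 t ⟨ht.1.le, ht.2⟩).hasDerivAt (hnhds t ht)
  have hD2 : ∀ t ∈ Set.Ioo (0:ℝ) R, HasDerivAt h1 (h2 t) t := fun t ht =>
    (hd2 t ⟨ht.1.le, ht.2⟩).hasDerivAt (hnhds t ht)
  obtain ⟨h0, hlt⟩ := htsmem
  constructor
  · intro hneg
    by_contra hcon
    push Not at hcon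
    have hs := (hasDerivAt_iff_tendsto_slope.1 (hD1 tstar ⟨h0, hlt⟩)).mono_left
      (nhdsWithin_mono tstar (s := Set.Ioi tstar) (fun x hx => ne_of_gt hx))
    have hge : 0 ≤ h1 tstar := by
      refine ge_of_tendsto hs ?_
      filter_upwards [Ioo_mem_nhdsGT hlt] with x hx
      rw [slope_def_field, htszero, sub_zero]
      exact div_nonneg (hcon x hx) (sub_nonneg.2 hx.1.le)
    linarith
  · rintro ⟨t, ⟨ht1, ht2⟩, hneg⟩
    obtain ⟨c, hc, hce⟩ := exists_hasDerivAt_eq_slope h h1 ht1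
      (fun x hx => (hD1 x ⟨by linarith [hx.1], by linarith [hx.2]⟩).continuousAt.continuousWithinAt)
      (fun x hx => hD1 x ⟨by linarith [hx.1], by linarith [hx.2]⟩)
    have hcneg : h1 c < 0 := by
      rw [hce, htszero, sub_zero]
      exact div_neg_of_neg_of_pos hneg (sub_pos.2 ht1)
    obtain ⟨d, hd, hde⟩ := exists_hasDerivAt_eq_slope h1 h2 hc.1
      (fun x hx => (hD2 x ⟨by linarith [hx.1], by linarith [hx.2, hc.2]⟩).continuousAt.continuousWithinAt)
      (fun x hx => hD2 x ⟨by linarith [hx.1], by linarith [hx.2, hc.2]⟩)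
    have hdpos : 0 < h2 d := hA1b.trans
      (hA2b ⟨le_rfl, hR⟩ ⟨by linarith [hd.1], by linarith [hd.2, hc.2]⟩ (by linarith [hd.1]))
    rw [hde, div_pos_iff_of_pos_right (sub_pos.2 hc.1)] at hdpos
    linarith
end

section
/- Let R > 0 and let h : [0,R) → ℝ be twice continuously differentiable satisfying assumptions (A1)–(A3), with t* the smallest zero of h in (0,R). Then for all t ∈ [0,t*): t* − H_h(t) ≤ [ (1/3)·h''(t*)²/h'(t*)² + (2/9)·D⁻h''(t*)/(−h'(t*)) ]·(t* − t)³, where H_h(t) = t − (1/(1 − L_h(t)))·(h(t)/h'(t)), L_h(t) = h(t)h''(t)/(2h'(t)²), and D⁻h''(t*) = sup_{u < t*} (h''(t*) − h''(u))/(t* − u) is the left directional derivative of h'' at t*. -/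
theorem aux_mono (R : ℝ) (f f' : ℝ → ℝ)
    (hd : ∀ t ∈ Set.Ico (0:ℝ) R, HasDerivWithinAt f (f' t) (Set.Ico 0 R) t)
    (t u : ℝ) (h0 : 0 ≤ t) (htu : t ≤ u) (huR : u < R)
    (hp : ∀ x ∈ Set.Icc t u, 0 ≤ f' x) : f t ≤ f u := by
  have hsub : Set.Icc t u ⊆ Set.Ico 0 R := fun x hx => ⟨h0.trans hx.1, hx.2.trans_lt huR⟩
  have hm : MonotoneOn f (Set.Icc t u) := by
    apply monotoneOn_of_hasDerivWithinAt_nonneg (f' := f') (convex_Icc t u)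
    · exact fun x hx => ((hd x (hsub hx)).continuousWithinAt).mono hsub
    · exact fun x hx => (hd x (hsub (interior_subset hx))).mono (interior_subset.trans hsub)
    · exact fun x hx => hp x (interior_subset hx)
  exact hm ⟨le_rfl, htu⟩ ⟨htu, le_rfl⟩ htu

theorem aux_alg (H a b e as bs D : ℝ) (hb : 0 < b) (he : 0 < e) (has : 0 < as)
    (hbs : b ≤ bs) (h1 : as ≤ a - b * e) (hr0 : H ≤ a * e - b * e ^ 2 / 2)
    (hrD : a * e - b * e ^ 2 / 2 - H ≤ D * e ^ 3 / 6) :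
    e + (1 / (1 - H * b / (2 * (-a) ^ 2))) * (H / (-a)) ≤
      ((1 / 3) * (bs ^ 2 / as ^ 2) + (2 / 9) * (D / as)) * e ^ 3 := by
  have hbe : 0 < b * e := mul_pos hb he
  have ha : 0 < a := by linarith
  obtain ⟨r, hr⟩ : ∃ r, r = a * e - b * e ^ 2 / 2 - H := ⟨_, rfl⟩
  have hH : H = a * e - b * e ^ 2 / 2 - r := by linarith
  have hr0' : 0 ≤ r := by linarith
  rw [← hr] at hrD
  have hq0 : 3 / 2 * a ^ 2 ≤ 2 * a ^ 2 - a * b * e + b ^ 2 * e ^ 2 / 2 := by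
    nlinarith [sq_nonneg (a - b * e)]
  have hq : 2 * a ^ 2 - a * b * e + b ^ 2 * e ^ 2 / 2 ≤ 2 * a ^ 2 - H * b := by
    rw [hH]; nlinarith [mul_nonneg hr0' hb.le]
  obtain ⟨q0, hq0d⟩ : ∃ q0, q0 = 2 * a ^ 2 - a * b * e + b ^ 2 * e ^ 2 / 2 := ⟨_, rfl⟩
  obtain ⟨q, hqd⟩ : ∃ q, q = 2 * a ^ 2 - H * b := ⟨_, rfl⟩
  rw [← hq0d] at hq0 hq
  rw [← hqd] at hq
  have ha2 : 0 < a ^ 2 := by positivity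
  have hq0p : 0 < q0 := by linarith
  have hqp : 0 < q := by linarith
  have e1 : 1 - H * b / (2 * (-a) ^ 2) = q / (2 * a ^ 2) := by
    rw [hqd]; field_simp
  have e2 : e + (1 / (1 - H * b / (2 * (-a) ^ 2))) * (H / (-a))
      = ((2 * a + b * e) * r + b ^ 2 * e ^ 3 / 2) / q := by
    rw [e1, eq_div_iff hqp.ne']
    field_simp
    rw [hqd, hH]; ring
  rw [e2]
  have s1 : (2 * a + b * e) * r / q0 ≤ 4 / 3 * (r / as) := by
    have : (2 * a + b * e) / q0 ≤ 4 / 3 * (1 / as) := by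
      rw [← div_eq_mul_one_div, div_le_div_iff₀ hq0p has]
      have := mul_le_mul_of_nonneg_left h1 (by positivity : 0 ≤ 2 * a + b * e)
      rw [hq0d]
      nlinarith [sq_nonneg (a - b * e), sq_nonneg (b * e), sq_nonneg (a - b * e / 4)]
    calc _ = (2 * a + b * e) / q0 * r := by ring
      _ ≤ 4 / 3 * (1 / as) * r := mul_le_mul_of_nonneg_right this hr0'
      _ = _ := by ring
  have s2 : b ^ 2 * e ^ 3 / 2 / q0 ≤ (1 / 3) * (bs ^ 2 / as ^ 2) * e ^ 3 := by
    calc b ^ 2 * e ^ 3 / 2 / q0 ≤ b ^ 2 * e ^ 3 / 2 / (3 / 2 * a ^ 2) := by gcongr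
      _ = (1 / 3) * (b ^ 2 / a ^ 2) * e ^ 3 := by field_simp
      _ ≤ _ := by
        have : as ≤ a := by linarith
        gcongr
  have s3 : 4 / 3 * (r / as) ≤ (2 / 9) * (D / as) * e ^ 3 := by
    calc 4 / 3 * (r / as) ≤ 4 / 3 * ((D * e ^ 3 / 6) / as) := by gcongr
      _ = _ := by ring
  calc _ ≤ ((2 * a + b * e) * r + b ^ 2 * e ^ 3 / 2) / q0 := by gcongr
    _ = (2 * a + b * e) * r / q0 + b ^ 2 * e ^ 3 / 2 / q0 := by ring
    _ ≤ _ := by linarith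

/-- Under (A1)-(A3), for all `t ∈ [0,t*)`,
`t* - H_h(t) ≤ [(1/3)·h''(t*)²/h'(t*)² + (2/9)·D⁻h''(t*)/(-h'(t*))]·(t* - t)³`,
where `H_h(t) = t - (1/(1 - L_h(t)))·(h(t)/h'(t))`, `L_h(t) = h(t)h''(t)/(2h'(t)²)`
and `D⁻h''(t*) = sup_{u < t*} (h''(t*) - h''(u))/(t* - u)` is the left directional
derivative of `h''` at `t*`. Here `h1` and `h2` denote the first and second
derivatives of `h` on `[0,R)`, and `tstar` is the smallest zero of `h` in `(0,R)`. -/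
theorem halley_majorant_tstar_sub_Hh_le
    (R : ℝ) (hR : 0 < R) (h h1 h2 : ℝ → ℝ)
    (hd1 : ∀ t ∈ Set.Ico (0:ℝ) R, HasDerivWithinAt h (h1 t) (Set.Ico 0 R) t)
    (hd2 : ∀ t ∈ Set.Ico (0:ℝ) R, HasDerivWithinAt h1 (h2 t) (Set.Ico 0 R) t)
    (hc2 : ContinuousOn h2 (Set.Ico 0 R))
    (hA1a : 0 < h 0) (hA1b : 0 < h2 0) (hA1c : h1 0 = -1)
    (hA2a : ConvexOn ℝ (Set.Ico 0 R) h2)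
    (hA2b : StrictMonoOn h2 (Set.Ico 0 R))
    (tstar : ℝ) (htsmem : tstar ∈ Set.Ioo 0 R) (htszero : h tstar = 0)
    (htsmin : ∀ t ∈ Set.Ioo (0:ℝ) R, h t = 0 → tstar ≤ t)
    (htsder : h1 tstar < 0) :
    ∀ t ∈ Set.Ico (0:ℝ) tstar,
      tstar - (t - (1 / (1 - h t * h2 t / (2 * (h1 t) ^ 2))) * (h t / h1 t)) ≤
        ((1 / 3) * ((h2 tstar) ^ 2 / (h1 tstar) ^ 2) +
          (2 / 9) * (sSup ((fun u => (h2 tstar - h2 u) / (tstar - u)) ''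
            Set.Ico (0:ℝ) tstar) / (-(h1 tstar)))) * (tstar - t) ^ 3 := by
  intro t ht
  obtain ⟨ht0, htt⟩ := ht
  obtain ⟨hs0, hsR⟩ := htsmem
  have hsm : tstar ∈ Set.Ico 0 R := ⟨hs0.le, hsR⟩
  have htm : t ∈ Set.Ico 0 R := ⟨ht0, htt.trans hsR⟩
  have hm0 : (0:ℝ) ∈ Set.Ico 0 R := ⟨le_rfl, hR⟩
  have hb : 0 < h2 t := hA1b.trans_le (hA2b.monotoneOn hm0 htm ht0)
  have hbdd : BddAbove ((fun u => (h2 tstar - h2 u) / (tstar - u)) '' Set.Ico (0:ℝ) tstar) := by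
    refine ⟨(h2 ((tstar + R) / 2) - h2 tstar) / ((tstar + R) / 2 - tstar), ?_⟩
    rintro _ ⟨u, hu, rfl⟩
    exact hA2a.slope_mono_adjacent ⟨hu.1, hu.2.trans hsR⟩ ⟨by linarith, by linarith⟩ hu.2
      (by linarith)
  have hD := le_csSup hbdd ⟨t, ⟨ht0, htt⟩, rfl⟩
  simp only at hD
  generalize sSup ((fun u => (h2 tstar - h2 u) / (tstar - u)) '' Set.Ico (0:ℝ) tstar) = D at hD ⊢
  have hk : ∀ s ∈ Set.Icc t tstar, h2 s - h2 t ≤ D * (s - t) := by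
    rintro s ⟨hs1, hs2⟩
    rcases hs1.eq_or_lt with rfl | hs1
    · simp
    have := hA2a.secant_mono htm (y := tstar) (x := s) ⟨by linarith, by linarith⟩ hsm
      hs1.ne' htt.ne' hs2
    have := this.trans hD
    rwa [div_le_iff₀ (by linarith)] at this
  have hk0 : ∀ s ∈ Set.Icc t tstar, 0 ≤ h2 s - h2 t := by
    rintro s ⟨hs1, hs2⟩
    have := hA2b.monotoneOn htm (b := s) ⟨by linarith, by linarith⟩ hs1
    linarith
  have hl1 : ∀ s ∈ Set.Icc t tstar, h1 t + h2 t * (s - t) ≤ h1 s := by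
    rintro s ⟨hs1, hs2⟩
    have := aux_mono R (fun x => h1 x - h2 t * (x - t)) (fun x => h2 x - h2 t * 1)
      (fun x hx => (hd2 x hx).sub
        ((((hasDerivAt_id x).sub_const t).const_mul (h2 t)).hasDerivWithinAt)) t s ht0 hs1
        (by linarith) (fun x hx => by
          have := hk0 x ⟨hx.1, hx.2.trans hs2⟩
          linarith)
    linarith
  have hu1 : ∀ s ∈ Set.Icc t tstar, h1 s ≤ h1 t + h2 t * (s - t) + D / 2 * (s - t) ^ 2 := by
    rintro s ⟨hs1, hs2⟩
    have := aux_mono R (fun x => h2 t * (x - t) + D / 2 * (x - t) ^ 2 - h1 x)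
      (fun x => h2 t * 1 + D / 2 * ((2:ℕ) * (x - t) ^ (2 - 1) * 1) - h2 x)
      (fun x hx => HasDerivWithinAt.sub
        ((((hasDerivAt_id x).sub_const t).const_mul (h2 t)).add
          ((((hasDerivAt_id x).sub_const t).pow 2).const_mul (D / 2))).hasDerivWithinAt
        (hd2 x hx)) t s ht0 hs1
        (by linarith) (fun x hx => by
          have := hk x ⟨hx.1, hx.2.trans hs2⟩
          norm_num
          linarith)
    linarith
  have hl0 : h t + h1 t * (tstar - t) + h2 t / 2 * (tstar - t) ^ 2 ≤ h tstar := by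
    have := aux_mono R (fun x => h x - (h1 t * (x - t) + h2 t / 2 * (x - t) ^ 2))
      (fun x => h1 x - (h1 t * 1 + h2 t / 2 * ((2:ℕ) * (x - t) ^ (2 - 1) * 1)))
      (fun x hx => HasDerivWithinAt.sub (hd1 x hx)
        ((((hasDerivAt_id x).sub_const t).const_mul (h1 t)).add
          ((((hasDerivAt_id x).sub_const t).pow 2).const_mul (h2 t / 2))).hasDerivWithinAt)
        t tstar ht0 htt.le hsR (fun x hx => by
          have := hl1 x hx
          norm_num
          linarith)
    linarith
  have hu0 : h tstar ≤ h t + h1 t * (tstar - t) + h2 t / 2 * (tstar - t) ^ 2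
      + D / 6 * (tstar - t) ^ 3 := by
    have := aux_mono R
      (fun x => h1 t * (x - t) + h2 t / 2 * (x - t) ^ 2 + D / 6 * (x - t) ^ 3 - h x)
      (fun x => h1 t * 1 + h2 t / 2 * ((2:ℕ) * (x - t) ^ (2 - 1) * 1)
        + D / 6 * ((3:ℕ) * (x - t) ^ (3 - 1) * 1) - h1 x)
      (fun x hx => HasDerivWithinAt.sub
        (((((hasDerivAt_id x).sub_const t).const_mul (h1 t)).add
          ((((hasDerivAt_id x).sub_const t).pow 2).const_mul (h2 t / 2))).add
          ((((hasDerivAt_id x).sub_const t).pow 3).const_mul (D / 6))).hasDerivWithinAt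
        (hd1 x hx))
        t tstar ht0 htt.le hsR (fun x hx => by
          have := hu1 x hx
          norm_num
          linarith)
    linarith
  have hl1' := hl1 tstar ⟨htt.le, le_rfl⟩
  have hbs := hk0 tstar ⟨htt.le, le_rfl⟩
  have key := aux_alg (h t) (-h1 t) (h2 t) (tstar - t) (-h1 tstar) (h2 tstar) D hb
    (by linarith) (by linarith) (by linarith) (by linarith) (by linarith) (by linarith)
  rw [neg_neg, neg_sq] at key
  linarith
end

section
/- Let R > 0 and let h : [0,R) → ℝ be twice continuously differentiable satisfying assumptions (A1)–(A3), with t* the smallest zero of h in (0,R). Define the sequence (t_k) by t_0 = 0 and t_{k+1} = H_h(t_k) = t_k − (1/(1 − L_h(t_k)))·(h(t_k)/h'(t_k)). Then (t_k) is well defined, strictly increasing, contained in [0,t*), converges to t*, and satisfies the Q-cubic estimate t* − t_{k+1} ≤ [ (1/3)·h''(t*)²/h'(t*)² + (2/9)·D⁻h''(t*)/(−h'(t*)) ]·(t* − t_k)³ for all k. -/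
lemma halley_aux_mono {R : ℝ} {f f' : ℝ → ℝ} {x s : ℝ} (hx : 0 ≤ x) (hs : s < R)
    (hf : ∀ t ∈ Set.Ico (0:ℝ) R, HasDerivWithinAt f (f' t) (Set.Ico 0 R) t)
    (hn : ∀ u ∈ Set.Icc x s, 0 ≤ f' u) : ∀ u ∈ Set.Icc x s, f x ≤ f u := by
  intro u hu
  have hsub : Set.Icc x s ⊆ Set.Ico 0 R := fun y hy => ⟨hx.trans hy.1, hy.2.trans_lt hs⟩
  have hm : MonotoneOn f (Set.Icc x s) := by
    apply monotoneOn_of_hasDerivWithinAt_nonneg (f' := f') (convex_Icc x s)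
    · intro y hy
      exact (hf y (hsub hy)).continuousWithinAt.mono hsub
    · intro y hy
      exact (hf y (hsub (interior_subset hy))).mono (interior_subset.trans hsub)
    · intro y hy
      exact hn y (interior_subset hy)
  exact hm ⟨le_rfl, hu.1.trans hu.2⟩ hu hu.1

lemma halley_aux_alg {H a b e A B D S : ℝ} (ha : 0 < a) (hb : 0 < b) (he : 0 < e) (hA : 0 < A)
    (hbB : b ≤ B) (hD : 0 ≤ D) (hDS : D ≤ S)
    (f0 : A ≤ a - b * e) (f1 : H ≤ a * e - b * e ^ 2 / 2)
    (f2 : a * e - b * e ^ 2 / 2 - D * e ^ 3 / 6 ≤ H) (f3 : A * e ≤ H) :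
    0 < 2 * a ^ 2 - H * b ∧ 3 / 2 * a ^ 2 ≤ 2 * a ^ 2 - H * b ∧
    2 * H * a / (2 * a ^ 2 - H * b) < e ∧ H / a ≤ 2 * H * a / (2 * a ^ 2 - H * b) ∧
    e - 2 * H * a / (2 * a ^ 2 - H * b) ≤
      ((1 / 3) * (B ^ 2 / A ^ 2) + (2 / 9) * (S / A)) * e ^ 3 := by
  have hH : 0 < H := lt_of_lt_of_le (by positivity) f3
  have hL : 3 / 2 * a ^ 2 ≤ 2 * a ^ 2 - H * b := by
    nlinarith [mul_le_mul_of_nonneg_right f1 hb.le, sq_nonneg (a - b * e)]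
  have hden : 0 < 2 * a ^ 2 - H * b := lt_of_lt_of_le (by positivity) hL
  have hAa : A ≤ a := by nlinarith [mul_pos hb he]
  refine ⟨hden, hL, ?_, ?_, ?_⟩
  · rw [div_lt_iff₀ hden]
    have h1 : H * (2 * a + b * e) ≤ (a * e - b * e ^ 2 / 2) * (2 * a + b * e) :=
      mul_le_mul_of_nonneg_right f1 (by positivity)
    have h2 : 0 < b ^ 2 * e ^ 3 := by positivity
    nlinarith
  · rw [div_le_div_iff₀ ha hden]
    have : 0 < H * (H * b) := by positivity
    nlinarith
  · have hN : e * (2 * a ^ 2 - H * b) - 2 * H * a ≤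
        b ^ 2 * e ^ 3 / 2 + D * e ^ 3 / 6 * (b * e + 2 * a) := by
      have := mul_le_mul_of_nonneg_right f2 (show 0 ≤ b * e + 2 * a by positivity)
      nlinarith
    have e1 : e - 2 * H * a / (2 * a ^ 2 - H * b) =
        (e * (2 * a ^ 2 - H * b) - 2 * H * a) / (2 * a ^ 2 - H * b) := by
      field_simp
    have e2 : (e * (2 * a ^ 2 - H * b) - 2 * H * a) / (2 * a ^ 2 - H * b) ≤
        (b ^ 2 * e ^ 3 / 2 + D * e ^ 3 / 6 * (b * e + 2 * a)) / (3 / 2 * a ^ 2) :=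
      div_le_div₀ (by positivity) hN (by positivity) hL
    have e3 : (b ^ 2 * e ^ 3 / 2 + D * e ^ 3 / 6 * (b * e + 2 * a)) / (3 / 2 * a ^ 2) =
        ((1 / 3) * (b ^ 2 / a ^ 2) + (2 / 9) * (D * ((b * e + 2 * a) / (2 * a ^ 2)))) * e ^ 3 := by
      field_simp
      ring
    have e4 : b ^ 2 / a ^ 2 ≤ B ^ 2 / A ^ 2 := by
      apply div_le_div₀ (by positivity) (by gcongr) (by positivity) (by gcongr)
    have e5 : (b * e + 2 * a) / (2 * a ^ 2) ≤ 1 / A := by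
      rw [div_le_div_iff₀ (by positivity) hA]
      have := mul_le_mul_of_nonneg_left f0 (show 0 ≤ b * e + 2 * a by positivity)
      have h3 : 0 < b * e * a := by positivity
      nlinarith [sq_nonneg (b * e)]
    have e6 : D * ((b * e + 2 * a) / (2 * a ^ 2)) ≤ S / A := by
      calc _ ≤ S * (1 / A) := mul_le_mul hDS e5 (by positivity) (hD.trans hDS)
        _ = S / A := by ring
    rw [e1]
    refine e2.trans ?_
    rw [e3]
    gcongr

/-- Under (A1)-(A3), the scalar Halley sequence `t_0 = 0`,
`t_{k+1} = H_h(t_k) = t_k - (1/(1 - L_h(t_k)))·(h(t_k)/h'(t_k))` is well defined,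
strictly increasing, contained in `[0,t*)`, converges to `t*`, and satisfies the
Q-cubic estimate
`t* - t_{k+1} ≤ [(1/3)·h''(t*)²/h'(t*)² + (2/9)·D⁻h''(t*)/(-h'(t*))]·(t* - t_k)³`.
Here `h1` and `h2` denote the first and second derivatives of `h` on `[0,R)`,
and `tstar` is the smallest zero of `h` in `(0,R)`. -/
theorem halley_majorizing_sequence_converges_cubically
    (R : ℝ) (hR : 0 < R) (h h1 h2 : ℝ → ℝ)
    (hd1 : ∀ t ∈ Set.Ico (0:ℝ) R, HasDerivWithinAt h (h1 t) (Set.Ico 0 R) t)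
    (hd2 : ∀ t ∈ Set.Ico (0:ℝ) R, HasDerivWithinAt h1 (h2 t) (Set.Ico 0 R) t)
    (hc2 : ContinuousOn h2 (Set.Ico 0 R))
    (hA1a : 0 < h 0) (hA1b : 0 < h2 0) (hA1c : h1 0 = -1)
    (hA2a : ConvexOn ℝ (Set.Ico 0 R) h2)
    (hA2b : StrictMonoOn h2 (Set.Ico 0 R))
    (tstar : ℝ) (htsmem : tstar ∈ Set.Ioo 0 R) (htszero : h tstar = 0)
    (htsmin : ∀ t ∈ Set.Ioo (0:ℝ) R, h t = 0 → tstar ≤ t)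
    (htsder : h1 tstar < 0)
    (t : ℕ → ℝ) (ht0 : t 0 = 0)
    (hrec : ∀ k, t (k + 1) =
      t k - (1 / (1 - h (t k) * h2 (t k) / (2 * (h1 (t k)) ^ 2))) * (h (t k) / h1 (t k))) :
    StrictMono t ∧ (∀ k, t k ∈ Set.Ico (0:ℝ) tstar) ∧
    Filter.Tendsto t Filter.atTop (nhds tstar) ∧
    ∀ k, tstar - t (k + 1) ≤
      ((1 / 3) * ((h2 tstar) ^ 2 / (h1 tstar) ^ 2) +
        (2 / 9) * (sSup ((fun u => (h2 tstar - h2 u) / (tstar - u)) ''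
          Set.Ico (0:ℝ) tstar) / (-(h1 tstar)))) * (tstar - t k) ^ 3 := by
  obtain ⟨hs0, hsR⟩ := htsmem
  have hsI : tstar ∈ Set.Ico (0:ℝ) R := ⟨hs0.le, hsR⟩
  have hmono2 : ∀ x u, 0 ≤ x → x ≤ u → u < R → h2 x ≤ h2 u := fun x u hx hxu hu =>
    hA2b.monotoneOn ⟨hx, hxu.trans_lt hu⟩ ⟨hx.trans hxu, hu⟩ hxu
  set S := sSup ((fun u => (h2 tstar - h2 u) / (tstar - u)) '' Set.Ico (0:ℝ) tstar) with hS
  have hbdd : BddAbove ((fun u => (h2 tstar - h2 u) / (tstar - u)) '' Set.Ico (0:ℝ) tstar) := by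
    obtain ⟨r, hr1, hr2⟩ := exists_between hsR
    refine ⟨(h2 r - h2 tstar) / (r - tstar), ?_⟩
    rintro _ ⟨u, hu, rfl⟩
    exact hA2a.slope_mono_adjacent ⟨hu.1, hu.2.trans hsR⟩ ⟨hs0.le.trans hr1.le, hr2⟩ hu.2 hr1
  have key : ∀ x ∈ Set.Ico (0:ℝ) tstar,
      0 < -h1 x ∧ -h1 x ≤ 1 ∧ 0 < h2 x ∧ h2 x ≤ h2 tstar ∧
      0 ≤ (h2 tstar - h2 x) / (tstar - x) ∧ (h2 tstar - h2 x) / (tstar - x) ≤ S ∧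
      -h1 tstar ≤ -h1 x - h2 x * (tstar - x) ∧
      h x ≤ -h1 x * (tstar - x) - h2 x * (tstar - x) ^ 2 / 2 ∧
      -h1 x * (tstar - x) - h2 x * (tstar - x) ^ 2 / 2 -
        (h2 tstar - h2 x) / (tstar - x) * (tstar - x) ^ 3 / 6 ≤ h x ∧
      -h1 tstar * (tstar - x) ≤ h x := by
    rintro x ⟨hx0, hxs⟩
    have hxI : x ∈ Set.Ico (0:ℝ) R := ⟨hx0, hxs.trans hsR⟩
    have hsx : tstar ∈ Set.Icc x tstar := ⟨hxs.le, le_rfl⟩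
    have he : 0 < tstar - x := by linarith
    have hb : 0 < h2 x := hA1b.trans_le (hmono2 0 x le_rfl hx0 hxI.2)
    have hbB : h2 x ≤ h2 tstar := hmono2 x tstar hx0 hxs.le hsR
    set D := (h2 tstar - h2 x) / (tstar - x) with hD
    have hDe : D * (tstar - x) = h2 tstar - h2 x := by rw [hD]; field_simp
    have hD0 : 0 ≤ D := div_nonneg (by linarith) he.le
    have hDS : D ≤ S := le_csSup hbdd ⟨x, ⟨hx0, hxs⟩, rfl⟩
    have hp1 : ∀ t : ℝ, HasDerivAt (fun u : ℝ => u - x) 1 t := fun t => (hasDerivAt_id t).sub_const x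
    have hp2 : ∀ t : ℝ, HasDerivAt (fun u : ℝ => (u - x) ^ 2) (2 * (t - x)) t := fun t => by
      simpa using (hp1 t).fun_pow 2
    have hp3 : ∀ t : ℝ, HasDerivAt (fun u : ℝ => (u - x) ^ 3) (3 * (t - x) ^ 2) t := fun t => by
      simpa using (hp1 t).fun_pow 3
    have g1 : ∀ u ∈ Set.Icc x tstar, h1 x + h2 x * (u - x) ≤ h1 u := by
      intro u hu
      have := halley_aux_mono (f := fun u => h1 u - h2 x * (u - x)) (f' := fun u => h2 u - h2 x * 1)
        hx0 hsR (fun t ht => (hd2 t ht).sub ((hp1 t).const_mul (h2 x)).hasDerivWithinAt)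
        (fun u hu => by
          have := hmono2 x u hx0 hu.1 (hu.2.trans_lt hsR)
          linarith) u hu
      linarith
    have g2 : ∀ u ∈ Set.Icc x tstar, h x + h1 x * (u - x) + h2 x / 2 * (u - x) ^ 2 ≤ h u := by
      intro u hu
      have := halley_aux_mono (f := fun u => h u - h1 x * (u - x) - h2 x / 2 * (u - x) ^ 2)
        (f' := fun u => h1 u - h1 x * 1 - h2 x / 2 * (2 * (u - x)))
        hx0 hsR (fun t ht => ((hd1 t ht).sub ((hp1 t).const_mul (h1 x)).hasDerivWithinAt).sub
          ((hp2 t).const_mul (h2 x / 2)).hasDerivWithinAt)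
        (fun u hu => by
          have := g1 u hu
          linarith) u hu
      linarith
    have k0 : ∀ u ∈ Set.Icc x tstar, h2 u ≤ h2 x + D * (u - x) := by
      intro u hu
      have hc := hA2a.2 hxI hsI
        (show 0 ≤ (tstar - u) / (tstar - x) from div_nonneg (by linarith [hu.2]) he.le)
        (show 0 ≤ (u - x) / (tstar - x) from div_nonneg (by linarith [hu.1]) he.le)
        (by field_simp; ring)
      simp only [smul_eq_mul] at hc
      have e1 : (tstar - u) / (tstar - x) * x + (u - x) / (tstar - x) * tstar = u := by
        field_simp; ring
      have e2 : (tstar - u) / (tstar - x) * h2 x + (u - x) / (tstar - x) * h2 tstar =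
          h2 x + D * (u - x) := by
        rw [hD]; field_simp; ring
      rwa [e1, e2] at hc
    have k1 : ∀ u ∈ Set.Icc x tstar, h1 u ≤ h1 x + h2 x * (u - x) + D / 2 * (u - x) ^ 2 := by
      intro u hu
      have := halley_aux_mono (f := fun u => h2 x * (u - x) + D / 2 * (u - x) ^ 2 - h1 u)
        (f' := fun u => h2 x * 1 + D / 2 * (2 * (u - x)) - h2 u)
        hx0 hsR (fun t ht => ((((hp1 t).const_mul (h2 x)).hasDerivWithinAt).add
          ((hp2 t).const_mul (D / 2)).hasDerivWithinAt).sub (hd2 t ht))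
        (fun u hu => by
          have := k0 u hu
          linarith) u hu
      linarith
    have k2 : ∀ u ∈ Set.Icc x tstar,
        h u ≤ h x + h1 x * (u - x) + h2 x / 2 * (u - x) ^ 2 + D / 6 * (u - x) ^ 3 := by
      intro u hu
      have := halley_aux_mono
        (f := fun u => h1 x * (u - x) + h2 x / 2 * (u - x) ^ 2 + D / 6 * (u - x) ^ 3 - h u)
        (f' := fun u => h1 x * 1 + h2 x / 2 * (2 * (u - x)) + D / 6 * (3 * (u - x) ^ 2) - h1 u)
        hx0 hsR (fun t ht => (((((hp1 t).const_mul (h1 x)).hasDerivWithinAt).add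
          ((hp2 t).const_mul (h2 x / 2)).hasDerivWithinAt).add
          ((hp3 t).const_mul (D / 6)).hasDerivWithinAt).sub (hd1 t ht))
        (fun u hu => by
          have := k1 u hu
          linarith) u hu
      linarith
    have m1 : ∀ y u, 0 ≤ y → y ≤ u → u < R → h1 y ≤ h1 u := fun y u hy hyu hu =>
      halley_aux_mono hy hu hd2 (fun v hv =>
        hA1b.le.trans (hmono2 0 v le_rfl (hy.trans hv.1) (hv.2.trans_lt hu))) u ⟨hyu, le_rfl⟩
    have f3 : h1 tstar * (tstar - x) + h x ≥ 0 := by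
      have := halley_aux_mono (f := fun u => h1 tstar * (u - x) - h u)
        (f' := fun u => h1 tstar * 1 - h1 u)
        hx0 hsR (fun t ht => (((hp1 t).const_mul (h1 tstar)).hasDerivWithinAt).sub (hd1 t ht))
        (fun u hu => by
          have := m1 u tstar (hx0.trans hu.1) hu.2 hsR
          linarith) tstar hsx
      linarith
    have q1 := m1 x tstar hx0 hxs.le hsR
    have q2 := m1 0 x le_rfl hx0 hxI.2
    have q3 := g1 tstar hsx
    have q4 := g2 tstar hsx
    have q5 := k2 tstar hsx
    refine ⟨by linarith, by linarith, hb, hbB, hD0, hDS, by linarith, by linarith, by linarith,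
      by linarith⟩
  have step : ∀ k, t k ∈ Set.Ico (0:ℝ) tstar →
      -h1 tstar * (tstar - t k) ≤ t (k + 1) - t k ∧ t (k + 1) < tstar ∧
      tstar - t (k + 1) ≤ ((1 / 3) * ((h2 tstar) ^ 2 / (h1 tstar) ^ 2) +
        (2 / 9) * (S / (-(h1 tstar)))) * (tstar - t k) ^ 3 := by
    intro k hk
    obtain ⟨a0, a1, b0, bB, D0, DS, f0, f1, f2, f3⟩ := key (t k) hk
    have he : 0 < tstar - t k := by linarith [hk.2]
    have hA : 0 < -h1 tstar := by linarith
    obtain ⟨c1, c2, c3, c4, c5⟩ := halley_aux_alg a0 b0 he hA bB D0 DS f0 f1 f2 f3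
    have hr : t (k + 1) = t k + 2 * h (t k) * (-h1 (t k)) /
        (2 * (-h1 (t k)) ^ 2 - h (t k) * h2 (t k)) := by
      rw [hrec k]
      have n1 : h1 (t k) ≠ 0 := by linarith
      have n2 : 2 * (h1 (t k)) ^ 2 - h (t k) * h2 (t k) ≠ 0 := by
        rw [neg_sq] at c1; exact c1.ne'
      have n3 : 1 - h (t k) * h2 (t k) / (2 * (h1 (t k)) ^ 2) =
          (2 * (h1 (t k)) ^ 2 - h (t k) * h2 (t k)) / (2 * (h1 (t k)) ^ 2) := by
        field_simp
      rw [n3, neg_sq]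
      field_simp
      ring
    have hH : 0 < h (t k) := lt_of_lt_of_le (by positivity) f3
    have hHa : h (t k) ≤ h (t k) / (-h1 (t k)) := by
      rw [le_div_iff₀ a0]; nlinarith
    rw [neg_sq (h1 tstar)] at c5
    rw [hr]
    refine ⟨by linarith, by linarith, ?_⟩
    rw [← sub_sub]
    exact c5
  have hmem : ∀ k, t k ∈ Set.Ico (0:ℝ) tstar := by
    intro k
    induction k with
    | zero => rw [ht0]; exact ⟨le_rfl, hs0⟩
    | succ k ih =>
      obtain ⟨s1, s2, -⟩ := step k ih
      have : 0 < -h1 tstar * (tstar - t k) := mul_pos (by linarith) (by linarith [ih.2])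
      exact ⟨by linarith [ih.1], s2⟩
  have hsm : StrictMono t := by
    apply strictMono_nat_of_lt_succ
    intro k
    have : 0 < -h1 tstar * (tstar - t k) := mul_pos (by linarith) (by linarith [(hmem k).2])
    linarith [(step k (hmem k)).1]
  refine ⟨hsm, hmem, ?_, fun k => (step k (hmem k)).2.2⟩
  have hb : BddAbove (Set.range t) := ⟨tstar, by rintro _ ⟨k, rfl⟩; exact (hmem k).2.le⟩
  have hl := tendsto_atTop_ciSup hsm.monotone hb
  set l := ⨆ k, t k
  have hls : l ≤ tstar := ciSup_le fun k => (hmem k).2.le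
  have hl1 := (Filter.tendsto_add_atTop_iff_nat 1).2 hl
  have h5 : -h1 tstar * (tstar - l) ≤ l - l :=
    le_of_tendsto_of_tendsto' ((hl.const_sub tstar).const_mul (-h1 tstar)) (hl1.sub hl)
      (fun k => (step k (hmem k)).1)
  have h6 : l = tstar := by
    by_contra hne
    have : l < tstar := lt_of_le_of_ne hls hne
    have : 0 < -h1 tstar * (tstar - l) := mul_pos (by linarith) (by linarith)
    linarith
  rw [← h6]
  exact hl
end

section
/- Let X, Y be Banach spaces, D ⊂ X open and convex, F : D → Y twice continuously Fréchet differentiable, and x₀ ∈ D with F'(x₀) invertible (as a continuous linear operator). Let h : [0,t*) → ℝ be twice continuously differentiable satisfying assumptions (A1)–(A3) and be a majorizing function to F at x₀. If x ∈ D satisfies ‖x − x₀‖ ≤ t < t*, then F'(x) is invertible and ‖F'(x)⁻¹F'(x₀)‖ ≤ −1/h'(‖x − x₀‖) ≤ −1/h'(t). In particular, F'(x) is invertible for every x ∈ B(x₀,t*). -/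
open Metric Set

/-- if `h` is a majorizing function to `F` at `x₀` satisfying
(A1)-(A3), and `‖x - x₀‖ ≤ t < t*`, then `F'(x)` is invertible with
`‖F'(x)⁻¹F'(x₀)‖ ≤ -1/h'(‖x - x₀‖) ≤ -1/h'(t)`; in particular `F'` is invertible
on the ball `B(x₀,t*)`. Here `F'`, `F''` are the first two Fréchet derivatives
of `F`, `h1`, `h2` are the first two derivatives of `h`, the invertibility of
`F'(x₀)` is witnessed by the continuous linear equivalence `e0`, and `tstar` is
the smallest zero of `h` in `(0,R)`. -/
theorem halley_majorant_F'_invertible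
    {X Y : Type*} [NormedAddCommGroup X] [NormedSpace ℝ X] [CompleteSpace X]
    [NormedAddCommGroup Y] [NormedSpace ℝ Y] [CompleteSpace Y]
    (D : Set X) (hD : IsOpen D) (hDconv : Convex ℝ D)
    (F : X → Y) (F' : X → X →L[ℝ] Y) (F'' : X → X →L[ℝ] X →L[ℝ] Y)
    (hdF : ∀ x ∈ D, HasFDerivAt F (F' x) x)
    (hdF' : ∀ x ∈ D, HasFDerivAt F' (F'' x) x)
    (hcF'' : ContinuousOn F'' D)
    (x₀ : X) (hx₀ : x₀ ∈ D)
    (e0 : X ≃L[ℝ] Y) (he0 : (e0 : X →L[ℝ] Y) = F' x₀)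
    (R : ℝ) (hR : 0 < R) (hballD : ball x₀ R ⊆ D)
    (h h1 h2 : ℝ → ℝ)
    (hd1 : ∀ t ∈ Ico (0:ℝ) R, HasDerivWithinAt h (h1 t) (Ico 0 R) t)
    (hd2 : ∀ t ∈ Ico (0:ℝ) R, HasDerivWithinAt h1 (h2 t) (Ico 0 R) t)
    (hc2 : ContinuousOn h2 (Ico 0 R))
    (hA1a : 0 < h 0) (hA1b : 0 < h2 0) (hA1c : h1 0 = -1)
    (hA2a : ConvexOn ℝ (Ico 0 R) h2) (hA2b : StrictMonoOn h2 (Ico 0 R))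
    (tstar : ℝ) (htsmem : tstar ∈ Ioo 0 R) (htszero : h tstar = 0)
    (htsmin : ∀ s ∈ Ioo (0:ℝ) R, h s = 0 → tstar ≤ s) (htsder : h1 tstar < 0)
    (hmaj : ∀ x ∈ ball x₀ R, ∀ y ∈ ball x₀ R, ‖y - x‖ + ‖x - x₀‖ < R →
      ‖(ContinuousLinearMap.compL ℝ X Y X (e0.symm : Y →L[ℝ] X)).comp
          (F'' y - F'' x)‖ ≤ h2 (‖y - x‖ + ‖x - x₀‖) - h2 ‖x - x₀‖)
    (hinit1 : ‖(e0.symm : Y →L[ℝ] X) (F x₀)‖ ≤ h 0)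
    (hinit2 : ‖(ContinuousLinearMap.compL ℝ X Y X (e0.symm : Y →L[ℝ] X)).comp
        (F'' x₀)‖ ≤ h2 0)
    (x : X) (t : ℝ) (hxt : ‖x - x₀‖ ≤ t) (ht : t < tstar) :
    (∃ e : X ≃L[ℝ] Y, (e : X →L[ℝ] Y) = F' x ∧
      ‖(e.symm : Y →L[ℝ] X).comp (F' x₀)‖ ≤ -1 / h1 ‖x - x₀‖ ∧
      -1 / h1 ‖x - x₀‖ ≤ -1 / h1 t) ∧
    (∀ z ∈ ball x₀ tstar, ∃ e : X ≃L[ℝ] Y, (e : X →L[ℝ] Y) = F' z) := by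
  have h2pos : ∀ s ∈ Ico (0:ℝ) R, 0 ≤ h2 s := fun s hs =>
    hA1b.le.trans (hA2b.monotoneOn ⟨le_rfl, hR⟩ hs hs.1)
  have hmono : MonotoneOn h1 (Ico 0 R) := by
    refine monotoneOn_of_hasDerivWithinAt_nonneg (f' := h2) (convex_Ico 0 R)
      (fun s hs => (hd2 s hs).continuousWithinAt) ?_ ?_
    · intro s hs
      exact (hd2 s (interior_subset hs)).mono interior_subset
    · intro s hs
      exact h2pos s (interior_subset hs)
  have hsm : ∀ s, 0 ≤ s → s < tstar → h1 s < 0 := fun s h0 hs =>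
    (hmono ⟨h0, hs.trans htsmem.2⟩ ⟨htsmem.1.le, htsmem.2⟩ hs.le).trans_lt htsder
  have key : ∀ z, ‖z - x₀‖ < tstar → 
      ‖(e0.symm : Y →L[ℝ] X).comp (F' z) - ContinuousLinearMap.id ℝ X‖ ≤ h1 ‖z - x₀‖ + 1 := by
    intro z hz
    set r := ‖z - x₀‖ with hr
    have hr0 : 0 ≤ r := norm_nonneg _
    have hrR : r < R := hz.trans htsmem.2
    set C := ContinuousLinearMap.compL ℝ X Y X (e0.symm : Y →L[ℝ] X) with hC
    have hnorm : ∀ s : ℝ, 0 ≤ s → ‖(x₀ + s • (z - x₀)) - x₀‖ = s * r := by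
      intro s hs
      rw [add_sub_cancel_left, norm_smul, Real.norm_of_nonneg hs]
    have hsr : ∀ s ∈ Icc (0:ℝ) 1, s * r ∈ Ico (0:ℝ) R := fun s hs =>
      ⟨mul_nonneg hs.1 hr0, (mul_le_of_le_one_left hr0 hs.2).trans_lt hrR⟩
    have hmem : ∀ s ∈ Icc (0:ℝ) 1, x₀ + s • (z - x₀) ∈ ball x₀ R := by
      intro s hs
      rw [mem_ball, dist_eq_norm, hnorm s hs.1]
      exact (hsr s hs).2
    have hφ : ∀ s ∈ Icc (0:ℝ) 1, HasDerivAt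
        (fun s : ℝ => C (F' (x₀ + s • (z - x₀))) - ContinuousLinearMap.id ℝ X)
        (C (F'' (x₀ + s • (z - x₀)) (z - x₀))) s := by
      intro s hs
      have hl : HasDerivAt (fun s : ℝ => x₀ + s • (z - x₀)) (z - x₀) s := by
        simpa using ((hasDerivAt_id s).smul_const (z - x₀)).const_add x₀
      have h3 := (hdF' _ (hballD (hmem s hs))).comp_hasDerivAt s hl
      exact (C.hasFDerivAt.comp_hasDerivAt s h3).sub_const _
    have hB : ∀ s ∈ Icc (0:ℝ) 1, HasDerivWithinAt (fun s : ℝ => h1 (s * r) + 1)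
        (h2 (s * r) * r) (Icc 0 1) s := by
      intro s hs
      have hl : HasDerivWithinAt (fun s : ℝ => s * r) r (Icc 0 1) s := by
        simpa using ((hasDerivAt_id s).mul_const r).hasDerivWithinAt
      exact ((hd2 _ (hsr s hs)).comp s hl (fun u hu => hsr u hu)).add_const 1
    have hbd : ∀ s ∈ Icc (0:ℝ) 1,
        ‖C (F'' (x₀ + s • (z - x₀)) (z - x₀))‖ ≤ h2 (s * r) * r := by
      intro s hs
      have hm := hmaj x₀ (mem_ball_self hR) _ (hmem s hs) (by
        rw [hnorm s hs.1, sub_self, norm_zero, add_zero]; exact (hsr s hs).2)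
      rw [hnorm s hs.1, sub_self, norm_zero, add_zero] at hm
      have h4 : ‖C.comp (F'' (x₀ + s • (z - x₀)))‖ ≤ h2 (s * r) := by
        have : C.comp (F'' (x₀ + s • (z - x₀))) =
            C.comp (F'' (x₀ + s • (z - x₀)) - F'' x₀) + C.comp (F'' x₀) := by
          rw [ContinuousLinearMap.comp_sub, sub_add_cancel]
        rw [this]
        refine (norm_add_le _ _).trans ?_
        linarith
      exact (C.comp (F'' (x₀ + s • (z - x₀)))).le_of_opNorm_le h4 (z - x₀)
    have hfin := image_norm_le_of_norm_deriv_right_le_deriv_boundary' (a := (0:ℝ)) (b := 1)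
      (f := fun s : ℝ => C (F' (x₀ + s • (z - x₀))) - ContinuousLinearMap.id ℝ X)
      (f' := fun s => C (F'' (x₀ + s • (z - x₀)) (z - x₀)))
      (B := fun s : ℝ => h1 (s * r) + 1) (B' := fun s => h2 (s * r) * r)
      (fun s hs => (hφ s hs).continuousAt.continuousWithinAt)
      (fun s hs => (hφ s (Ico_subset_Icc_self hs)).hasDerivWithinAt)
      (by
        have : C (F' x₀) = ContinuousLinearMap.id ℝ X := by
          rw [hC, ← he0]; ext v; simp
        simp [this, hA1c])
      (fun s hs => (hB s hs).continuousWithinAt)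
      (fun s hs => (hB s (Ico_subset_Icc_self hs)).mono_of_mem_nhdsWithin
        (Icc_mem_nhdsGE_of_mem hs))
      (fun s hs => hbd s (Ico_subset_Icc_self hs))
    have h5 := hfin (show (1:ℝ) ∈ Icc (0:ℝ) 1 from ⟨zero_le_one, le_rfl⟩)
    simpa [hC] using h5
  have main : ∀ z, ‖z - x₀‖ < tstar → ∃ e : X ≃L[ℝ] Y, (e : X →L[ℝ] Y) = F' z ∧
      ‖(e.symm : Y →L[ℝ] X).comp (F' x₀)‖ ≤ -1 / h1 ‖z - x₀‖ := by
    intro z hz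
    have hk := key z hz
    have hneg := hsm _ (norm_nonneg _) hz
    set A := (e0.symm : Y →L[ℝ] X).comp (F' z) with hA
    have hlt : ‖ContinuousLinearMap.id ℝ X - A‖ < 1 := by
      rw [norm_sub_rev]; linarith
    let U : (X →L[ℝ] X)ˣ := Units.oneSub (ContinuousLinearMap.id ℝ X - A) hlt
    have hU : (U : X →L[ℝ] X) = A := by
      change (1 : X →L[ℝ] X) - (ContinuousLinearMap.id ℝ X - A) = A
      exact sub_sub_cancel _ _
    let e : X ≃L[ℝ] Y := (ContinuousLinearEquiv.ofUnit U).trans e0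
    have he : ∀ v, e v = F' z v := by
      intro v
      change e0 ((U : X →L[ℝ] X) v) = _
      rw [hU, hA]; simp
    refine ⟨e, ContinuousLinearMap.ext he, ?_⟩
    refine ContinuousLinearMap.opNorm_le_bound _
      (div_nonneg_of_nonpos (by norm_num) hneg.le) ?_
    intro w
    set v := ((e.symm : Y →L[ℝ] X).comp (F' x₀)) w with hv
    have hAv : A v = w := by
      have h6 : F' z v = e0 w := by
        rw [← he, hv, ← he0]; simp
      rw [hA, ContinuousLinearMap.comp_apply, h6]; simp
    have h7 : ‖A v - v‖ ≤ (h1 ‖z - x₀‖ + 1) * ‖v‖ :=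
      (A - ContinuousLinearMap.id ℝ X).le_of_opNorm_le hk v
    rw [hAv] at h7
    have h8 : ‖v‖ ≤ ‖w‖ + ‖w - v‖ := by
      have := norm_sub_le w (w - v)
      rwa [sub_sub_cancel] at this
    have h9 : -1 / h1 ‖z - x₀‖ * ‖w‖ = ‖w‖ / (-h1 ‖z - x₀‖) := by
      rw [div_neg]; ring
    rw [h9, le_div_iff₀ (by linarith)]
    linarith
  refine ⟨?_, ?_⟩
  · obtain ⟨e, he, hb⟩ := main x (hxt.trans_lt ht)
    refine ⟨e, he, hb, ?_⟩
    have h0 := norm_nonneg (x - x₀)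
    have hm := hmono ⟨h0, (hxt.trans_lt ht).trans htsmem.2⟩
      ⟨h0.trans hxt, ht.trans htsmem.2⟩ hxt
    have hn := hsm t (h0.trans hxt) ht
    have := one_div_le_one_div_of_le (neg_pos.2 hn) (neg_le_neg hm)
    rw [div_neg, div_neg] at this
    rw [neg_div, neg_div]
    exact this
  · intro z hz
    rw [mem_ball, dist_eq_norm] at hz
    obtain ⟨e, he, -⟩ := main z hz
    exact ⟨e, he⟩
end

section
/- Let X, Y be Banach spaces, D ⊂ X open and convex, F : D → Y twice continuously Fréchet differentiable, and x₀ ∈ D with F'(x₀) invertible. Let h : [0,t*) → ℝ be twice continuously differentiable satisfying assumptions (A1)–(A3) and be a majorizing function to F at x₀. Let (t_k) be the majorizing sequence: t_0 = 0, t_{k+1} = t_k − (1/(1 − L_h(t_k)))·(h(t_k)/h'(t_k)) with L_h(t) = h(t)h''(t)/(2h'(t)²). Let (x_k) be the sequence generated by Halley's method with starting point x₀: x_{k+1} = x_k − [I − L_F(x_k)]⁻¹F'(x_k)⁻¹F(x_k), where L_F(x) = ½F'(x)⁻¹F''(x)F'(x)⁻¹F(x). Then for all k ≥ 0: (i) F'(x_k)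 is invertible and ‖F'(x_k)⁻¹F'(x₀)‖ ≤ −1/h'(‖x_k − x₀‖) ≤ −1/h'(t_k); (ii) ‖F'(x₀)⁻¹F''(x_k)‖ ≤ h''(t_k); (iii) ‖F'(x₀)⁻¹F(x_k)‖ ≤ h(t_k); (iv) I − L_F(x_k) is invertible and ‖[I − L_F(x_k)]⁻¹‖ ≤ 1/(1 − L_h(t_k)); (v) ‖x_{k+1} − x_k‖ ≤ t_{k+1} − t_k. -/
open Metric Set

theorem hal_L1 {E : Type*} [NormedAddCommGroup E] [NormedSpace ℝ E]
    (f f' : ℝ → E) (B B' : ℝ → ℝ)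
    (hf : ∀ τ ∈ Icc (0:ℝ) 1, HasDerivWithinAt f (f' τ) (Icc 0 1) τ)
    (hB : ∀ τ ∈ Icc (0:ℝ) 1, HasDerivWithinAt B (B' τ) (Icc 0 1) τ)
    (h0 : ‖f 0‖ ≤ B 0) (hb : ∀ τ ∈ Icc (0:ℝ) 1, ‖f' τ‖ ≤ B' τ) :
    ∀ τ ∈ Icc (0:ℝ) 1, ‖f τ‖ ≤ B τ := by
  have key : ∀ x ∈ Ico (0:ℝ) 1, Icc (0:ℝ) 1 ∈ nhdsWithin x (Ici x) := by
    intro x hx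
    exact Filter.mem_of_superset (Icc_mem_nhdsGE hx.2) (Icc_subset_Icc_left hx.1)
  intro τ hτ
  exact image_norm_le_of_norm_deriv_right_le_deriv_boundary'
    (fun x hx => (hf x hx).continuousWithinAt)
    (fun x hx => (hf x (Ico_subset_Icc_self hx)).mono_of_mem_nhdsWithin (key x hx)) h0
    (fun x hx => (hB x hx).continuousWithinAt)
    (fun x hx => (hB x (Ico_subset_Icc_self hx)).mono_of_mem_nhdsWithin (key x hx))
    (fun x hx => hb x (Ico_subset_Icc_self hx)) hτ

theorem hal_L2 {X : Type*} [NormedAddCommGroup X] [NormedSpace ℝ X] [CompleteSpace X]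
    (A : X →L[ℝ] X) (q : ℝ) (hq : q < 1) (hA : ‖ContinuousLinearMap.id ℝ X - A‖ ≤ q) :
    ∃ u : X ≃L[ℝ] X, (u : X →L[ℝ] X) = A ∧ ‖(u.symm : X →L[ℝ] X)‖ ≤ 1 / (1 - q) := by
  have hlt : ‖(1 : X →L[ℝ] X) - A‖ < 1 := lt_of_le_of_lt hA hq
  let U := Units.oneSub ((1 : X →L[ℝ] X) - A) hlt
  let u := ContinuousLinearEquiv.unitsEquiv ℝ X U
  have hu : (u : X →L[ℝ] X) = A := by
    ext v
    have : u v = (U : X →L[ℝ] X) v := rfl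
    have h2 : (U : X →L[ℝ] X) = A := by simp [U]
    simp [this, h2]
  refine ⟨u, hu, ?_⟩
  have hq' : 0 < 1 - q := by linarith
  apply ContinuousLinearMap.opNorm_le_bound _ (by positivity)
  intro w
  set v := u.symm w with hv
  have hAv : A v = w := by rw [← hu]; simp [hv]
  have h1 : ‖(ContinuousLinearMap.id ℝ X - A) v‖ ≤ q * ‖v‖ :=
    ContinuousLinearMap.le_of_opNorm_le _ hA v
  have h2 : v = (ContinuousLinearMap.id ℝ X - A) v + w := by simp [hAv]
  have h3 : ‖v‖ ≤ q * ‖v‖ + ‖w‖ := by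
    calc ‖v‖ = ‖(ContinuousLinearMap.id ℝ X - A) v + w‖ := by rw [← h2]
      _ ≤ _ := (norm_add_le _ _).trans (by linarith)
  show ‖v‖ ≤ _
  rw [div_mul_eq_mul_div, one_mul, le_div_iff₀ hq']
  linarith

theorem hal_quad (a b c σ s : ℝ) (ha : 0 < a) (hb : b < 0) (hc : 0 < c) (hσ : 0 < σ)
    (H : a + b * σ + c / 2 * σ ^ 2 ≤ 0)
    (hs : s = - ((1 / (1 - a * c / (2 * b ^ 2))) * (a / b))) :
    a * c / (2 * b ^ 2) < 1 ∧ 0 ≤ s ∧ s < σ ∧ 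
     a + b * s = - (a * c / (2 * b ^ 2)) * (-b) * s := by
  have hb2 : 0 < 2 * b ^ 2 := by have := hb.ne; positivity
  have h1 : 2 * (a * c) ≤ b ^ 2 := by nlinarith [sq_nonneg (b + c * σ)]
  have hL : a * c / (2 * b ^ 2) < 1 := by rw [div_lt_one hb2]; nlinarith
  have hL' : 0 < 1 - a * c / (2 * b ^ 2) := by linarith
  have hbne : b ≠ 0 := hb.ne
  have e1 : (1 - a * c / (2 * b ^ 2)) * s = -(a / b) := by
    rw [hs, mul_neg, ← mul_assoc, mul_one_div_cancel hL'.ne', one_mul]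
  have hab : 0 < -(a / b) := by
    rw [← div_neg]; exact div_pos ha (by linarith)
  refine ⟨hL, ?_, ?_, ?_⟩
  · by_contra hcon
    push Not at hcon
    nlinarith
  · have : (1 - a * c / (2 * b ^ 2)) * s < (1 - a * c / (2 * b ^ 2)) * σ := by
      rw [e1]
      set u := -(a / b) with hu
      have hub : a = u * (-b) := by rw [hu]; field_simp
      have hσu : u < σ := by
        have : u * (-b) < σ * (-b) := by rw [← hub]; nlinarith [mul_pos hc (pow_pos hσ 2)]
        exact lt_of_mul_lt_mul_right this (by linarith)
      have e3 : a * c / (2 * b ^ 2) = u * c / (2 * (-b)) := by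
        rw [hub]; field_simp
      rw [e3]
      have e4 : (u - (1 - u * c / (2 * -b)) * σ) * (-b) = a + b * σ + c / 2 * u * σ := by
        rw [hub]; field_simp; ring
      have e5 : (u - (1 - u * c / (2 * -b)) * σ) * (-b) < 0 := by
        rw [e4]; nlinarith [mul_pos (mul_pos hc hσ) (sub_pos.2 hσu)]
      have := neg_of_mul_neg_left e5 (by linarith)
      linarith
    exact lt_of_mul_lt_mul_left this hL'.le
  · have : b * ((1 - a * c / (2 * b ^ 2)) * s) = - a := by rw [e1]; field_simp
    linarith

theorem hal_conv (R : ℝ) (g : ℝ → ℝ) (hg : ConvexOn ℝ (Ico 0 R) g)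
    (r t δ : ℝ) (hr : 0 ≤ r) (hrt : r ≤ t) (hδ : 0 ≤ δ) (htR : t + δ < R) :
    g (δ + r) - g r ≤ g (δ + t) - g t := by
  rcases hδ.eq_or_lt with rfl | hδ
  · simp
  rcases hrt.eq_or_lt with rfl | hrt
  · simp
  -- both inner points are convex combinations of r and t + δ
  have hmr : r ∈ Ico 0 R := ⟨hr, by linarith⟩
  have hmt : δ + t ∈ Ico 0 R := ⟨by linarith, by linarith⟩
  set l := δ + t - r with hl
  have hl0 : 0 < l := by linarith
  have c1 := hg.2 hmr hmt (show 0 ≤ (t - r) / l from div_nonneg (by linarith) hl0.le)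
    (show 0 ≤ δ / l by positivity) (by rw [← add_div, div_eq_one_iff_eq hl0.ne']; linarith)
  have c2 := hg.2 hmr hmt
    (show 0 ≤ δ / l by positivity) (show 0 ≤ (t - r) / l from div_nonneg (by linarith) hl0.le)
    (by rw [← add_div, div_eq_one_iff_eq hl0.ne']; linarith)
  have hs : (t - r) / l + δ / l = 1 := by
    rw [← add_div, div_eq_one_iff_eq hl0.ne']; linarith
  have hp : δ / l * l = δ := by field_simp
  have hp2 : (t - r) / l * l = t - r := by field_simp
  simp only [smul_eq_mul] at c1 c2
  generalize (t - r) / l = p at *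
  generalize δ / l = p' at *
  have hm : δ + t = l + r := by linarith
  have e1 : p * r + p' * (δ + t) = δ + r := by
    rw [hm]; linear_combination r * hs + hp
  have e2 : p' * r + p * (δ + t) = t := by
    rw [hm]; linear_combination r * hs + hp2
  rw [e1] at c1
  rw [e2] at c2
  have : p = 1 - p' := by linarith
  subst this
  linarith


open Metric Set

/-- if `h` is a majorizing function to `F` at `x₀` satisfying
(A1)-(A3), and `(t_k)` is the majorizing sequence, then the Halley sequence
`x_{k+1} = x_k - [I - L_F(x_k)]⁻¹ F'(x_k)⁻¹ F(x_k)` with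
`L_F(x) = ½ F'(x)⁻¹F''(x)F'(x)⁻¹F(x)` starting at `x₀` is well defined (the
invertibility of `F'(x_k)` and of `I - L_F(x_k)` being witnessed by continuous
linear equivalences `e k` and `m k`) and satisfies, for all `k`:
(i) `‖F'(x_k)⁻¹F'(x₀)‖ ≤ -1/h'(‖x_k - x₀‖) ≤ -1/h'(t_k)`;
(ii) `‖F'(x₀)⁻¹F''(x_k)‖ ≤ h''(t_k)`; (iii) `‖F'(x₀)⁻¹F(x_k)‖ ≤ h(t_k)`;
(iv) `‖[I - L_F(x_k)]⁻¹‖ ≤ 1/(1 - L_h(t_k))`; (v) `‖x_{k+1} - x_k‖ ≤ t_{k+1} - t_k`. -/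
theorem halley_method_auxiliary_estimates
    {X Y : Type*} [NormedAddCommGroup X] [NormedSpace ℝ X] [CompleteSpace X]
    [NormedAddCommGroup Y] [NormedSpace ℝ Y] [CompleteSpace Y]
    (D : Set X) (hD : IsOpen D) (hDconv : Convex ℝ D)
    (F : X → Y) (F' : X → X →L[ℝ] Y) (F'' : X → X →L[ℝ] X →L[ℝ] Y)
    (hdF : ∀ x ∈ D, HasFDerivAt F (F' x) x)
    (hdF' : ∀ x ∈ D, HasFDerivAt F' (F'' x) x)
    (hcF'' : ContinuousOn F'' D)
    (x₀ : X) (hx₀ : x₀ ∈ D)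
    (e0 : X ≃L[ℝ] Y) (he0 : (e0 : X →L[ℝ] Y) = F' x₀)
    (R : ℝ) (hR : 0 < R) (hballD : ball x₀ R ⊆ D)
    (h h1 h2 : ℝ → ℝ)
    (hd1 : ∀ s ∈ Ico (0:ℝ) R, HasDerivWithinAt h (h1 s) (Ico 0 R) s)
    (hd2 : ∀ s ∈ Ico (0:ℝ) R, HasDerivWithinAt h1 (h2 s) (Ico 0 R) s)
    (hc2 : ContinuousOn h2 (Ico 0 R))
    (hA1a : 0 < h 0) (hA1b : 0 < h2 0) (hA1c : h1 0 = -1)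
    (hA2a : ConvexOn ℝ (Ico 0 R) h2) (hA2b : StrictMonoOn h2 (Ico 0 R))
    (tstar : ℝ) (htsmem : tstar ∈ Ioo 0 R) (htszero : h tstar = 0)
    (htsmin : ∀ s ∈ Ioo (0:ℝ) R, h s = 0 → tstar ≤ s) (htsder : h1 tstar < 0)
    (hmaj : ∀ x ∈ ball x₀ R, ∀ y ∈ ball x₀ R, ‖y - x‖ + ‖x - x₀‖ < R →
      ‖(ContinuousLinearMap.compL ℝ X Y X (e0.symm : Y →L[ℝ] X)).comp
          (F'' y - F'' x)‖ ≤ h2 (‖y - x‖ + ‖x - x₀‖) - h2 ‖x - x₀‖)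
    (hinit1 : ‖(e0.symm : Y →L[ℝ] X) (F x₀)‖ ≤ h 0)
    (hinit2 : ‖(ContinuousLinearMap.compL ℝ X Y X (e0.symm : Y →L[ℝ] X)).comp
        (F'' x₀)‖ ≤ h2 0)
    (t : ℕ → ℝ) (ht0 : t 0 = 0)
    (hrec : ∀ k, t (k + 1) =
      t k - (1 / (1 - h (t k) * h2 (t k) / (2 * (h1 (t k)) ^ 2))) * (h (t k) / h1 (t k))) :
    ∃ (x : ℕ → X) (e : ℕ → (X ≃L[ℝ] Y)) (m : ℕ → (X ≃L[ℝ] X)),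
      x 0 = x₀ ∧
      ∀ k,
        ((e k : X →L[ℝ] Y) = F' (x k)) ∧
        ((m k : X →L[ℝ] X) = ContinuousLinearMap.id ℝ X -
          (2⁻¹ : ℝ) • (((e k).symm : Y →L[ℝ] X).comp
            ((F'' (x k)) ((e k).symm (F (x k)))))) ∧
        (x (k + 1) = x k - (m k).symm ((e k).symm (F (x k)))) ∧
        (‖((e k).symm : Y →L[ℝ] X).comp (F' x₀)‖ ≤ -1 / h1 ‖x k - x₀‖ ∧
          -1 / h1 ‖x k - x₀‖ ≤ -1 / h1 (t k)) ∧
        (‖(ContinuousLinearMap.compL ℝ X Y X (e0.symm : Y →L[ℝ] X)).comp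
            (F'' (x k))‖ ≤ h2 (t k)) ∧
        (‖(e0.symm : Y →L[ℝ] X) (F (x k))‖ ≤ h (t k)) ∧
        (‖((m k).symm : X →L[ℝ] X)‖ ≤
          1 / (1 - h (t k) * h2 (t k) / (2 * (h1 (t k)) ^ 2))) ∧
        (‖x (k + 1) - x k‖ ≤ t (k + 1) - t k) := by
  have hts0 := htsmem.1
  have htsR := htsmem.2
  -- scalar facts
  have h2mono : MonotoneOn h2 (Ico 0 R) := hA2b.monotoneOn
  have h2pos : ∀ s ∈ Ico (0:ℝ) R, 0 < h2 s := fun s hs =>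
    lt_of_lt_of_le hA1b (h2mono ⟨le_rfl, hR⟩ hs hs.1)
  have hline : ∀ a s : ℝ, 0 ≤ a → 0 ≤ s → a + s < R → ∀ τ ∈ Icc (0:ℝ) 1, a + τ * s ∈ Ico 0 R := by
    intro a s ha hs has τ hτ
    have := mul_nonneg hτ.1 hs
    have := mul_le_mul_of_nonneg_right hτ.2 hs
    exact ⟨by linarith, by linarith⟩
  have hcomp : ∀ g g' : ℝ → ℝ, (∀ s ∈ Ico (0:ℝ) R, HasDerivWithinAt g (g' s) (Ico 0 R) s) →
      ∀ a s : ℝ, 0 ≤ a → 0 ≤ s → a + s < R → ∀ τ ∈ Icc (0:ℝ) 1,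
      HasDerivWithinAt (fun τ => g (a + τ * s)) (g' (a + τ * s) * s) (Icc 0 1) τ := by
    intro g g' hg a s ha hs has τ hτ
    have hin : HasDerivWithinAt (fun τ : ℝ => a + τ * s) s (Icc 0 1) τ := by
      simpa using (((hasDerivAt_id τ).mul_const s).const_add a).hasDerivWithinAt
    exact HasDerivWithinAt.comp τ (hg _ (hline a s ha hs has τ hτ)) hin
      (fun τ hτ => hline a s ha hs has τ hτ)
  have h1mono : StrictMonoOn h1 (Ico 0 R) := by
    apply strictMonoOn_of_hasDerivWithinAt_pos (convex_Ico 0 R)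
      (fun s hs => (hd2 s hs).continuousWithinAt) (f' := h2)
    · intro s hs
      exact (hd2 s (interior_subset hs)).mono interior_subset
    · intro s hs
      exact h2pos s (interior_subset hs)
  have h1neg : ∀ s, 0 ≤ s → s ≤ tstar → h1 s < 0 := fun s hs hs' =>
    lt_of_le_of_lt (h1mono.monotoneOn ⟨hs, by linarith⟩ ⟨hts0.le, htsR⟩ hs') htsder
  have hpos : ∀ s, 0 ≤ s → s < tstar → 0 < h s := by
    intro s hs hs'
    by_contra hcon
    push Not at hcon
    have hcont : ContinuousOn h (Icc 0 s) := fun r hr =>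
      ((hd1 r ⟨hr.1, by linarith [hr.2]⟩).continuousWithinAt).mono
        (fun q hq => ⟨hq.1, by linarith [hq.2]⟩)
    obtain ⟨r, hr, hr0⟩ := intermediate_value_Icc' hs hcont ⟨hcon, hA1a.le⟩
    have hrne : r ≠ 0 := by rintro rfl; linarith
    have := htsmin r ⟨lt_of_le_of_ne hr.1 hrne.symm, by linarith [hr.2]⟩ hr0
    linarith [hr.2]
  have hquad : ∀ s, 0 ≤ s → s < tstar →
      h s + h1 s * (tstar - s) + h2 s / 2 * (tstar - s) ^ 2 ≤ 0 := by
    intro s hs hs'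
    set σ := tstar - s with hσ
    have hσ0 : 0 ≤ σ := by linarith
    have hsR : s + σ < R := by linarith
    have A1 := hal_L1 (fun _ => (0:ℝ)) (fun _ => 0)
      (fun τ => (h1 (s + τ * σ) - h1 s - τ * (h2 s * σ)) * σ)
      (fun τ => (h2 (s + τ * σ) * σ - h2 s * σ) * σ)
      (fun τ _ => hasDerivWithinAt_const _ _ _)
      (fun τ hτ => by
        have := (((hcomp h1 h2 hd2 s σ hs hσ0 hsR τ hτ).sub_const (h1 s)).fun_sub
          (((hasDerivAt_id τ).mul_const (h2 s * σ)).hasDerivWithinAt)).mul_const σ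
        simpa using this)
      (by simp)
      (fun τ hτ => by
        have := h2mono ⟨hs, by linarith⟩ (hline s σ hs hσ0 hsR τ hτ)
          (by have := mul_nonneg hτ.1 hσ0; linarith)
        have := mul_nonneg (sub_nonneg.2 this) (mul_nonneg hσ0 hσ0)
        simp only [norm_zero]; nlinarith)
    have A2 := hal_L1 (fun _ => (0:ℝ)) (fun _ => 0)
      (fun τ => h (s + τ * σ) - h s - τ * (h1 s * σ) - τ ^ 2 * (h2 s * σ ^ 2 / 2))
      (fun τ => h1 (s + τ * σ) * σ - h1 s * σ - (2 * τ) * (h2 s * σ ^ 2 / 2))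
      (fun τ _ => hasDerivWithinAt_const _ _ _)
      (fun τ hτ => by
        have := (((hcomp h h1 hd1 s σ hs hσ0 hsR τ hτ).sub_const (h s)).fun_sub
          (((hasDerivAt_id τ).mul_const (h1 s * σ)).hasDerivWithinAt)).fun_sub
          (((hasDerivAt_pow 2 τ).mul_const (h2 s * σ ^ 2 / 2)).hasDerivWithinAt)
        simpa using this)
      (by simp)
      (fun τ hτ => by
        have := A1 τ hτ
        simp only [norm_zero] at this ⊢; linarith)
    have A3 := A2 1 ⟨zero_le_one, le_rfl⟩
    have : s + 1 * σ = tstar := by linarith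
    simp only [norm_zero, this, htszero] at A3
    linarith
  have hballmem : ∀ x : X, ‖x - x₀‖ < R → x ∈ ball x₀ R := fun x hx => by
    rwa [mem_ball, dist_eq_norm]
  set E : Y →L[ℝ] X := (e0.symm : Y →L[ℝ] X) with hE
  have hx0b : x₀ ∈ ball x₀ R := mem_ball_self hR
  have hH2 : ∀ x : X, ‖x - x₀‖ < R →
      ‖(ContinuousLinearMap.compL ℝ X Y X E).comp (F'' x)‖ ≤ h2 ‖x - x₀‖ := by
    intro x hx
    have a1 := hmaj x₀ hx0b x (hballmem x hx) (by simpa using hx)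
    rw [ContinuousLinearMap.comp_sub] at a1
    simp only [sub_self, norm_zero, add_zero] at a1
    have a2 := norm_le_norm_add_norm_sub' ((ContinuousLinearMap.compL ℝ X Y X E).comp (F'' x))
      ((ContinuousLinearMap.compL ℝ X Y X E).comp (F'' x₀))
    linarith
  have hH1 : ∀ x : X, ‖x - x₀‖ < R →
      ‖ContinuousLinearMap.id ℝ X - E.comp (F' x)‖ ≤ h1 ‖x - x₀‖ + 1 := by
    intro x hx
    set r := ‖x - x₀‖ with hr
    have hin : ∀ τ ∈ Icc (0:ℝ) 1, ‖x₀ + τ • (x - x₀) - x₀‖ = τ * r := by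
      intro τ hτ
      rw [add_sub_cancel_left, norm_smul, Real.norm_of_nonneg hτ.1]
    have hin' : ∀ τ ∈ Icc (0:ℝ) 1, τ * r < R := fun τ hτ =>
      lt_of_le_of_lt (mul_le_of_le_one_left (norm_nonneg _) hτ.2) hx
    have key := hal_L1 (fun τ => ContinuousLinearMap.compL ℝ X Y X E (F' (x₀ + τ • (x - x₀)))
        - ContinuousLinearMap.id ℝ X)
      (fun τ => ContinuousLinearMap.compL ℝ X Y X E (F'' (x₀ + τ • (x - x₀)) (x - x₀)))
      (fun τ => h1 (0 + τ * r) + 1) (fun τ => h2 (0 + τ * r) * r)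
      (fun τ hτ => by
        have hc : HasDerivAt (fun τ : ℝ => x₀ + τ • (x - x₀)) (x - x₀) τ := by
          simpa using ((hasDerivAt_id τ).smul_const (x - x₀)).const_add x₀
        have hf := (hdF' (x₀ + τ • (x - x₀)) (hballD (hballmem _
          (by rw [hin τ hτ]; exact hin' τ hτ)))).comp_hasDerivAt τ hc
        have := ((ContinuousLinearMap.compL ℝ X Y X E).hasFDerivAt).comp_hasDerivAt τ hf
        exact (this.sub_const _).hasDerivWithinAt)
      (fun τ hτ => (hcomp h1 h2 hd2 0 r le_rfl (norm_nonneg _) (by linarith) τ hτ).add_const 1)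
      (by
        have : E.comp (F' x₀) = ContinuousLinearMap.id ℝ X := by
          rw [← he0]; ext v; simp [hE]
        simp [hA1c, this])
      (fun τ hτ => by
        have a1 := hH2 (x₀ + τ • (x - x₀)) (by rw [hin τ hτ]; exact hin' τ hτ)
        rw [hin τ hτ] at a1
        rw [zero_add]
        exact ContinuousLinearMap.le_of_opNorm_le _ a1 (x - x₀))
    have := key 1 ⟨zero_le_one, le_rfl⟩
    simp only [one_smul, add_sub_cancel, one_mul, zero_add] at this
    rw [norm_sub_rev]
    exact this
  -- the remainder estimate
  have hrem : ∀ (x d : X) (τ s : ℝ), ‖x - x₀‖ ≤ τ → ‖d‖ ≤ s → τ + s < R →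
      ‖E (F (x + d)) - E (F x) - E (F' x d) - (2⁻¹ : ℝ) • E (F'' x d d)‖ ≤
        h (τ + s) - h τ - h1 τ * s - h2 τ * s ^ 2 / 2 := by
    intro x d T s hxT hds hTs
    have hT0 : 0 ≤ T := (norm_nonneg _).trans hxT
    have hs0 : 0 ≤ s := (norm_nonneg _).trans hds
    have hmem : ∀ τ ∈ Icc (0:ℝ) 1, ‖x + τ • d - x₀‖ < R := by
      intro τ hτ
      have : x + τ • d - x₀ = (x - x₀) + τ • d := by abel
      rw [this]
      refine lt_of_le_of_lt (norm_add_le _ _) ?_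
      rw [norm_smul, Real.norm_of_nonneg hτ.1]
      have := mul_le_of_le_one_left (norm_nonneg d) hτ.2
      linarith
    have hc : ∀ τ : ℝ, HasDerivAt (fun τ : ℝ => x + τ • d) d τ := fun τ => by
      simpa using ((hasDerivAt_id τ).smul_const d).const_add x
    have A1 := hal_L1
      (fun τ => E (F' (x + τ • d) d) - E (F' x d) - τ • E (F'' x d d))
      (fun τ => E (F'' (x + τ • d) d d) - E (F'' x d d))
      (fun τ => (h1 (T + τ * s) - h1 T - τ * (h2 T * s)) * s)
      (fun τ => (h2 (T + τ * s) * s - h2 T * s) * s)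
      (fun τ hτ => by
        have hf := (hdF' (x + τ • d) (hballD (hballmem _ (hmem τ hτ)))).comp_hasDerivAt τ (hc τ)
        have hf2 : HasDerivAt (fun τ : ℝ => F' (x + τ • d) d) (F'' (x + τ • d) d d) τ := by
          simpa using hf.clm_apply (hasDerivAt_const τ d)
        have hf3 := (E.hasFDerivAt).comp_hasDerivAt τ hf2
        have := (hf3.sub_const (E (F' x d))).fun_sub ((hasDerivAt_id τ).smul_const (E (F'' x d d)))
        simpa using this.hasDerivWithinAt)
      (fun τ hτ => by
        have := (((hcomp h1 h2 hd2 T s hT0 hs0 hTs τ hτ).sub_const (h1 T)).fun_sub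
          (((hasDerivAt_id τ).mul_const (h2 T * s)).hasDerivWithinAt)).mul_const s
        simpa using this)
      (by simp)
      (fun τ hτ => by
        have hn : ‖x + τ • d - x‖ = τ * ‖d‖ := by
          rw [add_sub_cancel_left, norm_smul, Real.norm_of_nonneg hτ.1]
        have hd1' := mul_le_of_le_one_left (norm_nonneg d) hτ.2
        have hd0 := mul_nonneg hτ.1 (norm_nonneg d)
        have a1 := hmaj x (hballmem x (by linarith)) (x + τ • d) (hballmem _ (hmem τ hτ))
          (by rw [hn]; linarith)
        rw [hn] at a1
        have a2 := hal_conv R h2 hA2a ‖x - x₀‖ T (τ * ‖d‖) (norm_nonneg _) hxT hd0 (by linarith)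
        have a3 : τ * ‖d‖ ≤ τ * s := mul_le_mul_of_nonneg_left hds hτ.1
        have a4 := h2mono (a := τ * ‖d‖ + T) (b := T + τ * s) ⟨by linarith, by linarith⟩
          (hline T s hT0 hs0 hTs τ hτ) (by linarith)
        have a5 : ‖(ContinuousLinearMap.compL ℝ X Y X E).comp (F'' (x + τ • d) - F'' x)‖ ≤
          h2 (T + τ * s) - h2 T := by linarith
        have a6 : 0 ≤ h2 (T + τ * s) - h2 T := (norm_nonneg _).trans a5
        have a7 := ContinuousLinearMap.le_of_opNorm_le _ (ContinuousLinearMap.le_of_opNorm_le _ a5 d) d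
        have e1 : ((ContinuousLinearMap.compL ℝ X Y X E).comp (F'' (x + τ • d) - F'' x)) d d
          = E (F'' (x + τ • d) d d) - E (F'' x d d) := by simp
        rw [e1] at a7
        have a8 : (h2 (T + τ * s) - h2 T) * ‖d‖ * ‖d‖ ≤ (h2 (T + τ * s) - h2 T) * s * s := by
          gcongr
        linarith)
    have A2 := hal_L1
      (fun τ => E (F (x + τ • d)) - E (F x) - τ • E (F' x d) - τ ^ 2 • (2⁻¹ : ℝ) • E (F'' x d d))
      (fun τ => E (F' (x + τ • d) d) - E (F' x d) - (2 * τ) • (2⁻¹ : ℝ) • E (F'' x d d))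
      (fun τ => h (T + τ * s) - h T - τ * (h1 T * s) - τ ^ 2 * (h2 T * s ^ 2 / 2))
      (fun τ => h1 (T + τ * s) * s - h1 T * s - (2 * τ) * (h2 T * s ^ 2 / 2))
      (fun τ hτ => by
        have hf := (hdF (x + τ • d) (hballD (hballmem _ (hmem τ hτ)))).comp_hasDerivAt τ (hc τ)
        have hf3 := (E.hasFDerivAt).comp_hasDerivAt τ hf
        have := ((hf3.sub_const (E (F x))).fun_sub ((hasDerivAt_id τ).smul_const (E (F' x d)))).fun_sub
          ((hasDerivAt_pow 2 τ).smul_const ((2⁻¹ : ℝ) • E (F'' x d d)))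
        have := this.hasDerivWithinAt (s := Icc 0 1)
        simp only [one_smul, Nat.cast_ofNat, Nat.add_one_sub_one, pow_one] at this
        exact this)
      (fun τ hτ => by
        have := (((hcomp h h1 hd1 T s hT0 hs0 hTs τ hτ).sub_const (h T)).fun_sub
          (((hasDerivAt_id τ).mul_const (h1 T * s)).hasDerivWithinAt)).fun_sub
          (((hasDerivAt_pow 2 τ).mul_const (h2 T * s ^ 2 / 2)).hasDerivWithinAt)
        simpa using this)
      (by simp)
      (fun τ hτ => by
        have a1 := A1 τ hτ
        have : (2 * τ) • (2⁻¹ : ℝ) • E (F'' x d d) = τ • E (F'' x d d) := by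
          rw [smul_smul]; congr 1; ring
        simp only [this]
        linarith)
    have A3 := A2 1 ⟨zero_le_one, le_rfl⟩
    simp only [one_smul, one_mul, one_pow] at A3
    linarith
  -- scalar sequence
  have htk : ∀ k, 0 ≤ t k ∧ t k < tstar := by
    intro k
    induction k with
    | zero => rw [ht0]; exact ⟨le_rfl, hts0⟩
    | succ k ih =>
      obtain ⟨p, q⟩ := ih
      obtain ⟨_, b1, b2, _⟩ := hal_quad (h (t k)) (h1 (t k)) (h2 (t k)) (tstar - t k) (t (k+1) - t k)
        (hpos _ p q) (h1neg _ p q.le) (h2pos _ ⟨p, by linarith⟩) (by linarith)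
        (hquad _ p q) (by rw [hrec k]; ring)
      exact ⟨by linarith, by linarith⟩
  -- one step
  have step : ∀ (k : ℕ) (x : X), (‖x - x₀‖ ≤ t k ∧ ‖E (F x)‖ ≤ h (t k)) →
      ∃ (e : X ≃L[ℝ] Y) (m : X ≃L[ℝ] X) (x' : X),
        (((e : X →L[ℝ] Y) = F' x) ∧
        ((m : X →L[ℝ] X) = ContinuousLinearMap.id ℝ X -
          (2⁻¹ : ℝ) • ((e.symm : Y →L[ℝ] X).comp ((F'' x) (e.symm (F x))))) ∧
        (x' = x - m.symm (e.symm (F x))) ∧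
        (‖(e.symm : Y →L[ℝ] X).comp (F' x₀)‖ ≤ -1 / h1 ‖x - x₀‖ ∧
          -1 / h1 ‖x - x₀‖ ≤ -1 / h1 (t k)) ∧
        (‖(ContinuousLinearMap.compL ℝ X Y X E).comp (F'' x)‖ ≤ h2 (t k)) ∧
        (‖E (F x)‖ ≤ h (t k)) ∧
        (‖(m.symm : X →L[ℝ] X)‖ ≤
          1 / (1 - h (t k) * h2 (t k) / (2 * (h1 (t k)) ^ 2))) ∧
        (‖x' - x‖ ≤ t (k + 1) - t k)) ∧
        (‖x' - x₀‖ ≤ t (k + 1) ∧ ‖E (F x')‖ ≤ h (t (k + 1))) := by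
    rintro k x ⟨hx, hFx⟩
    obtain ⟨p, q⟩ := htk k
    obtain ⟨p', q'⟩ := htk (k + 1)
    obtain ⟨hL1, hs0, hsσ, hsid⟩ := hal_quad (h (t k)) (h1 (t k)) (h2 (t k)) (tstar - t k)
      (t (k+1) - t k)
      (hpos _ p q) (h1neg _ p q.le) (h2pos _ ⟨p, by linarith⟩) (by linarith)
      (hquad _ p q) (by rw [hrec k]; ring)
    have hrR : ‖x - x₀‖ < R := by linarith
    have hn1 := h1neg _ p q.le
    have hn2 := h1neg ‖x - x₀‖ (norm_nonneg _) (by linarith)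
    have hh1 : h1 ‖x - x₀‖ ≤ h1 (t k) :=
      h1mono.monotoneOn ⟨norm_nonneg _, hrR⟩ ⟨p, by linarith⟩ hx
    obtain ⟨u, hu, hun⟩ := hal_L2 (E.comp (F' x)) (h1 ‖x - x₀‖ + 1) (by linarith) (hH1 x hrR)
    have hdiv : 1 / (1 - (h1 ‖x - x₀‖ + 1)) = -1 / h1 ‖x - x₀‖ := by
      rw [show 1 - (h1 ‖x - x₀‖ + 1) = - h1 ‖x - x₀‖ by ring, neg_div, div_neg]
    have hle : -1 / h1 ‖x - x₀‖ ≤ -1 / h1 (t k) := by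
      rw [neg_div, neg_div, ← div_neg, ← div_neg]
      exact one_div_le_one_div_of_le (by linarith) (by linarith)
    rw [hdiv] at hun
    have hB : ‖(u.symm : X →L[ℝ] X)‖ ≤ -1 / h1 (t k) := hun.trans hle
    have hC : ‖(ContinuousLinearMap.compL ℝ X Y X E).comp (F'' x)‖ ≤ h2 (t k) :=
      (hH2 x hrR).trans (h2mono ⟨norm_nonneg _, hrR⟩ ⟨p, by linarith⟩ hx)
    have hes : ∀ y, (u.trans e0).symm y = u.symm (E y) := fun y => rfl
    have he : ∀ v, (u.trans e0) v = F' x v := by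
      intro v
      have : u v = E (F' x v) := by
        have := congrArg (fun A : X →L[ℝ] X => A v) hu
        simpa using this
      simp [this, hE]
    have hb0 : 0 ≤ -1 / h1 (t k) := (norm_nonneg _).trans hB
    have hc0 : 0 < h2 (t k) := h2pos _ ⟨p, by linarith⟩
    have ha0 := hpos _ p q
    set w := (u.trans e0).symm (F x) with hw
    have hwn : ‖w‖ ≤ -1 / h1 (t k) * h (t k) := by
      rw [hw, hes]
      exact (ContinuousLinearMap.le_of_opNorm_le (u.symm : X →L[ℝ] X) hB _).trans
        (mul_le_mul_of_nonneg_left hFx hb0)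
    set Lf : X →L[ℝ] X := (2⁻¹ : ℝ) • (((u.trans e0).symm : Y →L[ℝ] X).comp ((F'' x) w)) with hLf
    have hLn : ‖Lf‖ ≤ h (t k) * h2 (t k) / (2 * (h1 (t k)) ^ 2) := by
      have a1 : ((u.trans e0).symm : Y →L[ℝ] X).comp ((F'' x) w) =
          (u.symm : X →L[ℝ] X).comp (((ContinuousLinearMap.compL ℝ X Y X E).comp (F'' x)) w) := rfl
      rw [hLf, a1, norm_smul, Real.norm_of_nonneg (by norm_num)]
      have a2 := ContinuousLinearMap.opNorm_comp_le (u.symm : X →L[ℝ] X)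
        (((ContinuousLinearMap.compL ℝ X Y X E).comp (F'' x)) w)
      have a3 := ContinuousLinearMap.le_of_opNorm_le _ hC w
      calc _ ≤ 2⁻¹ * ((-1 / h1 (t k)) * (h2 (t k) * (-1 / h1 (t k) * h (t k)))) := by
            gcongr
            refine a2.trans ?_
            gcongr
            refine a3.trans ?_
            gcongr
        _ = _ := by field_simp
    obtain ⟨m, hm, hmn⟩ := hal_L2 (ContinuousLinearMap.id ℝ X - Lf) _ hL1 (by simpa using hLn)
    have hmd : ∀ v, m v = v - Lf v := by
      intro v
      have := congrArg (fun A : X →L[ℝ] X => A v) hm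
      simpa using this
    set d := - m.symm w with hd
    have hdn : ‖d‖ ≤ t (k + 1) - t k := by
      rw [hd, norm_neg]
      have a1 := ContinuousLinearMap.le_of_opNorm_le (m.symm : X →L[ℝ] X) hmn w
      have a2 : 0 ≤ 1 / (1 - h (t k) * h2 (t k) / (2 * (h1 (t k)) ^ 2)) := (norm_nonneg _).trans hmn
      refine a1.trans ((mul_le_mul_of_nonneg_left hwn a2).trans (le_of_eq ?_))
      rw [hrec k]; ring
    have hx'x : x - m.symm w = x + d := by rw [hd]; abel
    refine ⟨u.trans e0, m, x - m.symm w, ⟨?_, hm, rfl, ⟨?_, hle⟩, hC, hFx, hmn, ?_⟩, ?_, ?_⟩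
    · ext v; exact he v
    · refine le_trans (le_of_eq ?_) hun
      congr 1
      ext v
      simp only [ContinuousLinearMap.comp_apply, ContinuousLinearEquiv.coe_coe]
      rw [hes, ← he0]; simp [hE]
    · rw [hx'x, add_sub_cancel_left]; exact hdn
    · rw [hx'x]
      have : x + d - x₀ = (x - x₀) + d := by abel
      rw [this]
      refine (norm_add_le _ _).trans ?_
      linarith
    · rw [hx'x]
      set s := t (k + 1) - t k with hs
      have r1 := hrem x d (t k) s hx hdn (by linarith)
      rw [show t k + s = t (k + 1) by rw [hs]; ring] at r1
      -- Newton identity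
      have n1 : d - Lf d = - w := by
        rw [← hmd, hd]; simp
      have n2 : F' x w = F x := by rw [← he, hw]; simp
      have n3 : F' x (Lf d) = (2⁻¹ : ℝ) • F'' x w d := by
        rw [← he, hLf]
        simp
      have n4 : F x + F' x d = (2⁻¹ : ℝ) • F'' x w d := by
        rw [← n3, ← n2, ← map_add]
        congr 1
        rw [eq_comm, ← sub_eq_iff_eq_add', ← sub_eq_zero]
        have := sub_eq_zero.2 n1
        rw [← neg_eq_zero, ← this]; abel
      have n5 : F x + F' x d + (2⁻¹ : ℝ) • F'' x d d = (2⁻¹ : ℝ) • F'' x (Lf d) d := by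
        have : Lf d = w + d := by
          have := sub_eq_zero.2 n1
          rw [eq_comm, ← sub_eq_zero, ← this]; abel
        rw [n4, this, map_add, add_apply, smul_add]
      have n6 : E (F (x + d)) = (E (F (x + d)) - E (F x) - E (F' x d) - (2⁻¹ : ℝ) • E (F'' x d d))
          + (2⁻¹ : ℝ) • E (F'' x (Lf d) d) := by
        rw [← map_smul E (2⁻¹ : ℝ) (F'' x (Lf d) d), ← n5, map_add, map_add, map_smul]; abel
      have n7 : ‖E (F'' x (Lf d) d)‖ ≤
          h2 (t k) * (h (t k) * h2 (t k) / (2 * (h1 (t k)) ^ 2) * s) * s := by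
        have b1 := ContinuousLinearMap.le_of_opNorm_le _
          (ContinuousLinearMap.le_of_opNorm_le _ hC (Lf d)) d
        have b2 : ‖Lf d‖ ≤ h (t k) * h2 (t k) / (2 * (h1 (t k)) ^ 2) * s := by
          refine (ContinuousLinearMap.le_of_opNorm_le _ hLn d).trans ?_
          gcongr
        refine le_trans b1 ?_
        gcongr
      rw [n6]
      refine (norm_add_le _ _).trans ?_
      rw [norm_smul, Real.norm_of_nonneg (by norm_num : (0:ℝ) ≤ 2⁻¹)]
      have n8 : h (t k) + h1 (t k) * s + h2 (t k) * s ^ 2 / 2 =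
          2⁻¹ * (h2 (t k) * (h (t k) * h2 (t k) / (2 * (h1 (t k)) ^ 2) * s) * s) := by
        have hL2 : h (t k) * h2 (t k) / (2 * (h1 (t k)) ^ 2) * (2 * (h1 (t k)) ^ 2) =
            h (t k) * h2 (t k) := div_mul_cancel₀ _ (by have := hn1.ne; positivity)
        generalize h (t k) * h2 (t k) / (2 * (h1 (t k)) ^ 2) = L at *
        have k2 : h1 (t k) * (2 * L * h1 (t k)) = h1 (t k) * (h2 (t k) * (L * s - s)) := by
          linear_combination hL2 + h2 (t k) * hsid
        have k3 := mul_left_cancel₀ hn1.ne k2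
        linear_combination hsid + s / 2 * k3
      linarith
  haveI : Nonempty (X ≃L[ℝ] Y) := ⟨e0⟩
  haveI : Nonempty (X ≃L[ℝ] X) := ⟨ContinuousLinearEquiv.refl ℝ X⟩
  choose! e m nx hstep using step
  let xs : ℕ → X := fun k => Nat.rec x₀ (fun k x => nx k x) k
  have hP : ∀ k, ‖xs k - x₀‖ ≤ t k ∧ ‖E (F (xs k))‖ ≤ h (t k) := by
    intro k
    induction k with
    | zero => simpa [xs, ht0] using hinit1
    | succ k ih => exact (hstep k (xs k) ih).2
  exact ⟨xs, fun k => e k (xs k), fun k => m k (xs k), rfl, fun k => (hstep k (xs k) (hP k)).1⟩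
end

section
/- Let X, Y be Banach spaces, D ⊂ X open and convex, F : D → Y twice continuously Fréchet differentiable, and x₀ ∈ D with F'(x₀) invertible. Let h satisfy assumptions (A1)–(A3) with smallest zero t*, and be a majorizing function to F at x₀. Then the sequence (x_k) generated by Halley's method x_{k+1} = x_k − [I − L_F(x_k)]⁻¹F'(x_k)⁻¹F(x_k) with starting point x₀ is well defined (all the required inverse operators exist at each step), is contained in the open ball B(x₀,t*), and converges to a point x* in the closed ball of center x₀ and radius t* which satisfies F(x*) = 0. Moreover ‖x* − x_k‖ ≤ t* − t_k for all k, where (t_k) is the majorizing sequence t_0 = 0, t_{k+1} = t_k − (1/(1 − L_h(t_k)))·(h(t_k)/h'(t_k)). -/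
open Metric Set

lemma hal_mono {R : ℝ} {f f' : ℝ → ℝ}
    (hf : ∀ s ∈ Ico (0:ℝ) R, HasDerivWithinAt f (f' s) (Ico 0 R) s)
    {a b : ℝ} (ha : 0 ≤ a) (hab : a ≤ b) (hb : b < R)
    (hpos : ∀ s ∈ Ioo a b, 0 ≤ f' s) : f a ≤ f b := by
  have hm : MonotoneOn f (Icc a b) := by
    refine monotoneOn_of_hasDerivWithinAt_nonneg (f' := f') (convex_Icc a b) ?_ ?_ ?_
    · intro s hs
      exact ((hf s ⟨ha.trans hs.1, hs.2.trans_lt hb⟩).continuousWithinAt).mono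
        (fun u hu => ⟨ha.trans hu.1, hu.2.trans_lt hb⟩)
    · intro s hs
      rw [interior_Icc] at hs ⊢
      exact (hf s ⟨ha.trans hs.1.le, hs.2.trans hb⟩).mono
        (fun u hu => ⟨ha.trans hu.1.le, hu.2.trans hb⟩)
    · intro s hs
      rw [interior_Icc] at hs
      exact hpos s hs
  exact hm ⟨le_rfl, hab⟩ ⟨hab, le_rfl⟩ hab

lemma hal_taylor1 {R : ℝ} {h1 h2 : ℝ → ℝ}
    (hd2 : ∀ s ∈ Ico (0:ℝ) R, HasDerivWithinAt h1 (h2 s) (Ico 0 R) s)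
    (hA2b : StrictMonoOn h2 (Ico 0 R))
    {a b : ℝ} (ha : 0 ≤ a) (hab : a ≤ b) (hb : b < R) :
    h1 a + h2 a * (b - a) ≤ h1 b := by
  have := hal_mono (R := R) (f := fun s => h1 s - h2 a * (s - a)) (f' := fun s => h2 s - h2 a * 1)
    (fun s hs => (hd2 s hs).sub (((hasDerivWithinAt_id s _).sub_const a).const_mul _)) ha hab hb
    (fun s hs => by
      have := hA2b.monotoneOn ⟨ha, hab.trans_lt hb⟩ ⟨ha.trans hs.1.le, hs.2.trans hb⟩ hs.1.le
      linarith)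
  simp only [sub_self, mul_zero, sub_zero] at this
  linarith

lemma hal_taylor2 {R : ℝ} {h h1 h2 : ℝ → ℝ}
    (hd1 : ∀ s ∈ Ico (0:ℝ) R, HasDerivWithinAt h (h1 s) (Ico 0 R) s)
    (hd2 : ∀ s ∈ Ico (0:ℝ) R, HasDerivWithinAt h1 (h2 s) (Ico 0 R) s)
    (hA2b : StrictMonoOn h2 (Ico 0 R))
    {a b : ℝ} (ha : 0 ≤ a) (hab : a ≤ b) (hb : b < R) :
    h a + h1 a * (b - a) + h2 a * (b - a) ^ 2 / 2 ≤ h b := by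
  have := hal_mono (R := R) (f := fun s => h s - h1 a * (s - a) - h2 a / 2 * ((s - a) ^ 2))
    (f' := fun s => h1 s - h1 a * 1 - h2 a / 2 * (((2:ℕ):ℝ) * (s - a) ^ (2 - 1) * 1))
    (fun s hs => ((hd1 s hs).sub (((hasDerivWithinAt_id s _).sub_const a).const_mul _)).sub
      ((((hasDerivWithinAt_id s _).sub_const a).pow 2).const_mul _)) ha hab hb
    (fun s hs => by
      have := hal_taylor1 hd2 hA2b ha hs.1.le (hs.2.trans hb)
      simp only [Nat.cast_ofNat]; norm_num; linarith)
  simp only [sub_self] at this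
  norm_num at this
  linarith

lemma hal_scalar {a b c d : ℝ} (ha : 0 < a) (hb : 0 < b) (hc : 0 < c) (hd : 0 < d)
    (hq : a - b * d + c * d ^ 2 / 2 ≤ 0) :
    a * c / (2 * b ^ 2) < 1 ∧
    0 < (1 / (1 - a * c / (2 * b ^ 2))) * (a / b) ∧
    (1 / (1 - a * c / (2 * b ^ 2))) * (a / b) < d ∧
    a ≤ b * ((1 / (1 - a * c / (2 * b ^ 2))) * (a / b)) := by
  set n := a / b with hn
  have hn0 : 0 < n := by positivity
  have han : a = n * b := by rw [hn]; field_simp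
  have hnd : n < d := by
    have : n * b < d * b := by
      rw [← han]; nlinarith [mul_pos hc (pow_pos hd 2)]
    exact lt_of_mul_lt_mul_right this hb.le
  have hL : a * c / (2 * b ^ 2) = n * c / (2 * b) := by
    rw [han]; field_simp
  rw [hL]
  have hcd : c * d / 2 < b := by
    have : d * (c * d / 2) < d * b := by nlinarith
    exact lt_of_mul_lt_mul_left this hd.le
  have hL1 : n * c / (2 * b) < 1 := by
    rw [div_lt_one (by positivity)]
    nlinarith
  have hL0 : 0 < n * c / (2 * b) := by positivity
  have h1L : 0 < 1 - n * c / (2 * b) := by linarith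
  refine ⟨hL1, by positivity, ?_, ?_⟩
  · rw [one_div, ← div_eq_inv_mul, div_lt_iff₀ h1L]
    have : n * b < (d * (1 - n * c / (2 * b))) * b := by
      have e : (d * (1 - n * c / (2 * b))) * b = d * b - d * n * c / 2 := by field_simp
      rw [e, ← han]
      nlinarith [mul_pos (mul_pos hc hd) (sub_pos.2 hnd)]
    exact lt_of_mul_lt_mul_right this hb.le
  · have : n ≤ 1 / (1 - n * c / (2 * b)) * n := by
      rw [one_div, ← div_eq_inv_mul, le_div_iff₀ h1L]
      nlinarith
    nlinarith

lemma hal_inv {X : Type*} [NormedAddCommGroup X] [NormedSpace ℝ X] [CompleteSpace X]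
    (A : X →L[ℝ] X) (q : ℝ) (hq : q < 1)
    (hA : ‖ContinuousLinearMap.id ℝ X - A‖ ≤ q) :
    ∃ u : X ≃L[ℝ] X, (u : X →L[ℝ] X) = A ∧ ∀ v, (1 - q) * ‖u.symm v‖ ≤ ‖v‖ := by
  let w := Units.oneSub (ContinuousLinearMap.id ℝ X - A) (hA.trans_lt hq)
  have hw : (w : X →L[ℝ] X) = A := by
    change (1 : X →L[ℝ] X) - (ContinuousLinearMap.id ℝ X - A) = A
    ext; simp
  let u := ContinuousLinearEquiv.unitsEquiv ℝ X w
  have hu : (u : X →L[ℝ] X) = A := by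
    rw [← hw]; ext; rfl
  refine ⟨u, hu, fun v => ?_⟩
  set z := u.symm v with hz
  have hv : v = A z := by
    rw [← hu, hz]; simp
  have h1 : ‖z - A z‖ ≤ q * ‖z‖ := by
    have := (ContinuousLinearMap.id ℝ X - A).le_of_opNorm_le hA z
    simpa using this
  have h2 : ‖z‖ ≤ ‖z - A z‖ + ‖A z‖ := by
    simpa using norm_add_le (z - A z) (A z)
  rw [hv]; linarith

section
variable {X : Type*} [NormedAddCommGroup X] [NormedSpace ℝ X]

/-- convexity: increments increase. -/
lemma hal_incr {R : ℝ} {g : ℝ → ℝ} (hg : ConvexOn ℝ (Ico 0 R) g) (hm : StrictMonoOn g (Ico 0 R))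
    {a b p q : ℝ} (ha : 0 ≤ a) (hab : a ≤ b) (hp : 0 ≤ p) (hpq : p ≤ q) (hb : b + q < R) :
    g (p + a) - g a ≤ g (b + q) - g b := by
  have h1 : g (b + p) ≤ g (b + q) :=
    hm.monotoneOn ⟨by linarith, by linarith⟩ ⟨by linarith, by linarith⟩ (by linarith)
  have h2 : g (p + a) + g b ≤ g (b + p) + g a := by
    rcases eq_or_lt_of_le (show a ≤ b + p by linarith) with he | hl
    · have : p = 0 := by linarith
      have : a = b := by linarith
      subst this; simp [‹p = 0›]
    · have hA : a ∈ Ico (0:ℝ) R := ⟨by linarith, by linarith⟩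
      have hB : b + p ∈ Ico (0:ℝ) R := ⟨by linarith, by linarith⟩
      have hD : 0 < b + p - a := by linarith
      have k1 := hg.2 hA hB
        (show (0:ℝ) ≤ (b - a) / (b + p - a) from div_nonneg (by linarith) hD.le)
        (show (0:ℝ) ≤ p / (b + p - a) from div_nonneg (by linarith) hD.le)
        (by rw [← add_div]; rw [div_eq_one_iff_eq hD.ne']; ring)
      have k2 := hg.2 hA hB
        (show (0:ℝ) ≤ p / (b + p - a) from div_nonneg (by linarith) hD.le)
        (show (0:ℝ) ≤ (b - a) / (b + p - a) from div_nonneg (by linarith) hD.le)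
        (by rw [← add_div]; rw [div_eq_one_iff_eq hD.ne']; ring)
      have e1 : ((b - a) / (b + p - a)) • a + (p / (b + p - a)) • (b + p) = p + a := by
        simp only [smul_eq_mul]; field_simp; ring
      have e2 : (p / (b + p - a)) • a + ((b - a) / (b + p - a)) • (b + p) = b := by
        simp only [smul_eq_mul]; field_simp; ring
      rw [e1] at k1; rw [e2] at k2
      have e3 : (b - a) / (b + p - a) + p / (b + p - a) = 1 := by
        rw [← add_div]; rw [div_eq_one_iff_eq hD.ne']; ring
      simp only [smul_eq_mul] at k1 k2
      have e4 : (b - a) / (b + p - a) * g a + p / (b + p - a) * g (b + p) +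
        (p / (b + p - a) * g a + (b - a) / (b + p - a) * g (b + p)) = g (b + p) + g a := by
        linear_combination (g a + g (b + p)) * e3
      linarith
  linarith

lemma hal_path {R : ℝ} {f f' : ℝ → ℝ}
    (hf : ∀ s ∈ Ico (0:ℝ) R, HasDerivWithinAt f (f' s) (Ico 0 R) s)
    {a s : ℝ} (ha : 0 ≤ a) (hs : 0 ≤ s) (has : a + s < R) :
    ∀ τ ∈ Icc (0:ℝ) 1, HasDerivWithinAt (fun τ => f (a + τ * s)) (f' (a + τ * s) * s) (Icc 0 1) τ := by
  intro τ hτ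
  have h0 : ∀ τ ∈ Icc (0:ℝ) 1, a + τ * s ∈ Ico (0:ℝ) R := by
    intro τ hτ
    exact ⟨by have := mul_nonneg hτ.1 hs; linarith, by nlinarith [hτ.1, hτ.2]⟩
  have hl : HasDerivWithinAt (fun τ : ℝ => a + τ * s) s (Icc 0 1) τ := by
    simpa using ((hasDerivWithinAt_id τ (Icc (0:ℝ) 1)).mul_const s).const_add a
  exact (hf _ (h0 τ hτ)).comp τ hl h0

lemma hal_mvt {E : Type*} [NormedAddCommGroup E] [NormedSpace ℝ E]
    {f f' : ℝ → E} {B B' : ℝ → ℝ}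
    (hf : ∀ τ ∈ Icc (0:ℝ) 1, HasDerivAt f (f' τ) τ)
    (hB : ∀ τ ∈ Icc (0:ℝ) 1, HasDerivWithinAt B (B' τ) (Icc 0 1) τ)
    (h0 : ‖f 0‖ ≤ B 0) (hb : ∀ τ ∈ Icc (0:ℝ) 1, ‖f' τ‖ ≤ B' τ) :
    ∀ τ ∈ Icc (0:ℝ) 1, ‖f τ‖ ≤ B τ := by
  intro τ hτ
  refine image_norm_le_of_norm_deriv_right_le_deriv_boundary' (f' := f') (B' := B')
    (fun s hs => (hf s hs).continuousAt.continuousWithinAt)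
    (fun s hs => (hf s ⟨hs.1, hs.2.le⟩).hasDerivWithinAt) h0
    (fun s hs => (hB s hs).continuousWithinAt) ?_ (fun s hs => hb s ⟨hs.1, hs.2.le⟩) hτ
  intro s hs
  exact (hB s ⟨hs.1, hs.2.le⟩).mono_of_mem_nhdsWithin (by
    exact Filter.mem_of_superset (Icc_mem_nhdsGE hs.2) (Icc_subset_Icc_left hs.1))

variable (G : X → X) (G' : X → X →L[ℝ] X) (G'' : X → X →L[ℝ] X →L[ℝ] X)

lemma hal_line {E : Type*} [NormedAddCommGroup E] [NormedSpace ℝ E] {f : X → E} {L : X →L[ℝ] E}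
    {x δ : X} {τ : ℝ} (hf : HasFDerivAt f L (x + τ • δ)) :
    HasDerivAt (fun τ : ℝ => f (x + τ • δ)) (L δ) τ := by
  have : HasDerivAt (fun τ : ℝ => x + τ • δ) δ τ := by
    simpa using ((hasDerivAt_id τ).smul_const δ).const_add x
  exact hf.comp_hasDerivAt τ this

lemma hal_Gpp {x₀ : X} {R : ℝ} {h2 : ℝ → ℝ} (hR : 0 < R)
    (hmaj : ∀ x ∈ ball x₀ R, ∀ y ∈ ball x₀ R, ‖y - x‖ + ‖x - x₀‖ < R →
      ‖G'' y - G'' x‖ ≤ h2 (‖y - x‖ + ‖x - x₀‖) - h2 ‖x - x₀‖)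
    (hinit2 : ‖G'' x₀‖ ≤ h2 0) {x : X} (hx : ‖x - x₀‖ < R) : ‖G'' x‖ ≤ h2 ‖x - x₀‖ := by
  have := hmaj x₀ (mem_ball_self hR) x (by rwa [mem_ball, dist_eq_norm]) (by simpa using hx)
  simp only [sub_self, norm_zero, add_zero] at this
  have h3 : ‖G'' x‖ ≤ ‖G'' x - G'' x₀‖ + ‖G'' x₀‖ := by
    simpa using norm_add_le (G'' x - G'' x₀) (G'' x₀)
  linarith

lemma hal_Gp {x₀ : X} {R : ℝ} {h1 h2 : ℝ → ℝ} (hR : 0 < R)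
    (hdG' : ∀ x ∈ ball x₀ R, HasFDerivAt G' (G'' x) x)
    (hd2 : ∀ s ∈ Ico (0:ℝ) R, HasDerivWithinAt h1 (h2 s) (Ico 0 R) s)
    (hA1c : h1 0 = -1) (hG0 : G' x₀ = ContinuousLinearMap.id ℝ X)
    (hGpp : ∀ x, ‖x - x₀‖ < R → ‖G'' x‖ ≤ h2 ‖x - x₀‖)
    {x : X} (hx : ‖x - x₀‖ < R) :
    ‖ContinuousLinearMap.id ℝ X - G' x‖ ≤ 1 + h1 ‖x - x₀‖ := by
  set r := ‖x - x₀‖ with hr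
  have hr0 : 0 ≤ r := norm_nonneg _
  have hn : ∀ τ ∈ Icc (0:ℝ) 1, ‖x₀ + τ • (x - x₀) - x₀‖ = 0 + τ * r := by
    intro τ hτ
    rw [add_sub_cancel_left, norm_smul, Real.norm_of_nonneg hτ.1, zero_add]
  have hlt : ∀ τ ∈ Icc (0:ℝ) 1, ‖x₀ + τ • (x - x₀) - x₀‖ < R := by
    intro τ hτ
    rw [hn τ hτ]; nlinarith [hτ.1, hτ.2]
  have := hal_mvt (f := fun τ => G' (x₀ + τ • (x - x₀)) - ContinuousLinearMap.id ℝ X)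
    (f' := fun τ => G'' (x₀ + τ • (x - x₀)) (x - x₀))
    (B := fun τ => h1 (0 + τ * r) + 1) (B' := fun τ => h2 (0 + τ * r) * r)
    (fun τ hτ => (hal_line (hdG' _ (by rw [mem_ball, dist_eq_norm]; exact hlt τ hτ))).sub_const _)
    (fun τ hτ => (hal_path hd2 le_rfl hr0 (by linarith) τ hτ).add_const 1)
    (by simp [hG0, hA1c])
    (fun τ hτ => by
      have h1 := hGpp _ (hlt τ hτ)
      rw [hn τ hτ] at h1
      exact (G'' (x₀ + τ • (x - x₀))).le_of_opNorm_le h1 _) 1 ⟨zero_le_one, le_rfl⟩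
  simp only [one_smul, add_sub_cancel, one_mul, zero_add] at this
  rw [norm_sub_rev]; linarith

lemma hal_rem {x₀ : X} {R : ℝ} {h h1 h2 : ℝ → ℝ}
    (hdG : ∀ x ∈ ball x₀ R, HasFDerivAt G (G' x) x)
    (hdG' : ∀ x ∈ ball x₀ R, HasFDerivAt G' (G'' x) x)
    (hd1 : ∀ s ∈ Ico (0:ℝ) R, HasDerivWithinAt h (h1 s) (Ico 0 R) s)
    (hd2 : ∀ s ∈ Ico (0:ℝ) R, HasDerivWithinAt h1 (h2 s) (Ico 0 R) s)
    (hA2a : ConvexOn ℝ (Ico 0 R) h2) (hA2b : StrictMonoOn h2 (Ico 0 R))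
    (hmaj : ∀ x ∈ ball x₀ R, ∀ y ∈ ball x₀ R, ‖y - x‖ + ‖x - x₀‖ < R →
      ‖G'' y - G'' x‖ ≤ h2 (‖y - x‖ + ‖x - x₀‖) - h2 ‖x - x₀‖)
    {x δ : X} {a s : ℝ} (hx : ‖x - x₀‖ ≤ a) (hδ : ‖δ‖ ≤ s) (has : a + s < R) :
    ‖G (x + δ) - G x - G' x δ - (1/2 : ℝ) • G'' x δ δ‖
      ≤ h (a + s) - h a - h1 a * s - h2 a * s ^ 2 / 2 := by
  have ha : 0 ≤ a := (norm_nonneg _).trans hx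
  have hs : 0 ≤ s := (norm_nonneg _).trans hδ
  have hxb : x ∈ ball x₀ R := by rw [mem_ball, dist_eq_norm]; linarith
  have hτδ : ∀ τ ∈ Icc (0:ℝ) 1, ‖x + τ • δ - x‖ ≤ τ * s ∧ τ * s ≤ s := by
    intro τ hτ
    rw [add_sub_cancel_left, norm_smul, Real.norm_of_nonneg hτ.1]
    exact ⟨mul_le_mul_of_nonneg_left hδ hτ.1, by nlinarith [hτ.2]⟩
  have hb : ∀ τ ∈ Icc (0:ℝ) 1, x + τ • δ ∈ ball x₀ R := by
    intro τ hτ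
    rw [mem_ball, dist_eq_norm]
    have := norm_add_le (x + τ • δ - x) (x - x₀)
    rw [sub_add_sub_cancel] at this
    have := hτδ τ hτ
    linarith
  have hp1 := hal_path hd1 ha hs has
  have hp2 := hal_path hd2 ha hs has
  have step1 := hal_mvt (f := fun τ => G' (x + τ • δ) δ - G' x δ - τ • G'' x δ δ)
    (f' := fun τ => G'' (x + τ • δ) δ δ - (1:ℝ) • G'' x δ δ)
    (B := fun τ => h1 (a + τ * s) * s - h1 a * s - τ * (h2 a * s ^ 2))
    (B' := fun τ => h2 (a + τ * s) * s * s - 1 * (h2 a * s ^ 2))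
    (fun τ hτ => by
      have k := (hal_line (hdG' _ (hb τ hτ))).clm_apply (hasDerivAt_const τ δ)
      simp only [map_zero, add_zero] at k
      exact (k.sub_const _).sub ((hasDerivAt_id τ).smul_const _))
    (fun τ hτ => ((((hp2 τ hτ).mul_const s).sub_const _).sub
      ((hasDerivWithinAt_id τ _).mul_const _)))
    (by simp)
    (fun τ hτ => by
      have k := hmaj x hxb (x + τ • δ) (hb τ hτ) (by have := hτδ τ hτ; linarith)
      have k2 := hal_incr hA2a hA2b (norm_nonneg (x - x₀)) hx (norm_nonneg (x + τ • δ - x))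
        (hτδ τ hτ).1 (by have := hτδ τ hτ; linarith)
      have k3 := ContinuousLinearMap.le_of_opNorm₂_le_of_le _ (k.trans k2) hδ hδ
      simp only [sub_apply] at k3
      rw [one_smul]
      refine k3.trans (le_of_eq (by ring)))
  have step2 := hal_mvt (f := fun τ => G (x + τ • δ) - G x - τ • G' x δ - (τ ^ 2 / 2) • G'' x δ δ)
    (f' := fun τ => G' (x + τ • δ) δ - (1:ℝ) • G' x δ - τ • G'' x δ δ)
    (B := fun τ => h (a + τ * s) - h a - τ * (h1 a * s) - τ ^ 2 / 2 * (h2 a * s ^ 2))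
    (B' := fun τ => h1 (a + τ * s) * s - 1 * (h1 a * s) - τ * (h2 a * s ^ 2))
    (fun τ hτ => by
      have k2 : HasDerivAt (fun τ : ℝ => τ ^ 2 / 2) τ τ := by
        have := (hasDerivAt_pow 2 τ).div_const 2
        simpa using this
      exact (((hal_line (hdG _ (hb τ hτ))).sub_const _).sub
        ((hasDerivAt_id τ).smul_const _)).sub (k2.smul_const _))
    (fun τ hτ => by
      have k2 : HasDerivAt (fun τ : ℝ => τ ^ 2 / 2) τ τ := by
        have := (hasDerivAt_pow 2 τ).div_const 2
        simpa using this
      exact (((hp1 τ hτ).sub_const _).sub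
        ((hasDerivWithinAt_id τ _).mul_const _)).sub (k2.hasDerivWithinAt.mul_const _))
    (by simp)
    (fun τ hτ => by
      simpa using step1 τ hτ) 1 ⟨zero_le_one, le_rfl⟩
  simp only [one_smul, one_mul, one_pow] at step2
  refine step2.trans (le_of_eq (by ring))

lemma hal_step [CompleteSpace X] {x₀ : X} {R : ℝ} {h h1 h2 : ℝ → ℝ}
    (hrem : ∀ (x δ : X) (a s : ℝ), ‖x - x₀‖ ≤ a → ‖δ‖ ≤ s → a + s < R →
      ‖G (x + δ) - G x - G' x δ - (1/2 : ℝ) • G'' x δ δ‖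
      ≤ h (a + s) - h a - h1 a * s - h2 a * s ^ 2 / 2)
    {x : X} {a s : ℝ} (hGp : ‖ContinuousLinearMap.id ℝ X - G' x‖ ≤ 1 + h1 a)
    (hGpp : ‖G'' x‖ ≤ h2 a)
    (hx : ‖x - x₀‖ ≤ a) (hG : ‖G x‖ ≤ h a) (h1a : h1 a < 0) (h2a : 0 < h2 a) (hha : 0 < h a)
    (hL : h a * h2 a / (2 * (h1 a) ^ 2) < 1)
    (hs : s = - ((1 / (1 - h a * h2 a / (2 * (h1 a) ^ 2))) * (h a / h1 a)))
    (has : a + s < R) :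
    ∃ u m : X ≃L[ℝ] X, (u : X →L[ℝ] X) = G' x ∧
      (m : X →L[ℝ] X) = ContinuousLinearMap.id ℝ X -
        (2⁻¹ : ℝ) • ((u.symm : X →L[ℝ] X).comp (G'' x (u.symm (G x)))) ∧
      ‖m.symm (u.symm (G x))‖ ≤ s ∧ ‖G (x - m.symm (u.symm (G x)))‖ ≤ h (a + s) := by
  obtain ⟨b, hb⟩ : ∃ b, b = - h1 a := ⟨_, rfl⟩
  have hb0 : 0 < b := by linarith
  have hh1 : h1 a = -b := by linarith
  obtain ⟨u, hu, hui⟩ := hal_inv (G' x) _ (by linarith) hGp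
  have hui' : ∀ v, ‖u.symm v‖ ≤ ‖v‖ / b := by
    intro v
    have := hui v
    rw [le_div_iff₀ hb0]
    rw [hh1] at this
    linarith
  set N := u.symm (G x) with hN
  set n := h a / b with hn
  have hn0 : 0 < n := by positivity
  have hNn : ‖N‖ ≤ n := (hui' _).trans (by rw [hn]; gcongr)
  set q := n * h2 a / (2 * b) with hq
  have hLq : h a * h2 a / (2 * (h1 a) ^ 2) = q := by
    rw [hq, hn, hh1]; field_simp
  rw [hLq] at hL hs
  have hsn : s * (1 - q) = n := by
    rw [hs, hn, hh1]
    have : 1 - q ≠ 0 := by linarith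
    field_simp
  set Lo := (2⁻¹ : ℝ) • ((u.symm : X →L[ℝ] X).comp (G'' x N)) with hLo
  have hLob : ∀ v, ‖Lo v‖ ≤ q * ‖v‖ := by
    intro v
    have k := ContinuousLinearMap.le_of_opNorm₂_le_of_le (G'' x) hGpp hNn (le_refl ‖v‖)
    have k2 := hui' (G'' x N v)
    have : Lo v = (2⁻¹ : ℝ) • u.symm (G'' x N v) := by simp [hLo]
    rw [this, norm_smul, Real.norm_of_nonneg (by norm_num)]
    calc (2⁻¹ : ℝ) * ‖u.symm (G'' x N v)‖ ≤ 2⁻¹ * ((h2 a * n * ‖v‖) / b) := by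
          gcongr; exact k2.trans (by gcongr)
      _ = q * ‖v‖ := by rw [hq]; field_simp
  have hq0 : 0 ≤ q := by positivity
  obtain ⟨m, hm, hmi⟩ := hal_inv (ContinuousLinearMap.id ℝ X - Lo) q hL (by
    rw [sub_sub_cancel]
    exact ContinuousLinearMap.opNorm_le_bound _ hq0 hLob)
  set d := m.symm N with hd
  have hds : ‖d‖ ≤ s := by
    have := hmi N
    have k : (1 - q) * ‖d‖ ≤ (1 - q) * s := by linarith
    exact le_of_mul_le_mul_left k (by linarith)
  refine ⟨u, m, hu, hm, hds, ?_⟩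
  have hmd : d - Lo d = N := by
    have : (m : X →L[ℝ] X) d = N := by simp [hd]
    rw [hm] at this
    simpa using this
  have hGx : G' x N = G x := by
    rw [← hu, hN]; simp
  have hLd : G' x (Lo d) = (2⁻¹ : ℝ) • G'' x N d := by
    rw [← hu, hLo]; simp
  have r := hrem x (-d) a s hx (by rwa [norm_neg]) has
  rw [← sub_eq_add_neg] at r
  have hdN : ‖d - N‖ ≤ q * s := by
    have : d - N = Lo d := by rw [← hmd]; abel
    rw [this]
    exact (hLob d).trans (by gcongr)
  have k := ContinuousLinearMap.le_of_opNorm₂_le_of_le (G'' x) hGpp hdN hds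
  have key : G (x - d) = (G (x - d) - G x - G' x (-d) - (1/2 : ℝ) • G'' x (-d) (-d))
      + (1/2 : ℝ) • G'' x (d - N) d := by
    have e1 : G' x d - (2⁻¹ : ℝ) • G'' x N d = G x := by
      rw [← hLd, ← map_sub, hmd, hGx]
    rw [← e1]
    simp only [map_neg, map_sub, neg_apply, sub_apply,
      neg_neg, smul_sub, one_div]
    abel
  rw [key]
  refine (norm_add_le _ _).trans ?_
  rw [norm_smul, Real.norm_of_nonneg (by norm_num)]
  have e2 : h a - b * s + h2 a * s ^ 2 / 2 = h2 a * (q * s) * s / 2 := by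
    have e3 : h a = n * b := by rw [hn]; field_simp
    have e4 : q * b * 2 = n * h2 a := by rw [hq]; field_simp
    rw [e3, ← hsn]
    have e5 : q * b * 2 = s * (1 - q) * h2 a := by rw [hsn]; exact e4
    linear_combination (-s/2) * e5
  rw [hh1] at r
  linarith

end

/-- semilocal convergence of Halley's method: if `h` is a
majorizing function to `F` at `x₀` satisfying (A1)-(A3) with smallest zero
`tstar` of `h` in `(0,R)`, then the Halley sequence
`x_{k+1} = x_k - [I - L_F(x_k)]⁻¹ F'(x_k)⁻¹ F(x_k)` with
`L_F(x) = ½ F'(x)⁻¹F''(x)F'(x)⁻¹F(x)` starting at `x₀` is well defined (the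
invertibility of `F'(x_k)` and of `I - L_F(x_k)` being witnessed by continuous
linear equivalences `e k` and `m k`), stays in `B(x₀,t*)`, and converges to a
zero `xs` of `F` in the closed ball of radius `t*`, with
`‖xs - x_k‖ ≤ t* - t_k` where `(t_k)` is the majorizing sequence. -/
theorem halley_method_semilocal_convergence
    {X Y : Type*} [NormedAddCommGroup X] [NormedSpace ℝ X] [CompleteSpace X]
    [NormedAddCommGroup Y] [NormedSpace ℝ Y] [CompleteSpace Y]
    (D : Set X) (hD : IsOpen D) (hDconv : Convex ℝ D)
    (F : X → Y) (F' : X → X →L[ℝ] Y) (F'' : X → X →L[ℝ] X →L[ℝ] Y)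
    (hdF : ∀ x ∈ D, HasFDerivAt F (F' x) x)
    (hdF' : ∀ x ∈ D, HasFDerivAt F' (F'' x) x)
    (hcF'' : ContinuousOn F'' D)
    (x₀ : X) (hx₀ : x₀ ∈ D)
    (e0 : X ≃L[ℝ] Y) (he0 : (e0 : X →L[ℝ] Y) = F' x₀)
    (R : ℝ) (hR : 0 < R) (hballD : ball x₀ R ⊆ D)
    (h h1 h2 : ℝ → ℝ)
    (hd1 : ∀ s ∈ Ico (0:ℝ) R, HasDerivWithinAt h (h1 s) (Ico 0 R) s)
    (hd2 : ∀ s ∈ Ico (0:ℝ) R, HasDerivWithinAt h1 (h2 s) (Ico 0 R) s)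
    (hc2 : ContinuousOn h2 (Ico 0 R))
    (hA1a : 0 < h 0) (hA1b : 0 < h2 0) (hA1c : h1 0 = -1)
    (hA2a : ConvexOn ℝ (Ico 0 R) h2) (hA2b : StrictMonoOn h2 (Ico 0 R))
    (tstar : ℝ) (htsmem : tstar ∈ Ioo 0 R) (htszero : h tstar = 0)
    (htsmin : ∀ s ∈ Ioo (0:ℝ) R, h s = 0 → tstar ≤ s) (htsder : h1 tstar < 0)
    (hmaj : ∀ x ∈ ball x₀ R, ∀ y ∈ ball x₀ R, ‖y - x‖ + ‖x - x₀‖ < R →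
      ‖(ContinuousLinearMap.compL ℝ X Y X (e0.symm : Y →L[ℝ] X)).comp
          (F'' y - F'' x)‖ ≤ h2 (‖y - x‖ + ‖x - x₀‖) - h2 ‖x - x₀‖)
    (hinit1 : ‖(e0.symm : Y →L[ℝ] X) (F x₀)‖ ≤ h 0)
    (hinit2 : ‖(ContinuousLinearMap.compL ℝ X Y X (e0.symm : Y →L[ℝ] X)).comp
        (F'' x₀)‖ ≤ h2 0)
    (t : ℕ → ℝ) (ht0 : t 0 = 0)
    (hrec : ∀ k, t (k + 1) =
      t k - (1 / (1 - h (t k) * h2 (t k) / (2 * (h1 (t k)) ^ 2))) * (h (t k) / h1 (t k))) :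
    ∃ (x : ℕ → X) (e : ℕ → (X ≃L[ℝ] Y)) (m : ℕ → (X ≃L[ℝ] X)),
      x 0 = x₀ ∧
      (∀ k,
        ((e k : X →L[ℝ] Y) = F' (x k)) ∧
        ((m k : X →L[ℝ] X) = ContinuousLinearMap.id ℝ X -
          (2⁻¹ : ℝ) • (((e k).symm : Y →L[ℝ] X).comp
            ((F'' (x k)) ((e k).symm (F (x k)))))) ∧
        (x (k + 1) = x k - (m k).symm ((e k).symm (F (x k))))) ∧
      (∀ k, x k ∈ ball x₀ tstar) ∧
      ∃ xs ∈ closedBall x₀ tstar,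
        Filter.Tendsto x Filter.atTop (nhds xs) ∧ F xs = 0 ∧
        ∀ k, ‖xs - x k‖ ≤ tstar - t k := by
  have hts0 : 0 < tstar := htsmem.1
  have htsR : tstar < R := htsmem.2
  have hh2 : ∀ s, 0 ≤ s → s < R → 0 < h2 s := fun s h0 hs =>
    hA1b.trans_le (hA2b.monotoneOn ⟨le_rfl, hR⟩ ⟨h0, hs⟩ h0)
  have hh1m : ∀ a b, 0 ≤ a → a ≤ b → b < R → h1 a ≤ h1 b := fun a b ha hab hb => by
    have := hal_taylor1 hd2 hA2b ha hab hb
    have := mul_nonneg (hh2 a ha (hab.trans_lt hb)).le (sub_nonneg.2 hab)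
    linarith
  have hh1 : ∀ s, 0 ≤ s → s ≤ tstar → h1 s < 0 := fun s h0 hs =>
    (hh1m s tstar h0 hs htsR).trans_lt htsder
  have hq : ∀ s, 0 ≤ s → s ≤ tstar →
      h s + h1 s * (tstar - s) + h2 s * (tstar - s) ^ 2 / 2 ≤ 0 := fun s h0 hs => by
    rw [← htszero]; exact hal_taylor2 hd1 hd2 hA2b h0 hs htsR
  have hhpos : ∀ s, 0 ≤ s → s < tstar → 0 < h s := fun s h0 hs => by
    -- convexity at tstar: use monotonicity of h(u) - h1(tstar) u
    have := hal_mono (R := R) (f := fun u => h1 tstar * u - h u)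
      (f' := fun u => h1 tstar * 1 - h1 u)
      (fun u hu => ((hasDerivWithinAt_id u _).const_mul _).sub (hd1 u hu)) h0 hs.le htsR
      (fun u hu => by
        have := hh1m u tstar (h0.trans hu.1.le) hu.2.le htsR
        linarith)
    simp only [htszero] at this
    nlinarith
  have hsc : ∀ s, 0 ≤ s → s < tstar →
      h s * h2 s / (2 * (h1 s) ^ 2) < 1 ∧
      0 < -((1 / (1 - h s * h2 s / (2 * (h1 s) ^ 2))) * (h s / h1 s)) ∧
      -((1 / (1 - h s * h2 s / (2 * (h1 s) ^ 2))) * (h s / h1 s)) < tstar - s ∧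
      h s ≤ -((1 / (1 - h s * h2 s / (2 * (h1 s) ^ 2))) * (h s / h1 s)) := fun s h0 hs => by
    have hb := hh1 s h0 hs.le
    have k := hal_scalar (hhpos s h0 hs) (neg_pos.2 hb) (hh2 s h0 (hs.trans htsR)) (sub_pos.2 hs)
      (by have := hq s h0 hs.le; linarith)
    rw [neg_sq, div_neg, mul_neg] at k
    obtain ⟨k1, k2, k3, k4⟩ := k
    refine ⟨k1, k2, k3, k4.trans ?_⟩
    have := hh1m 0 s le_rfl h0 (hs.trans htsR)
    nlinarith
  have htk : ∀ k, 0 ≤ t k ∧ t k < tstar := by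
    intro k
    induction k with
    | zero => rw [ht0]; exact ⟨le_rfl, hts0⟩
    | succ k ih =>
      obtain ⟨-, k2, k3, -⟩ := hsc _ ih.1 ih.2
      rw [hrec k]
      exact ⟨by linarith [ih.1], by linarith⟩
  -- the normalized operator
  let Γ : Y →L[ℝ] X := (e0.symm : Y →L[ℝ] X)
  let G : X → X := fun x => Γ (F x)
  let G' : X → X →L[ℝ] X := fun x => Γ.comp (F' x)
  let G'' : X → X →L[ℝ] X →L[ℝ] X := fun x => (ContinuousLinearMap.compL ℝ X Y X Γ).comp (F'' x)
  have hdG : ∀ x ∈ ball x₀ R, HasFDerivAt G (G' x) x := fun x hx =>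
    Γ.hasFDerivAt.comp x (hdF x (hballD hx))
  have hdG' : ∀ x ∈ ball x₀ R, HasFDerivAt G' (G'' x) x := fun x hx =>
    (ContinuousLinearMap.compL ℝ X Y X Γ).hasFDerivAt.comp x (hdF' x (hballD hx))
  have hmajG : ∀ x ∈ ball x₀ R, ∀ y ∈ ball x₀ R, ‖y - x‖ + ‖x - x₀‖ < R →
      ‖G'' y - G'' x‖ ≤ h2 (‖y - x‖ + ‖x - x₀‖) - h2 ‖x - x₀‖ := fun x hx y hy hxy => by
    have := hmaj x hx y hy hxy
    rwa [ContinuousLinearMap.comp_sub] at this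
  have hG0 : G' x₀ = ContinuousLinearMap.id ℝ X := by
    change Γ.comp (F' x₀) = _
    rw [← he0]; ext v; simp [Γ]
  have hGpp : ∀ x, ‖x - x₀‖ < R → ‖G'' x‖ ≤ h2 ‖x - x₀‖ := fun x hx =>
    hal_Gpp G'' hR hmajG hinit2 hx
  have hGp : ∀ x, ‖x - x₀‖ < R → ‖ContinuousLinearMap.id ℝ X - G' x‖ ≤ 1 + h1 ‖x - x₀‖ :=
    fun x hx => hal_Gp G' G'' hR hdG' hd2 hA1c hG0 hGpp hx
  have hstep : ∀ (k : ℕ) (x : X), ∃ (e : X ≃L[ℝ] Y) (m : X ≃L[ℝ] X),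
      (‖x - x₀‖ ≤ t k ∧ ‖G x‖ ≤ h (t k)) →
      ((e : X →L[ℝ] Y) = F' x ∧
        (m : X →L[ℝ] X) = ContinuousLinearMap.id ℝ X -
          (2⁻¹ : ℝ) • ((e.symm : Y →L[ℝ] X).comp ((F'' x) (e.symm (F x)))) ∧
        ‖m.symm (e.symm (F x))‖ ≤ t (k + 1) - t k ∧
        ‖G (x - m.symm (e.symm (F x)))‖ ≤ h (t (k + 1))) := by
    intro k x
    by_cases hP : ‖x - x₀‖ ≤ t k ∧ ‖G x‖ ≤ h (t k)
    swap
    · exact ⟨e0, ContinuousLinearEquiv.refl ℝ X, fun hh => absurd hh hP⟩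
    obtain ⟨hx, hGx⟩ := hP
    obtain ⟨hk0, hk1⟩ := htk k
    have hxR : ‖x - x₀‖ < R := by linarith
    have hs : t (k + 1) - t k =
        -((1 / (1 - h (t k) * h2 (t k) / (2 * (h1 (t k)) ^ 2))) * (h (t k) / h1 (t k))) := by
      rw [hrec k]; ring
    obtain ⟨u, m, hu, hm, hn, hGn⟩ := hal_step G G' G''
      (fun x δ a s => hal_rem G G' G'' hdG hdG' hd1 hd2 hA2a hA2b hmajG)
      ((hGp x hxR).trans (by
        have := hh1m _ _ (norm_nonneg (x - x₀)) hx (hk1.trans htsR)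
        linarith))
      ((hGpp x hxR).trans (hA2b.monotoneOn ⟨norm_nonneg _, hxR⟩ ⟨hk0, hk1.trans htsR⟩ hx))
      hx hGx (hh1 _ hk0 hk1.le) (hh2 _ hk0 (hk1.trans htsR)) (hhpos _ hk0 hk1)
      (hsc _ hk0 hk1).1 hs (by linarith [(htk (k + 1)).2])
    rw [add_sub_cancel] at hGn
    refine ⟨u.trans e0, m, fun _ => ⟨?_, ?_, hn, hGn⟩⟩
    · ext v
      have : u v = Γ (F' x v) := congrArg (fun A : X →L[ℝ] X => A v) hu
      simp [this, Γ]
    · rw [hm]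
      rfl
  choose E M hEM using hstep
  let x : ℕ → X := fun k => Nat.rec x₀ (fun k y => y - (M k y).symm ((E k y).symm (F y))) k
  have hxs : ∀ k, x (k + 1) = x k - (M k (x k)).symm ((E k (x k)).symm (F (x k))) := fun k => rfl
  have hP : ∀ k, ‖x k - x₀‖ ≤ t k ∧ ‖G (x k)‖ ≤ h (t k) := by
    intro k
    induction k with
    | zero =>
      rw [ht0]
      exact ⟨by simp [x], hinit1⟩
    | succ k ih =>
      obtain ⟨-, -, k3, k4⟩ := hEM k (x k) ih
      rw [hxs k]
      refine ⟨?_, k4⟩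
      rw [sub_right_comm]
      exact (norm_sub_le _ _).trans (by linarith [ih.1])
  have hdiff : ∀ k, dist (x k) (x (k + 1)) ≤ t (k + 1) - t k := fun k => by
    rw [dist_eq_norm, hxs k, sub_sub_cancel]
    exact (hEM k (x k) (hP k)).2.2.1
  have hmono : Monotone t := monotone_nat_of_le_succ fun k => by
    have := dist_nonneg.trans (hdiff k); linarith
  have hle : ∀ k j, k ≤ j → dist (x k) (x j) ≤ t j - t k := by
    intro k j hkj
    have := dist_le_Ico_sum_of_dist_le (f := x) hkj (d := fun i => t (i + 1) - t i)
      (fun {i} _ _ => hdiff i)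
    rwa [Finset.sum_Ico_sub t hkj] at this
  obtain ⟨c, hc⟩ : ∃ c, Filter.Tendsto t Filter.atTop (nhds c) :=
    ⟨_, tendsto_atTop_ciSup hmono ⟨tstar, by rintro _ ⟨k, rfl⟩; exact (htk k).2.le⟩⟩
  have hcs : CauchySeq x := by
    have hct := hc.cauchySeq
    rw [Metric.cauchySeq_iff'] at hct ⊢
    intro ε hε
    obtain ⟨N, hN⟩ := hct ε hε
    refine ⟨N, fun n hn => ?_⟩
    have h1 := hN n hn
    rw [Real.dist_eq] at h1
    rw [dist_comm]
    exact (hle N n hn).trans_lt ((le_abs_self _).trans_lt h1)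
  obtain ⟨xs, hxl⟩ := cauchySeq_tendsto_of_complete hcs
  have herr : ∀ k, ‖xs - x k‖ ≤ tstar - t k := by
    intro k
    refine le_of_tendsto ((hxl.sub_const (x k)).norm) ?_
    filter_upwards [Filter.eventually_ge_atTop k] with j hj
    rw [← dist_eq_norm, dist_comm]
    linarith [hle k j hj, (htk j).2]
  have hxcl : xs ∈ closedBall x₀ tstar := by
    rw [mem_closedBall, dist_eq_norm]
    have := herr 0
    rw [ht0, sub_zero] at this
    exact this
  refine ⟨x, fun k => E k (x k), fun k => M k (x k), rfl, ?_, ?_, xs, hxcl, hxl, ?_, herr⟩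
  · intro k
    obtain ⟨k1, k2, -, -⟩ := hEM k (x k) (hP k)
    exact ⟨k1, k2, hxs k⟩
  · intro k
    rw [mem_ball, dist_eq_norm]
    exact (hP k).1.trans_lt (htk k).2
  · have hxsR : xs ∈ ball x₀ R := closedBall_subset_ball htsR hxcl
    have l1 : Filter.Tendsto (fun k => G (x k)) Filter.atTop (nhds (G xs)) :=
      (hdG xs hxsR).continuousAt.tendsto.comp hxl
    have l2 : Filter.Tendsto (fun k => t (k + 1) - t k) Filter.atTop (nhds 0) := by
      simpa using ((Filter.tendsto_add_atTop_iff_nat 1).2 hc).sub hc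
    have l3 : Filter.Tendsto (fun k => G (x k)) Filter.atTop (nhds 0) := by
      refine squeeze_zero_norm (fun k => ?_) l2
      refine (hP k).2.trans ((hsc _ (htk k).1 (htk k).2).2.2.2.trans (le_of_eq ?_))
      rw [hrec k]; ring
    have : G xs = 0 := tendsto_nhds_unique l1 l3
    exact e0.symm.map_eq_zero_iff.1 this
end

section
/- Under the hypotheses of the semilocal convergence theorem for Halley's method (F : D → Y twice continuously Fréchet differentiable between Banach spaces, x₀ ∈ D with F'(x₀) invertible, h a majorizing function to F at x₀ satisfying (A1)–(A3) with smallest zero t*), let (x_k) be the Halley sequence converging to the solution x*, and let (t_k) be the majorizing sequence with t_k → t*. Then the error bound ‖x* − x_{k+1}‖ ≤ (t* − t_{k+1})·(‖x* − x_k‖/(t* − t_k))³ holds for all k ≥ 0, and consequently (x_k) converges Q-cubically: ‖x* − x_{k+1}‖ ≤ [ (1/3)·h''(t*)²/h'(t*)² + (2/9)·D⁻h''(t*)/(−h'(t*)) ]·‖x* − x_k‖³ for all k ≥ 0. -/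
open Metric Set

/-- scalar data -/
structure HalleyMaj (h h1 h2 : ℝ → ℝ) (R : ℝ) : Prop where
  hd1 : ∀ s ∈ Ico (0:ℝ) R, HasDerivWithinAt h (h1 s) (Ico 0 R) s
  hd2 : ∀ s ∈ Ico (0:ℝ) R, HasDerivWithinAt h1 (h2 s) (Ico 0 R) s
  conv : ConvexOn ℝ (Ico 0 R) h2
  mono : StrictMonoOn h2 (Ico 0 R)
  pos : 0 < h2 0

/-- second-order Taylor remainder -/
noncomputable def halleyRem (h h1 h2 : ℝ → ℝ) (a δ : ℝ) : ℝ := h (a + δ) - h a - δ * h1 a - δ ^ 2 / 2 * h2 a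

lemma tw1 {E : Type*} [NormedAddCommGroup E] [NormedSpace ℝ E] {φ χ : ℝ → E} {q1 q2 : ℝ → ℝ}
    (hφ : ∀ s ∈ Icc (0:ℝ) 1, HasDerivWithinAt φ (χ s) (Icc 0 1) s)
    (hq1 : ∀ s ∈ Icc (0:ℝ) 1, HasDerivWithinAt q1 (q2 s) (Icc 0 1) s)
    (h0 : φ 0 = 0) (hq0 : q1 0 = 0) (hb : ∀ s ∈ Icc (0:ℝ) 1, ‖χ s‖ ≤ q2 s) :
    ∀ s ∈ Icc (0:ℝ) 1, ‖φ s‖ ≤ q1 s := by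
  intro s hs
  refine image_norm_le_of_norm_deriv_right_le_deriv_boundary' (a := 0) (b := 1)
    (f := φ) (f' := χ) (B := q1) (B' := q2)
    (fun s hs => (hφ s hs).continuousWithinAt) ?_ (by simp [h0, hq0])
    (fun s hs => (hq1 s hs).continuousWithinAt) ?_ ?_ hs
  · intro s hs
    exact (hφ s (Ico_subset_Icc_self hs)).mono_of_mem_nhdsWithin (Icc_mem_nhdsGE_of_mem hs)
  · intro s hs
    exact (hq1 s (Ico_subset_Icc_self hs)).mono_of_mem_nhdsWithin (Icc_mem_nhdsGE_of_mem hs)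
  · intro s hs
    exact hb s (Ico_subset_Icc_self hs)

lemma tw2 {E : Type*} [NormedAddCommGroup E] [NormedSpace ℝ E] {ψ φ χ : ℝ → E} {q q1 q2 : ℝ → ℝ}
    (hψ : ∀ s ∈ Icc (0:ℝ) 1, HasDerivWithinAt ψ (φ s) (Icc 0 1) s)
    (hφ : ∀ s ∈ Icc (0:ℝ) 1, HasDerivWithinAt φ (χ s) (Icc 0 1) s)
    (hq : ∀ s ∈ Icc (0:ℝ) 1, HasDerivWithinAt q (q1 s) (Icc 0 1) s)
    (hq1 : ∀ s ∈ Icc (0:ℝ) 1, HasDerivWithinAt q1 (q2 s) (Icc 0 1) s)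
    (h00 : ψ 0 = 0) (h0 : φ 0 = 0) (hq00 : q 0 = 0) (hq0 : q1 0 = 0)
    (hb : ∀ s ∈ Icc (0:ℝ) 1, ‖χ s‖ ≤ q2 s) : ‖ψ 1‖ ≤ q 1 :=
  tw1 hψ hq h00 hq00 (tw1 hφ hq1 h0 hq0 hb) 1 (by simp)

lemma line_deriv {f f1 : ℝ → ℝ} {R a δ : ℝ}
    (hd : ∀ s ∈ Ico (0:ℝ) R, HasDerivWithinAt f (f1 s) (Ico 0 R) s)
    (ha : 0 ≤ a) (hδ : 0 ≤ δ) (haδ : a + δ < R) :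
    ∀ s ∈ Icc (0:ℝ) 1, HasDerivWithinAt (fun s => f (a + s * δ)) (f1 (a + s * δ) * δ) (Icc 0 1) s := by
  have hmap : MapsTo (fun s : ℝ => a + s * δ) (Icc 0 1) (Ico 0 R) := by
    intro s hs
    have := mul_le_mul_of_nonneg_right hs.2 hδ
    have := mul_nonneg hs.1 hδ
    constructor <;> simp only <;> linarith
  intro s hs
  have h2 : HasDerivWithinAt (fun s : ℝ => a + s * δ) δ (Icc 0 1) s := by
    simpa using (((hasDerivAt_id s).mul_const δ).const_add a).hasDerivWithinAt
  exact (hd _ (hmap hs)).comp s h2 hmap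

namespace HalleyMaj
variable {h h1 h2 : ℝ → ℝ} {R : ℝ}

lemma q_deriv (H : HalleyMaj h h1 h2 R) {a δ : ℝ} (ha : 0 ≤ a) (hδ : 0 ≤ δ) (haδ : a + δ < R) :
    ∀ s ∈ Icc (0:ℝ) 1, HasDerivWithinAt
      (fun s => h (a + s * δ) - h a - s * (δ * h1 a) - s ^ 2 * (δ ^ 2 / 2 * h2 a))
      ((h1 (a + s * δ) - h1 a - s * (δ * h2 a)) * δ) (Icc 0 1) s := by
  intro s hs
  have := (((line_deriv H.hd1 ha hδ haδ s hs).sub_const (h a)).sub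
    ((hasDerivAt_id s).mul_const (δ * h1 a)).hasDerivWithinAt).sub
    (((hasDerivAt_id s).pow 2).mul_const (δ ^ 2 / 2 * h2 a)).hasDerivWithinAt
  refine this.congr_deriv ?_
  simp
  ring

lemma q1_deriv (H : HalleyMaj h h1 h2 R) {a δ : ℝ} (ha : 0 ≤ a) (hδ : 0 ≤ δ) (haδ : a + δ < R) :
    ∀ s ∈ Icc (0:ℝ) 1, HasDerivWithinAt
      (fun s => (h1 (a + s * δ) - h1 a - s * (δ * h2 a)) * δ)
      ((h2 (a + s * δ) - h2 a) * δ ^ 2) (Icc 0 1) s := by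
  intro s hs
  have := (((line_deriv H.hd2 ha hδ haδ s hs).sub_const (h1 a)).sub
    ((hasDerivAt_id s).mul_const (δ * h2 a)).hasDerivWithinAt).mul_const δ
  refine this.congr_deriv ?_
  simp
  ring

/-- bound by remainder -/
lemma bound_rem (H : HalleyMaj h h1 h2 R) {E : Type*} [NormedAddCommGroup E] [NormedSpace ℝ E]
    {ψ φ χ : ℝ → E} {a δ c : ℝ} (ha : 0 ≤ a) (hδ : 0 ≤ δ) (haδ : a + δ < R)
    (hψ : ∀ s ∈ Icc (0:ℝ) 1, HasDerivWithinAt ψ (φ s) (Icc 0 1) s)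
    (hφ : ∀ s ∈ Icc (0:ℝ) 1, HasDerivWithinAt φ (χ s) (Icc 0 1) s)
    (h00 : ψ 0 = 0) (h0 : φ 0 = 0)
    (hb : ∀ s ∈ Icc (0:ℝ) 1, ‖χ s‖ ≤ c * ((h2 (a + s * δ) - h2 a) * δ ^ 2)) :
    ‖ψ 1‖ ≤ c * halleyRem h h1 h2 a δ := by
  have := tw2 hψ hφ (fun s hs => (H.q_deriv ha hδ haδ s hs).const_mul c)
    (fun s hs => (H.q1_deriv ha hδ haδ s hs).const_mul c) h00 h0 (by simp) (by simp) hb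
  simpa [halleyRem] using this

lemma h2_pos (H : HalleyMaj h h1 h2 R) {a : ℝ} (ha : 0 ≤ a) (haR : a < R) : 0 < h2 a :=
  H.pos.trans_le (H.mono.monotoneOn ⟨le_rfl, ha.trans_lt haR⟩ ⟨ha, haR⟩ ha)

lemma h2_mono (H : HalleyMaj h h1 h2 R) {a b : ℝ} (ha : 0 ≤ a) (hab : a ≤ b) (haR : b < R) :
    h2 a ≤ h2 b :=
  H.mono.monotoneOn ⟨ha, hab.trans_lt haR⟩ ⟨ha.trans hab, haR⟩ hab

lemma h2_shift (H : HalleyMaj h h1 h2 R) {a b δ : ℝ} (ha : 0 ≤ a) (hab : a ≤ b) (hδ : 0 ≤ δ)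
    (haR : b + δ < R) : h2 (a + δ) - h2 a ≤ h2 (b + δ) - h2 b := by
  rcases eq_or_lt_of_le hδ with rfl | hδ
  · simp
  have hw : 0 < b - a + δ := by linarith
  have m1 : a ∈ Ico (0:ℝ) R := ⟨ha, by linarith⟩
  have m2 : b + δ ∈ Ico (0:ℝ) R := ⟨by linarith, haR⟩
  have c1 := H.conv.2 m1 m2 (show 0 ≤ δ / (b - a + δ) by positivity)
    (show 0 ≤ (b - a) / (b - a + δ) from div_nonneg (by linarith) hw.le) (by field_simp; ring)
  have c2 := H.conv.2 m1 m2
    (show 0 ≤ (b - a) / (b - a + δ) from div_nonneg (by linarith) hw.le)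
    (show 0 ≤ δ / (b - a + δ) by positivity) (by field_simp)
  simp only [smul_eq_mul] at c1 c2
  have e1 : δ / (b - a + δ) * a + (b - a) / (b - a + δ) * (b + δ) = b := by field_simp; ring
  have e2 : (b - a) / (b - a + δ) * a + δ / (b - a + δ) * (b + δ) = a + δ := by field_simp; ring
  rw [e1] at c1
  rw [e2] at c2
  have e3 : δ / (b - a + δ) + (b - a) / (b - a + δ) = 1 := by field_simp; ring
  have e4 : δ / (b - a + δ) * (h2 a + h2 (b+δ)) + (b - a) / (b - a + δ) * (h2 a + h2 (b+δ))
    = h2 a + h2 (b + δ) := by rw [← add_mul, e3, one_mul]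
  linarith

lemma h2_scale (H : HalleyMaj h h1 h2 R) {a r u : ℝ} (ha : 0 ≤ a) (hr : 0 ≤ r) (hr1 : r ≤ 1)
    (hu : 0 ≤ u) (haR : a + u < R) : h2 (a + r * u) - h2 a ≤ r * (h2 (a + u) - h2 a) := by
  have m1 : a ∈ Ico (0:ℝ) R := ⟨ha, by linarith⟩
  have m2 : a + u ∈ Ico (0:ℝ) R := ⟨by linarith, haR⟩
  have c1 := H.conv.2 m1 m2 (show 0 ≤ 1 - r by linarith) hr (by ring)
  simp only [smul_eq_mul] at c1
  have : (1 - r) * a + r * (a + u) = a + r * u := by ring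
  rw [this] at c1
  linarith

lemma rem_shift (H : HalleyMaj h h1 h2 R) {a b δ : ℝ} (ha : 0 ≤ a) (hab : a ≤ b) (hδ : 0 ≤ δ)
    (haR : b + δ < R) : |halleyRem h h1 h2 a δ| ≤ halleyRem h h1 h2 b δ := by
  have hR : a + δ < R := by linarith
  have := H.bound_rem (c := 1) (ha.trans hab) hδ haR (H.q_deriv ha hδ hR) (H.q1_deriv ha hδ hR)
    (by simp) (by simp) (by
      intro s hs
      have hs0 := mul_nonneg hs.1 hδ
      have hs1 := mul_le_mul_of_nonneg_right hs.2 hδ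
      have := H.h2_shift ha hab hs0 (by linarith)
      have := H.h2_mono (b := a + s * δ) ha (by linarith) (by linarith)
      rw [Real.norm_eq_abs, abs_of_nonneg (mul_nonneg (by linarith) (by positivity)), one_mul]
      gcongr)
  simpa [halleyRem] using this

lemma rem_nonneg (H : HalleyMaj h h1 h2 R) {a δ : ℝ} (ha : 0 ≤ a) (hδ : 0 ≤ δ)
    (haR : a + δ < R) : 0 ≤ halleyRem h h1 h2 a δ :=
  (abs_nonneg _).trans (H.rem_shift ha le_rfl hδ haR)

lemma rem_scale (H : HalleyMaj h h1 h2 R) {a r u : ℝ} (ha : 0 ≤ a) (hr : 0 ≤ r) (hr1 : r ≤ 1)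
    (hu : 0 ≤ u) (haR : a + u < R) :
    halleyRem h h1 h2 a (r * u) ≤ r ^ 3 * halleyRem h h1 h2 a u := by
  have hru : r * u ≤ u := by nlinarith
  have hru0 : 0 ≤ r * u := by positivity
  have hR : a + r * u < R := by linarith
  have := H.bound_rem (c := r ^ 3) ha hu haR (H.q_deriv ha hru0 hR) (H.q1_deriv ha hru0 hR)
    (by simp) (by simp) (by
      intro s hs
      have hs0 := mul_nonneg hs.1 hu
      have hs1 := mul_le_mul_of_nonneg_right hs.2 hu
      have hs0' := mul_nonneg hs.1 hru0
      have hs1' := mul_le_mul_of_nonneg_right hs.2 hru0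
      have h3 := H.h2_scale ha hr hr1 hs0 (by linarith)
      have := H.h2_mono (b := a + s * (r * u)) ha (by linarith) (by linarith)
      rw [Real.norm_eq_abs, abs_of_nonneg (mul_nonneg (by linarith) (by positivity))]
      have e : r * (s * u) = s * (r * u) := by ring
      rw [e] at h3
      have h4 := mul_le_mul_of_nonneg_right h3 (sq_nonneg (r * u))
      refine h4.trans (le_of_eq (by ring)))
  refine (le_abs_self _).trans ?_
  simpa [halleyRem] using this

lemma rem_upper (H : HalleyMaj h h1 h2 R) {a u : ℝ} (ha : 0 ≤ a)
    (hu : 0 ≤ u) (haR : a + u < R) :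
    halleyRem h h1 h2 a u ≤ u ^ 2 / 6 * (h2 (a + u) - h2 a) := by
  set Δ := h2 (a + u) - h2 a with hΔ
  have := tw2 (q := fun s => s ^ 3 * (u ^ 2 / 6 * Δ)) (q1 := fun s => s ^ 2 * (u ^ 2 / 2 * Δ))
    (q2 := fun s => s * (u ^ 2 * Δ)) (H.q_deriv ha hu haR) (H.q1_deriv ha hu haR)
    (fun s hs => by
      refine (((hasDerivAt_id s).pow 3).mul_const _).hasDerivWithinAt.congr_deriv ?_
      simp; ring)
    (fun s hs => by
      refine (((hasDerivAt_id s).pow 2).mul_const _).hasDerivWithinAt.congr_deriv ?_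
      simp; ring)
    (by simp) (by simp) (by simp) (by simp) (by
      intro s hs
      have hs0 := mul_nonneg hs.1 hu
      have hs1 := mul_le_mul_of_nonneg_right hs.2 hu
      have h3 := H.h2_scale ha hs.1 hs.2 hu (by linarith)
      have := H.h2_mono (b := a + s * u) ha (by linarith) (by linarith)
      rw [Real.norm_eq_abs, abs_of_nonneg (mul_nonneg (by linarith) (by positivity))]
      have h4 := mul_le_mul_of_nonneg_right h3 (sq_nonneg u)
      refine h4.trans (le_of_eq (by ring)))
  refine (le_abs_self _).trans ?_
  simpa [halleyRem] using this

end HalleyMaj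

/-- zero data -/
structure HalleyZero (h h1 h2 : ℝ → ℝ) (R T : ℝ) : Prop extends HalleyMaj h h1 h2 R where
  hp : 0 < h 0
  mem : T ∈ Ioo 0 R
  zero : h T = 0
  min : ∀ s ∈ Ioo (0:ℝ) R, h s = 0 → T ≤ s
  der : h1 T < 0

lemma HalleyMaj.h1_mono {h h1 h2 : ℝ → ℝ} {R : ℝ} (H : HalleyMaj h h1 h2 R) {a b : ℝ}
    (ha : 0 ≤ a) (hab : a ≤ b) (haR : b < R) : h1 a ≤ h1 b := by
  have hd : 0 ≤ b - a := by linarith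
  have := tw1 (φ := fun _ => (0:ℝ)) (χ := fun _ => 0)
    (fun s _ => hasDerivWithinAt_const _ _ _)
    (fun s hs => (line_deriv H.hd2 ha hd (by linarith) s hs).sub_const (h1 a))
    rfl (by simp) (by
      intro s hs
      have hs0 := mul_nonneg hs.1 hd
      have hs1 := mul_le_mul_of_nonneg_right hs.2 hd
      have := H.h2_pos (a := a + s * (b - a)) (by linarith) (by linarith)
      simp only [norm_zero]
      positivity) 1 (by simp)
  simp at this
  linarith

namespace HalleyZero
variable {h h1 h2 : ℝ → ℝ} {R T : ℝ}

lemma h1_neg (H : HalleyZero h h1 h2 R T) {a : ℝ} (ha : 0 ≤ a) (haT : a ≤ T) : h1 a < 0 :=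
  (H.h1_mono ha haT H.mem.2).trans_lt H.der

lemma h_pos (H : HalleyZero h h1 h2 R T) {a : ℝ} (ha : 0 ≤ a) (haT : a < T) : 0 < h a := by
  by_contra hn
  push Not at hn
  have hTR := H.mem.2
  have hc : ContinuousOn h (Icc 0 a) := fun s hs =>
    (H.hd1 s ⟨hs.1, by linarith [hs.2]⟩).continuousWithinAt.mono
      (fun y hy => ⟨hy.1, by linarith [hy.2]⟩)
  obtain ⟨s, hs, hs0⟩ := intermediate_value_Icc' ha hc (⟨hn, H.hp.le⟩ : (0:ℝ) ∈ Icc (h a) (h 0))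
  have hspos : 0 < s := by
    rcases eq_or_lt_of_le hs.1 with h0 | h0
    · have := H.hp
      rw [← h0] at hs0
      linarith
    · exact h0
  have := H.min s ⟨hspos, by linarith [hs.2]⟩ hs0
  linarith [hs.2]

/-- `S = h2 τ² / 2 + Rem`. -/
lemma S_eq (H : HalleyZero h h1 h2 R T) (a : ℝ) :
    -h1 a * (T - a) - h a = (T - a) ^ 2 / 2 * h2 a + halleyRem h h1 h2 a (T - a) := by
  have : a + (T - a) = T := by ring
  rw [halleyRem, this, H.zero]
  ring

lemma disc (H : HalleyZero h h1 h2 R T) {a : ℝ} (ha : 0 ≤ a) (haT : a < T) :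
    2 * (h a * h2 a) ≤ h1 a ^ 2 := by
  have h2p := H.h2_pos ha (haT.trans H.mem.2)
  have hr := H.rem_nonneg ha (sub_nonneg.2 haT.le) (by linarith [H.mem.2])
  have := H.S_eq a
  have h5 : 0 ≤ h2 a * (-h1 a * (T - a) - h a - (T - a) ^ 2 / 2 * h2 a) := by
    rw [this]; exact mul_nonneg h2p.le (by linarith)
  nlinarith [sq_nonneg (h1 a + h2 a * (T - a))]

/-- the denominator -/
noncomputable def K (h h1 h2 : ℝ → ℝ) (a : ℝ) : ℝ := -h1 a - 2⁻¹ * h2 a * (h a / (-h1 a))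

lemma K_ge (H : HalleyZero h h1 h2 R T) {a : ℝ} (ha : 0 ≤ a) (haT : a < T) :
    3 / 4 * (-h1 a) ≤ K h h1 h2 a := by
  have h1n := H.h1_neg ha haT.le
  have hd := H.disc ha haT
  have : h2 a * (h a / (-h1 a)) ≤ 1 / 2 * (-h1 a) := by
    rw [← mul_div_assoc, div_le_iff₀ (by linarith)]
    nlinarith
  unfold K
  linarith

lemma K_pos (H : HalleyZero h h1 h2 R T) {a : ℝ} (ha : 0 ≤ a) (haT : a < T) :
    0 < K h h1 h2 a := by
  have := H.K_ge ha haT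
  have h1n := H.h1_neg ha haT.le
  linarith

lemma gap (H : HalleyZero h h1 h2 R T) {a : ℝ} (ha : 0 ≤ a) (haT : a < T) :
    K h h1 h2 a * (T - (a + h a / K h h1 h2 a)) = halleyRem h h1 h2 a (T - a) +
      2⁻¹ * h2 a * (((T - a) ^ 2 / 2 * h2 a + halleyRem h h1 h2 a (T - a)) / (-h1 a)) * (T - a) := by
  have hK := H.K_pos ha haT
  have h1n := H.h1_neg ha haT.le
  have h1ne : h1 a ≠ 0 := h1n.ne
  have hS := H.S_eq a
  have e1 : K h h1 h2 a * (T - (a + h a / K h h1 h2 a)) = K h h1 h2 a * (T - a) - h a := by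
    field_simp; ring
  have e2 : halleyRem h h1 h2 a (T - a) = -h1 a * (T - a) - h a - (T - a) ^ 2 / 2 * h2 a := by
    linarith
  rw [e1, ← hS, e2]
  unfold K
  field_simp
  ring

lemma next_lt (H : HalleyZero h h1 h2 R T) {a : ℝ} (ha : 0 ≤ a) (haT : a < T) :
    a + h a / K h h1 h2 a < T := by
  have hK := H.K_pos ha haT
  have h1n := H.h1_neg ha haT.le
  have h2p := H.h2_pos ha (haT.trans H.mem.2)
  have hr := H.rem_nonneg ha (sub_nonneg.2 haT.le) (by linarith [H.mem.2])
  have h1p : 0 < -h1 a := by linarith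
  have hτ : 0 < T - a := by linarith
  have : 0 < K h h1 h2 a * (T - (a + h a / K h h1 h2 a)) := by
    rw [H.gap ha haT]; positivity
  have := pos_of_mul_pos_right this hK.le
  linarith

lemma h_next (H : HalleyZero h h1 h2 R T) {a : ℝ} (ha : 0 ≤ a) (haT : a < T) :
    h (a + h a / K h h1 h2 a) = 2⁻¹ * h2 a *
      (2⁻¹ * h2 a * (h a / (-h1 a)) * (h a / K h h1 h2 a) / (-h1 a)) * (h a / K h h1 h2 a)
      + halleyRem h h1 h2 a (h a / K h h1 h2 a) := by
  have hK := H.K_pos ha haT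
  have h1n := H.h1_neg ha haT.le
  have h1ne : h1 a ≠ 0 := h1n.ne
  set d := h a / K h h1 h2 a with hd
  have hKd : K h h1 h2 a * d = h a := by rw [hd]; field_simp
  unfold K at hKd
  have e1 : 2⁻¹ * h2 a * (h a / (-h1 a)) * d = -h1 a * d - h a := by linarith
  rw [e1]
  have e2 : (-h1 a * d - h a) / (-h1 a) = d - h a / (-h1 a) := by field_simp; ring
  rw [e2, halleyRem]
  have e3 : 2⁻¹ * h2 a * (d - h a / (-h1 a)) * d = 2⁻¹ * h2 a * d ^ 2 -
    2⁻¹ * h2 a * (h a / (-h1 a)) * d := by ring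
  rw [e3, e1]
  ring

lemma slopes_bdd (H : HalleyZero h h1 h2 R T) :
    BddAbove ((fun u => (h2 T - h2 u) / (T - u)) '' Ico (0:ℝ) T) := by
  have hT := H.mem
  refine ⟨(h2 ((T + R) / 2) - h2 T) / ((T + R) / 2 - T), ?_⟩
  rintro _ ⟨u, hu, rfl⟩
  exact H.conv.slope_mono_adjacent ⟨hu.1, by linarith [hu.2, hT.2]⟩
    ⟨by linarith [hT.1, hT.2], by linarith [hT.2]⟩ hu.2 (by linarith [hT.2])

lemma gap_le (H : HalleyZero h h1 h2 R T) {a : ℝ} (ha : 0 ≤ a) (haT : a < T) :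
    T - (a + h a / K h h1 h2 a) ≤ ((1 / 3) * ((h2 T) ^ 2 / (h1 T) ^ 2) +
          (2 / 9) * (sSup ((fun u => (h2 T - h2 u) / (T - u)) ''
            Ico (0:ℝ) T) / (-(h1 T)))) * (T - a) ^ 3 := by
  have hK := H.K_pos ha haT
  have hKg := H.K_ge ha haT
  have h1n := H.h1_neg ha haT.le
  have h1T := H.der
  have hTR := H.mem.2
  have h2p := H.h2_pos ha (haT.trans hTR)
  have h2T := H.h2_mono ha haT.le hTR
  have hr := H.rem_nonneg ha (sub_nonneg.2 haT.le) (by linarith)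
  have hru := H.rem_upper ha (sub_nonneg.2 haT.le) (by linarith)
  have e : a + (T - a) = T := by ring
  rw [e] at hru
  have hgap := H.gap ha haT
  have hslope : (h2 T - h2 a) / (T - a) ≤ _ :=
    le_csSup H.slopes_bdd ⟨a, ⟨ha, haT⟩, rfl⟩
  set D := sSup ((fun u => (h2 T - h2 u) / (T - u)) '' Ico (0:ℝ) T) with hD
  have h1m := H.h1_mono ha haT.le hTR
  have hτ : 0 < T - a := by linarith
  set τ := T - a with hτd
  set r := halleyRem h h1 h2 a τ with hrd
  set g := T - (a + h a / K h h1 h2 a) with hg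
  rw [div_le_iff₀ hτ] at hslope
  have hgp : 0 ≤ g := by have := H.next_lt ha haT; linarith
  have hp : 0 < -h1 a := by linarith
  have hq : 0 < -h1 T := by linarith
  have hr1 : r ≤ D * τ ^ 3 / 6 := by
    refine hru.trans ?_
    have := mul_le_mul_of_nonneg_left hslope (by positivity : 0 ≤ τ ^ 2 / 6)
    refine this.trans (le_of_eq (by ring))
  have hDn : 0 ≤ D * τ ^ 3 / 6 := hr.trans hr1
  have hS : τ ^ 2 / 2 * h2 a + r ≤ τ ^ 2 / 2 * h2 T := by
    have : 0 ≤ τ ^ 2 * (h2 T - h2 a) := mul_nonneg (by positivity) (by linarith)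
    nlinarith
  have hB : 2⁻¹ * h2 a * ((τ ^ 2 / 2 * h2 a + r) / (-h1 a)) * τ
      ≤ 2⁻¹ * h2 T * ((τ ^ 2 / 2 * h2 T) / (-h1 a)) * τ := by
    have : 0 ≤ h2 T := by linarith
    gcongr
  have h3 : 3 / 4 * (-h1 a) * g ≤ D * τ ^ 3 / 6 + 2⁻¹ * h2 T * ((τ ^ 2 / 2 * h2 T) / (-h1 a)) * τ := by
    have := mul_le_mul_of_nonneg_right hKg hgp
    linarith
  have h4 : g ≤ 2 / 9 * (D * τ ^ 3) / (-h1 a) + 1 / 3 * (h2 T ^ 2 * τ ^ 3) / (-h1 a) ^ 2 := by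
    have e : 2 / 9 * (D * τ ^ 3) / (-h1 a) + 1 / 3 * (h2 T ^ 2 * τ ^ 3) / (-h1 a) ^ 2
      = (D * τ ^ 3 / 6 + 2⁻¹ * h2 T * ((τ ^ 2 / 2 * h2 T) / (-h1 a)) * τ) / (3 / 4 * (-h1 a)) := by
      have := h1n.ne
      field_simp
      ring
    rw [e, le_div_iff₀ (by linarith)]
    linarith
  refine h4.trans ?_
  have h5 : 2 / 9 * (D * τ ^ 3) / (-h1 a) ≤ 2 / 9 * (D * τ ^ 3) / (-h1 T) :=
    div_le_div_of_nonneg_left (by linarith) hq (by linarith)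
  have h6 : 1 / 3 * (h2 T ^ 2 * τ ^ 3) / (-h1 a) ^ 2 ≤ 1 / 3 * (h2 T ^ 2 * τ ^ 3) / (-h1 T) ^ 2 := by
    gcongr
  refine (add_le_add h5 h6).trans (le_of_eq ?_)
  have := h1T.ne
  field_simp
  ring

end HalleyZero

/-- vector data -/
structure HalleyOp {X : Type*} [NormedAddCommGroup X] [NormedSpace ℝ X]
    (G : X → X) (G' : X → X →L[ℝ] X) (G'' : X → X →L[ℝ] X →L[ℝ] X) (x₀ : X)
    (h h1 h2 : ℝ → ℝ) (R : ℝ) : Prop where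
  hG : ∀ y ∈ ball x₀ R, HasFDerivAt G (G' y) y
  hG' : ∀ y ∈ ball x₀ R, HasFDerivAt G' (G'' y) y
  maj : ∀ x ∈ ball x₀ R, ∀ y ∈ ball x₀ R, ‖y - x‖ + ‖x - x₀‖ < R → ∀ u v,
    ‖G'' y u v - G'' x u v‖ ≤ (h2 (‖y - x‖ + ‖x - x₀‖) - h2 ‖x - x₀‖) * ‖u‖ * ‖v‖
  i2 : ∀ u v, ‖G'' x₀ u v‖ ≤ h2 0 * ‖u‖ * ‖v‖
  i1 : ∀ u, G' x₀ u = u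
  h10 : h1 0 = -1

namespace HalleyOp
variable {X : Type*} [NormedAddCommGroup X] [NormedSpace ℝ X]
    {G : X → X} {G' : X → X →L[ℝ] X} {G'' : X → X →L[ℝ] X →L[ℝ] X} {x₀ : X}
    {h h1 h2 : ℝ → ℝ} {R T : ℝ}

lemma v1 (P : HalleyOp G G' G'' x₀ h h1 h2 R) (H : HalleyMaj h h1 h2 R) {x : X} {a : ℝ}
    (hx : ‖x - x₀‖ ≤ a) (ha : a < R) (u v : X) : ‖G'' x u v‖ ≤ h2 a * ‖u‖ * ‖v‖ := by
  have hR : 0 < R := (norm_nonneg _).trans_lt (hx.trans_lt ha)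
  have h3 := P.maj x₀ (mem_ball_self hR) x (mem_ball_iff_norm.2 (hx.trans_lt ha))
    (by simpa using hx.trans_lt ha) u v
  simp only [sub_self, norm_zero, add_zero] at h3
  have h4 := P.i2 u v
  have h5 := H.h2_mono (norm_nonneg _) hx ha
  have h6 : ‖G'' x u v‖ ≤ ‖G'' x u v - G'' x₀ u v‖ + ‖G'' x₀ u v‖ := by
    simpa using norm_add_le (G'' x u v - G'' x₀ u v) (G'' x₀ u v)
  have h7 : h2 ‖x - x₀‖ * ‖u‖ * ‖v‖ ≤ h2 a * ‖u‖ * ‖v‖ := by gcongr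
  have h8 : (h2 ‖x - x₀‖ - h2 0) * ‖u‖ * ‖v‖ + h2 0 * ‖u‖ * ‖v‖ = h2 ‖x - x₀‖ * ‖u‖ * ‖v‖ := by ring
  linarith

lemma line_mem {x ε : X} {a s : ℝ} (hx : ‖x - x₀‖ ≤ a) (ha : a + ‖ε‖ < R) (hs : s ∈ Icc (0:ℝ) 1) :
    x + s • ε ∈ ball x₀ R ∧ ‖s • ε‖ = s * ‖ε‖ ∧ s * ‖ε‖ ≤ ‖ε‖ := by
  have h2 : ‖s • ε‖ = s * ‖ε‖ := by rw [norm_smul, Real.norm_of_nonneg hs.1]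
  have h3 : s * ‖ε‖ ≤ ‖ε‖ := by nlinarith [hs.2, norm_nonneg ε]
  refine ⟨?_, h2, h3⟩
  rw [mem_ball_iff_norm]
  have : x + s • ε - x₀ = (x - x₀) + s • ε := by abel
  rw [this]
  have := norm_add_le (x - x₀) (s • ε)
  linarith

lemma line_d (x ε : X) (s : ℝ) : HasDerivAt (fun s : ℝ => x + s • ε) ε s := by
  simpa using ((hasDerivAt_id s).smul_const ε).const_add x

lemma dG' (P : HalleyOp G G' G'' x₀ h h1 h2 R) {x ε : X} {s : ℝ} (hs : x + s • ε ∈ ball x₀ R)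
    (u : X) : HasDerivAt (fun s : ℝ => G' (x + s • ε) u) (G'' (x + s • ε) ε u) s := by
  have := (P.hG' _ hs).comp_hasDerivAt s (line_d x ε s)
  exact ((ContinuousLinearMap.apply ℝ X u).hasFDerivAt).comp_hasDerivAt s this

lemma v2 (P : HalleyOp G G' G'' x₀ h h1 h2 R) (H : HalleyMaj h h1 h2 R) {x : X} {a : ℝ}
    (hx : ‖x - x₀‖ ≤ a) (ha : a < R) (u : X) : -h1 a * ‖u‖ ≤ ‖G' x u‖ := by
  set ε := x - x₀ with hε
  have hR : 0 < R := (norm_nonneg _).trans_lt (hx.trans_lt ha)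
  have hεR : (0:ℝ) + ‖ε‖ < R := by simpa using hx.trans_lt ha
  have key := tw1 (φ := fun s => G' (x₀ + s • ε) u - G' x₀ u)
    (χ := fun s => G'' (x₀ + s • ε) ε u)
    (q1 := fun s => (h1 (0 + s * ‖ε‖) - h1 0) * ‖u‖)
    (q2 := fun s => (h2 (0 + s * ‖ε‖) * ‖ε‖) * ‖u‖)
    (fun s hs => ((P.dG' (line_mem (x := x₀) (x₀ := x₀) (a := 0) (by simp) hεR hs).1 u).sub_const _).hasDerivWithinAt)
    (fun s hs => ((line_deriv H.hd2 le_rfl (norm_nonneg ε) hεR s hs).sub_const _).mul_const _)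
    (by simp) (by simp) (by
      intro s hs
      obtain ⟨m1, m2, m3⟩ := line_mem (x := x₀) (x₀ := x₀) (a := 0) (by simp) hεR hs
      refine P.v1 H ?_ ?_ ε u
      · simp [m2]
      · linarith) 1 (by simp)
  simp only [one_smul, one_mul, zero_add, P.i1, P.h10] at key
  have e1 : x₀ + ε = x := by simp [hε]
  rw [e1] at key
  have h3 := H.h1_mono (norm_nonneg ε) hx ha
  have h4 : ‖u‖ ≤ ‖G' x u - u‖ + ‖G' x u‖ := by
    have := norm_sub_le (G' x u) (G' x u - u)
    simp at this
    linarith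
  have h5 : h1 ‖ε‖ * ‖u‖ ≤ h1 a * ‖u‖ := by gcongr
  linarith

lemma v3 (P : HalleyOp G G' G'' x₀ h h1 h2 R) (H : HalleyMaj h h1 h2 R) {x ε : X} {a : ℝ}
    (hx : ‖x - x₀‖ ≤ a) (ha : a + ‖ε‖ < R) :
    ‖G (x + ε) - G x - G' x ε - (2⁻¹ : ℝ) • G'' x ε ε‖ ≤ halleyRem h h1 h2 a ‖ε‖ := by
  have ha0 : 0 ≤ a := (norm_nonneg _).trans hx
  have hxb : x ∈ ball x₀ R := mem_ball_iff_norm.2 (by linarith [norm_nonneg ε])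
  have key := H.bound_rem (c := 1)
    (ψ := fun s : ℝ => G (x + s • ε) - G x - s • G' x ε - s ^ 2 • ((2⁻¹ : ℝ) • G'' x ε ε))
    (φ := fun s : ℝ => G' (x + s • ε) ε - G' x ε - s • G'' x ε ε)
    (χ := fun s : ℝ => G'' (x + s • ε) ε ε - G'' x ε ε)
    ha0 (norm_nonneg ε) ha
    (by
      intro s hs
      have d1 := (P.hG _ (line_mem hx ha hs).1).comp_hasDerivAt s (line_d x ε s)
      refine (((d1.sub_const (G x)).sub ((hasDerivAt_id s).smul_const (G' x ε))).sub
        (((hasDerivAt_id s).pow 2).smul_const ((2⁻¹ : ℝ) • G'' x ε ε))).hasDerivWithinAt.congr_deriv ?_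
      simp only [id, smul_smul]
      congr 2
      · simp
      · push_cast; ring)
    (by
      intro s hs
      refine (((P.dG' (line_mem hx ha hs).1 ε).sub_const (G' x ε)).sub
        ((hasDerivAt_id s).smul_const (G'' x ε ε))).hasDerivWithinAt.congr_deriv ?_
      simp)
    (by simp) (by simp)
    (by
      intro s hs
      obtain ⟨m1, m2, m3⟩ := line_mem hx ha hs
      have hs0 : 0 ≤ s * ‖ε‖ := mul_nonneg hs.1 (norm_nonneg _)
      have := P.maj x hxb _ m1 (by simp [m2]; linarith) ε ε
      refine this.trans ?_
      simp only [add_sub_cancel_left, m2, one_mul]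
      rw [mul_assoc, ← sq, add_comm (s * ‖ε‖)]
      have := H.h2_shift (norm_nonneg _) hx hs0 (by linarith)
      gcongr)
  simpa using key

/-- a single Halley step: data -/
lemma n_le (P : HalleyOp G G' G'' x₀ h h1 h2 R) (H : HalleyZero h h1 h2 R T) {x n : X} {a : ℝ}
    (hx : ‖x - x₀‖ ≤ a) (haT : a < T) (hGx : ‖G x‖ ≤ h a) (hn : G' x n = G x) :
    ‖n‖ ≤ h a / (-h1 a) := by
  have ha0 : 0 ≤ a := (norm_nonneg _).trans hx
  have h1n := H.h1_neg ha0 haT.le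
  have := P.v2 H.toHalleyMaj hx (haT.trans H.mem.2) n
  rw [le_div_iff₀ (by linarith)]
  rw [hn] at this
  linarith

lemma K_low (P : HalleyOp G G' G'' x₀ h h1 h2 R) (H : HalleyZero h h1 h2 R T) {x n : X} {a : ℝ}
    (hx : ‖x - x₀‖ ≤ a) (haT : a < T) (hGx : ‖G x‖ ≤ h a) (hn : G' x n = G x) (w : X) :
    HalleyZero.K h h1 h2 a * ‖w‖ ≤ ‖G' x w - (2⁻¹ : ℝ) • G'' x n w‖ := by
  have ha0 : 0 ≤ a := (norm_nonneg _).trans hx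
  have haR := haT.trans H.mem.2
  have h2p := H.h2_pos ha0 haR
  have hnl := P.n_le H hx haT hGx hn
  have b1 := P.v2 H.toHalleyMaj hx haR w
  have b2 := P.v1 H.toHalleyMaj hx haR n w
  have b3 : h2 a * ‖n‖ * ‖w‖ ≤ h2 a * (h a / (-h1 a)) * ‖w‖ := by gcongr
  have b4 := norm_sub_norm_le (G' x w) ((2⁻¹ : ℝ) • G'' x n w)
  rw [norm_smul] at b4
  norm_num at b4
  unfold HalleyZero.K
  linarith

lemma step_d (P : HalleyOp G G' G'' x₀ h h1 h2 R) (H : HalleyZero h h1 h2 R T) {x n d : X} {a : ℝ}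
    (hx : ‖x - x₀‖ ≤ a) (haT : a < T) (hGx : ‖G x‖ ≤ h a) (hn : G' x n = G x)
    (hd : G' x d - (2⁻¹ : ℝ) • G'' x n d = - G x) : ‖d‖ ≤ h a / HalleyZero.K h h1 h2 a := by
  have ha0 : 0 ≤ a := (norm_nonneg _).trans hx
  have := P.K_low H hx haT hGx hn d
  rw [hd, norm_neg] at this
  rw [le_div_iff₀ (H.K_pos ha0 haT)]
  linarith

lemma step_G (P : HalleyOp G G' G'' x₀ h h1 h2 R) (H : HalleyZero h h1 h2 R T) {x n d : X} {a : ℝ}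
    (hx : ‖x - x₀‖ ≤ a) (haT : a < T) (hGx : ‖G x‖ ≤ h a) (hn : G' x n = G x)
    (hd : G' x d - (2⁻¹ : ℝ) • G'' x n d = - G x) :
    ‖G (x + d)‖ ≤ h (a + h a / HalleyZero.K h h1 h2 a) := by
  have ha0 : 0 ≤ a := (norm_nonneg _).trans hx
  have haR := haT.trans H.mem.2
  have hdl := P.step_d H hx haT hGx hn hd
  have hnl := P.n_le H hx haT hGx hn
  have hK := H.K_pos ha0 haT
  have hpos := H.h_pos ha0 haT
  have hnext := H.next_lt ha0 haT
  have h1n := H.h1_neg ha0 haT.le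
  have h1p : 0 < - h1 a := by linarith
  have h2p := H.h2_pos ha0 haR
  have hTR := H.mem.2
  rw [H.h_next ha0 haT]
  set δ := h a / HalleyZero.K h h1 h2 a with hδ
  have hδp : 0 < δ := by positivity
  have r1 := P.v3 H.toHalleyMaj (ε := d) hx (by linarith)
  have r2 : halleyRem h h1 h2 a ‖d‖ ≤ halleyRem h h1 h2 a δ := by
    have hr0 : 0 ≤ ‖d‖ / δ := by positivity
    have hr1 : ‖d‖ / δ ≤ 1 := by rw [div_le_one hδp]; exact hdl
    have := H.rem_scale ha0 hr0 hr1 hδp.le (by linarith)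
    have e : ‖d‖ / δ * δ = ‖d‖ := by field_simp
    rw [e] at this
    have hp := H.rem_nonneg ha0 hδp.le (by linarith)
    have := mul_le_mul_of_nonneg_right (pow_le_one₀ hr0 hr1 : (‖d‖ / δ) ^ 3 ≤ 1) hp
    linarith
  have e1 : G (x + d) = (2⁻¹ : ℝ) • G'' x (n + d) d +
      (G (x + d) - G x - G' x d - (2⁻¹ : ℝ) • G'' x d d) := by
    have : G' x d = (2⁻¹ : ℝ) • G'' x n d - G x := by
      rw [eq_sub_iff_add_eq, ← sub_eq_zero]
      rw [sub_eq_iff_eq_add] at hd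
      rw [hd]; abel
    rw [this, map_add, ContinuousLinearMap.add_apply, smul_add]
    abel
  have e2 : G' x (n + d) = (2⁻¹ : ℝ) • G'' x n d := by
    rw [map_add, hn]
    rw [sub_eq_iff_eq_add] at hd
    rw [hd]; abel
  have b1 := P.v2 H.toHalleyMaj hx haR (n + d)
  rw [e2, norm_smul] at b1
  have b2 := P.v1 H.toHalleyMaj hx haR n d
  have b3 := P.v1 H.toHalleyMaj hx haR (n + d) d
  have c1 : ‖n + d‖ ≤ 2⁻¹ * h2 a * (h a / (-h1 a)) * δ / (-h1 a) := by
    rw [le_div_iff₀ h1p]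
    have : h2 a * ‖n‖ * ‖d‖ ≤ h2 a * (h a / (-h1 a)) * δ := by gcongr
    norm_num at b1 ⊢
    linarith
  rw [e1]
  refine (norm_add_le _ _).trans (add_le_add ?_ (r1.trans r2))
  rw [norm_smul]
  have : h2 a * ‖n + d‖ * ‖d‖ ≤
      h2 a * (2⁻¹ * h2 a * (h a / (-h1 a)) * δ / (-h1 a)) * δ := by gcongr
  have e5 : ‖(2⁻¹ : ℝ)‖ = 2⁻¹ := by norm_num
  rw [e5]
  linarith

lemma step_err (P : HalleyOp G G' G'' x₀ h h1 h2 R) (H : HalleyZero h h1 h2 R T) {x n d ε : X}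
    {a : ℝ}
    (hx : ‖x - x₀‖ ≤ a) (haT : a < T) (hGx : ‖G x‖ ≤ h a) (hn : G' x n = G x)
    (hd : G' x d - (2⁻¹ : ℝ) • G'' x n d = - G x) (hε : ‖ε‖ ≤ T - a) (hz : G (x + ε) = 0) :
    ‖ε - d‖ ≤ (T - (a + h a / HalleyZero.K h h1 h2 a)) * (‖ε‖ / (T - a)) ^ 3 := by
  have ha0 : 0 ≤ a := (norm_nonneg _).trans hx
  have haR := haT.trans H.mem.2
  have hK := H.K_pos ha0 haT
  have h1n := H.h1_neg ha0 haT.le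
  have h1p : 0 < - h1 a := by linarith
  have h2p := H.h2_pos ha0 haR
  have hTR := H.mem.2
  have hgap := H.gap ha0 haT
  have hlow := P.K_low H hx haT hGx hn (ε - d)
  have hτ : 0 < T - a := by linarith
  have r1 := P.v3 H.toHalleyMaj (ε := ε) hx (by linarith)
  set Q := G (x + ε) - G x - G' x ε - (2⁻¹ : ℝ) • G'' x ε ε with hQ
  set τ := T - a with hτd
  set r := ‖ε‖ / τ with hr
  have hr0 : 0 ≤ r := by positivity
  have hr1 : r ≤ 1 := by rw [hr, div_le_one hτ]; exact hε
  have er : ‖ε‖ = r * τ := by rw [hr]; field_simp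
  have r2 := H.rem_scale ha0 hr0 hr1 hτ.le (by linarith)
  rw [← er] at r2
  have hp := H.rem_nonneg ha0 hτ.le (by linarith)
  set ρ := halleyRem h h1 h2 a τ with hρ
  have hQl : ‖Q‖ ≤ r ^ 3 * ρ := r1.trans r2
  have e1 : G' x (ε - d) - (2⁻¹ : ℝ) • G'' x n (ε - d) = -Q - (2⁻¹ : ℝ) • G'' x (ε + n) ε := by
    rw [sub_eq_iff_eq_add] at hd
    rw [hQ, hz]
    simp only [map_sub, map_add, ContinuousLinearMap.add_apply, smul_sub, smul_add, hd]
    abel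
  have e2 : G' x (ε + n) = -((2⁻¹ : ℝ) • G'' x ε ε) - Q := by
    rw [hQ, hz, map_add, hn]
    abel
  have e5 : ‖(2⁻¹ : ℝ)‖ = 2⁻¹ := by norm_num
  have b1 := P.v2 H.toHalleyMaj hx haR (ε + n)
  have b2 := P.v1 H.toHalleyMaj hx haR ε ε
  have b3 := P.v1 H.toHalleyMaj hx haR (ε + n) ε
  have b4 : ‖G' x (ε + n)‖ ≤ r ^ 2 * (τ ^ 2 / 2 * h2 a + ρ) := by
    rw [e2]
    refine (norm_sub_le _ _).trans ?_
    rw [norm_neg, norm_smul, e5]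
    rw [er] at b2
    have : r ^ 3 * ρ ≤ r ^ 2 * ρ := 
      mul_le_mul_of_nonneg_right (pow_le_pow_of_le_one hr0 hr1 (by norm_num)) hp
    linarith
  have c1 : ‖ε + n‖ ≤ r ^ 2 * ((τ ^ 2 / 2 * h2 a + ρ) / (-h1 a)) := by
    rw [← mul_div_assoc, le_div_iff₀ h1p]
    linarith
  have c2 : ‖-Q - (2⁻¹ : ℝ) • G'' x (ε + n) ε‖ ≤ r ^ 3 * (ρ +
      2⁻¹ * h2 a * ((τ ^ 2 / 2 * h2 a + ρ) / (-h1 a)) * τ) := by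
    refine (norm_sub_le _ _).trans ?_
    rw [norm_neg, norm_smul, e5]
    have : h2 a * ‖ε + n‖ * ‖ε‖ ≤
      h2 a * (r ^ 2 * ((τ ^ 2 / 2 * h2 a + ρ) / (-h1 a))) * (r * τ) := by
      rw [er]; gcongr
    linarith
  rw [e1] at hlow
  rw [← hgap] at c2
  have c3 := hlow.trans c2
  have c4 : HalleyZero.K h h1 h2 a * ‖ε - d‖ ≤ HalleyZero.K h h1 h2 a *
    ((T - (a + h a / HalleyZero.K h h1 h2 a)) * r ^ 3) := by linarith
  exact le_of_mul_le_mul_left c4 hK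

end HalleyOp

/-- error bounds and Q-cubic convergence: under the hypotheses of
the semilocal convergence theorem for Halley's method, if `(x_k)` is the Halley
sequence (with invertibility witnesses `e k`, `m k`), `(t_k)` the majorizing
sequence, and `xs` the limit of `(x_k)` (a zero of `F` in the closed ball of
radius `t*`), then `‖xs - x_{k+1}‖ ≤ (t* - t_{k+1})·(‖xs - x_k‖/(t* - t_k))³`
for all `k`, and consequently
`‖xs - x_{k+1}‖ ≤ [(1/3)·h''(t*)²/h'(t*)² + (2/9)·D⁻h''(t*)/(-h'(t*))]·‖xs - x_k‖³`
for all `k`, where `D⁻h''(t*)` is the left directional derivative of `h''` at `t*`. -/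
theorem halley_method_error_bounds_Q_cubic
    {X Y : Type*} [NormedAddCommGroup X] [NormedSpace ℝ X] [CompleteSpace X]
    [NormedAddCommGroup Y] [NormedSpace ℝ Y] [CompleteSpace Y]
    (D : Set X) (hD : IsOpen D) (hDconv : Convex ℝ D)
    (F : X → Y) (F' : X → X →L[ℝ] Y) (F'' : X → X →L[ℝ] X →L[ℝ] Y)
    (hdF : ∀ x ∈ D, HasFDerivAt F (F' x) x)
    (hdF' : ∀ x ∈ D, HasFDerivAt F' (F'' x) x)
    (hcF'' : ContinuousOn F'' D)
    (x₀ : X) (hx₀ : x₀ ∈ D)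
    (e0 : X ≃L[ℝ] Y) (he0 : (e0 : X →L[ℝ] Y) = F' x₀)
    (R : ℝ) (hR : 0 < R) (hballD : ball x₀ R ⊆ D)
    (h h1 h2 : ℝ → ℝ)
    (hd1 : ∀ s ∈ Ico (0:ℝ) R, HasDerivWithinAt h (h1 s) (Ico 0 R) s)
    (hd2 : ∀ s ∈ Ico (0:ℝ) R, HasDerivWithinAt h1 (h2 s) (Ico 0 R) s)
    (hc2 : ContinuousOn h2 (Ico 0 R))
    (hA1a : 0 < h 0) (hA1b : 0 < h2 0) (hA1c : h1 0 = -1)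
    (hA2a : ConvexOn ℝ (Ico 0 R) h2) (hA2b : StrictMonoOn h2 (Ico 0 R))
    (tstar : ℝ) (htsmem : tstar ∈ Ioo 0 R) (htszero : h tstar = 0)
    (htsmin : ∀ s ∈ Ioo (0:ℝ) R, h s = 0 → tstar ≤ s) (htsder : h1 tstar < 0)
    (hmaj : ∀ x ∈ ball x₀ R, ∀ y ∈ ball x₀ R, ‖y - x‖ + ‖x - x₀‖ < R →
      ‖(ContinuousLinearMap.compL ℝ X Y X (e0.symm : Y →L[ℝ] X)).comp
          (F'' y - F'' x)‖ ≤ h2 (‖y - x‖ + ‖x - x₀‖) - h2 ‖x - x₀‖)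
    (hinit1 : ‖(e0.symm : Y →L[ℝ] X) (F x₀)‖ ≤ h 0)
    (hinit2 : ‖(ContinuousLinearMap.compL ℝ X Y X (e0.symm : Y →L[ℝ] X)).comp
        (F'' x₀)‖ ≤ h2 0)
    (t : ℕ → ℝ) (ht0 : t 0 = 0)
    (hrec : ∀ k, t (k + 1) =
      t k - (1 / (1 - h (t k) * h2 (t k) / (2 * (h1 (t k)) ^ 2))) * (h (t k) / h1 (t k)))
    (x : ℕ → X) (e : ℕ → (X ≃L[ℝ] Y)) (m : ℕ → (X ≃L[ℝ] X))
    (hx0 : x 0 = x₀)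
    (he : ∀ k, (e k : X →L[ℝ] Y) = F' (x k))
    (hm : ∀ k, (m k : X →L[ℝ] X) = ContinuousLinearMap.id ℝ X -
      (2⁻¹ : ℝ) • (((e k).symm : Y →L[ℝ] X).comp
        ((F'' (x k)) ((e k).symm (F (x k))))))
    (hxrec : ∀ k, x (k + 1) = x k - (m k).symm ((e k).symm (F (x k))))
    (xs : X) (hxs : xs ∈ closedBall x₀ tstar)
    (hlim : Filter.Tendsto x Filter.atTop (nhds xs)) (hzero : F xs = 0) :
    (∀ k, ‖xs - x (k + 1)‖ ≤
        (tstar - t (k + 1)) * (‖xs - x k‖ / (tstar - t k)) ^ 3) ∧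
    (∀ k, ‖xs - x (k + 1)‖ ≤
        ((1 / 3) * ((h2 tstar) ^ 2 / (h1 tstar) ^ 2) +
          (2 / 9) * (sSup ((fun u => (h2 tstar - h2 u) / (tstar - u)) ''
            Ico (0:ℝ) tstar) / (-(h1 tstar)))) * ‖xs - x k‖ ^ 3) := by
  have H : HalleyZero h h1 h2 R tstar :=
    ⟨⟨hd1, hd2, hA2a, hA2b, hA1b⟩, hA1a, htsmem, htszero, htsmin, htsder⟩
  set L : Y →L[ℝ] X := (e0.symm : Y →L[ℝ] X) with hL
  set C := ContinuousLinearMap.compL ℝ X Y X L with hC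
  have hCA : ∀ (A : X →L[ℝ] X →L[ℝ] Y) (u v : X), (C.comp A) u v = L (A u v) := fun A u v => rfl
  have P : HalleyOp (fun y => L (F y)) (fun y => L.comp (F' y)) (fun y => C.comp (F'' y)) x₀
      h h1 h2 R := by
    refine ⟨?_, ?_, ?_, ?_, ?_, hA1c⟩
    · intro y hy
      exact L.hasFDerivAt.comp y (hdF y (hballD hy))
    · intro y hy
      exact C.hasFDerivAt.comp y (hdF' y (hballD hy))
    · intro x hx y hy hxy u v
      have h3 := ContinuousLinearMap.le_of_opNorm₂_le_of_le _ (hmaj x hx y hy hxy)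
        (le_refl ‖u‖) (le_refl ‖v‖)
      rw [hCA] at h3
      rw [hCA, hCA]
      simpa using h3
    · intro u v
      exact ContinuousLinearMap.le_of_opNorm₂_le_of_le _ hinit2 (le_refl ‖u‖) (le_refl ‖v‖)
    · intro u
      simp [hL, ← he0]
  have hrec' : ∀ k, 0 ≤ t k → t k < tstar →
      t (k + 1) = t k + h (t k) / HalleyZero.K h h1 h2 (t k) := by
    intro k hk0 hkT
    have h1n := H.h1_neg hk0 hkT.le
    have hK := H.K_pos hk0 hkT
    have e1 : HalleyZero.K h h1 h2 (t k) =
        -(h1 (t k) * (1 - h (t k) * h2 (t k) / (2 * (h1 (t k)) ^ 2))) := by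
      unfold HalleyZero.K
      have := h1n.ne
      field_simp
      ring
    rw [hrec k, e1]
    rw [e1] at hK
    have h3 : (1 - h (t k) * h2 (t k) / (2 * (h1 (t k)) ^ 2)) ≠ 0 := by
      intro h0
      rw [h0] at hK
      simp at hK
    have := h1n.ne
    generalize (1 - h (t k) * h2 (t k) / (2 * (h1 (t k)) ^ 2)) = z at h3
    field_simp
    ring
  -- the Newton corrections and the Halley steps
  have hn : ∀ k, (L.comp (F' (x k))) ((e k).symm (F (x k))) = L (F (x k)) := by
    intro k
    rw [← he k]
    simp
  have hd : ∀ k, (L.comp (F' (x k))) (x (k + 1) - x k) - (2⁻¹ : ℝ) •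
      (C.comp (F'' (x k))) ((e k).symm (F (x k))) (x (k + 1) - x k) = - L (F (x k)) := by
    intro k
    have e1 : (m k : X →L[ℝ] X) (x (k + 1) - x k) = - (e k).symm (F (x k)) := by
      rw [hxrec k]
      simp
    rw [hm k] at e1
    have e2 := congrArg (fun z => L (F' (x k) z)) e1
    have e3 : ∀ y, F' (x k) ((e k).symm y) = y := by
      intro y
      rw [← he k]
      simp
    simp only [ContinuousLinearMap.sub_apply, ContinuousLinearMap.smul_apply,
      ContinuousLinearMap.comp_apply, ContinuousLinearEquiv.coe_coe,
      ContinuousLinearMap.id_apply, map_sub (F' (x k)), map_smul, map_neg, e3] at e2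
    rw [hCA, ← e2]
    simp
  have ind : ∀ k, 0 ≤ t k ∧ t k < tstar ∧ ‖x k - x₀‖ ≤ t k ∧ ‖L (F (x k))‖ ≤ h (t k) := by
    intro k
    induction k with
    | zero => 
      rw [ht0, hx0]
      exact ⟨le_rfl, htsmem.1, by simp, hinit1⟩
    | succ k ih =>
      obtain ⟨i1, i2, i3, i4⟩ := ih
      have hK := H.K_pos i1 i2
      have hp := H.h_pos i1 i2
      rw [hrec' k i1 i2]
      have hdl := P.step_d H i3 i2 i4 (hn k) (hd k)
      have hgl := P.step_G H i3 i2 i4 (hn k) (hd k)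
      refine ⟨by positivity, H.next_lt i1 i2, ?_, ?_⟩
      · have := norm_add_le (x (k + 1) - x k) (x k - x₀)
        simp only [sub_add_sub_cancel] at this
        linarith
      · simpa using hgl
  have hstep : ∀ k, ‖x (k + 1) - x k‖ ≤ t (k + 1) - t k := by
    intro k
    obtain ⟨i1, i2, i3, i4⟩ := ind k
    have hdl := P.step_d H i3 i2 i4 (hn k) (hd k)
    rw [hrec' k i1 i2]
    linarith
  have hdist : ∀ k j, ‖x (k + j) - x k‖ ≤ t (k + j) - t k := by
    intro k j
    induction j with
    | zero => simp
    | succ j ih =>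
      have h3 := hstep (k + j)
      have := norm_add_le (x (k + j + 1) - x (k + j)) (x (k + j) - x k)
      simp only [sub_add_sub_cancel] at this
      rw [← add_assoc]
      linarith
  have hxse : ∀ k, ‖xs - x k‖ ≤ tstar - t k := by
    intro k
    have hl : Filter.Tendsto (fun j => ‖x (k + j) - x k‖) Filter.atTop (nhds ‖xs - x k‖) := by
      have := (Filter.tendsto_add_atTop_iff_nat (f := x) k).2 hlim
      simp only [add_comm _ k] at this
      exact (this.sub_const (x k)).norm
    refine le_of_tendsto' hl (fun j => (hdist k j).trans ?_)
    have := (ind (k + j)).2.1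
    linarith
  have main : ∀ k, ‖xs - x (k + 1)‖ ≤
        (tstar - t (k + 1)) * (‖xs - x k‖ / (tstar - t k)) ^ 3 := by
    intro k
    obtain ⟨i1, i2, i3, i4⟩ := ind k
    have := P.step_err H (ε := xs - x k) i3 i2 i4 (hn k) (hd k) (hxse k) (by simp [hzero])
    rw [hrec' k i1 i2]
    simpa using this
  refine ⟨main, fun k => (main k).trans ?_⟩
  obtain ⟨i1, i2, i3, i4⟩ := ind k
  have hg := H.gap_le i1 i2
  rw [← hrec' k i1 i2] at hg
  have hτ : 0 < tstar - t k := by linarith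
  refine (mul_le_mul_of_nonneg_right hg (by positivity)).trans (le_of_eq ?_)
  rw [div_pow, mul_assoc]
  congr 1
  field_simp
end
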